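/- Let X ⊂ P^n be a non-singular cubic hypersurface with n ≥ 7. Then for generic x ∈ X (that is, for all x in a dense open subset of X) the cone C_x^1 = C_x(F_1(X)), the union of all lines contained in X that pass through x, is geometrically integral and has degree 6 (and dimension n − 3). -/

import Mathlib

noncomputable section

abbrev KK : Type := AlgebraicClosure ℚ

abbrev Pn (N : ℕ) := Projectivization KK (Fin (N + 1) → KK)

/-- The common zero set in projective space of a family of polynomials
(membership tested on the chosen representative). -/
def projZeros {N : ℕ} (S : Set (MvPolynomial (Fin (N + 1)) KK)) : Set (Pn N) :=
  {x | ∀ f ∈ S, MvPolynomial.eval x.rep f = 0}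

/-- Zariski-closed subsets of projective space: common zero sets of families of forms. -/
def ProjClosed {N : ℕ} (V : Set (Pn N)) : Prop :=
  ∃ S : Set (MvPolynomial (Fin (N + 1)) KK),
    (∀ f ∈ S, ∃ d, f.IsHomogeneous d) ∧ V = projZeros S

def ProjIrred {N : ℕ} (V : Set (Pn N)) : Prop :=
  V.Nonempty ∧ ∀ C₁ C₂ : Set (Pn N), ProjClosed C₁ → ProjClosed C₂ →
    V ⊆ C₁ ∪ C₂ → V ⊆ C₁ ∨ V ⊆ C₂

/-- A (geometrically integral) projective variety: an irreducible Zariski-closed set. -/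
def ProjVariety {N : ℕ} (V : Set (Pn N)) : Prop := ProjClosed V ∧ ProjIrred V

/-- Dimension of a subset of projective space: Krull dimension of the poset of
irreducible closed subsets contained in it. The empty set has dimension `⊥`. -/
def projDim {N : ℕ} (V : Set (Pn N)) : WithBot ENat :=
  Order.krullDim {W : Set (Pn N) // ProjVariety W ∧ W ⊆ V}

/-- The set of projective points lying on a linear subspace. -/
def planeSet {N : ℕ} (W : Submodule KK (Fin (N + 1) → KK)) : Set (Pn N) :=
  {x | x.rep ∈ W}

/-- Degree of a subset of projective space: the largest (finite) number of points
in a linear section. -/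
def projDeg {N : ℕ} (V : Set (Pn N)) : ℕ :=
  sSup {k : ℕ | ∃ W : Submodule KK (Fin (N + 1) → KK),
    (V ∩ planeSet W).Finite ∧ (V ∩ planeSet W).ncard = k}

/-- The hypersurface cut out by a form. -/
def hyp {n : ℕ} (F : MvPolynomial (Fin (n + 1)) KK) : Set (Pn n) :=
  {x | MvPolynomial.eval x.rep F = 0}

/-- A form over the algebraic closure is non-singular if its partial derivatives
have no common non-trivial zero. -/
def NonsingularK {n : ℕ} (F : MvPolynomial (Fin (n + 1)) KK) : Prop :=
  ∀ z : Fin (n + 1) → KK,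
    (∀ i, MvPolynomial.eval z (MvPolynomial.pderiv i F) = 0) → z = 0

/-- The Fano set of (projective) m-planes contained in X, as linear subspaces of
dimension m+1. -/
def Fano (m n : ℕ) (X : Set (Pn n)) : Set (Submodule KK (Fin (n + 1) → KK)) :=
  {W | Module.finrank KK W = m + 1 ∧ planeSet W ⊆ X}

/-- Closed subsets of the Grassmannian of m-planes in Pⁿ, described via Stiefel
coordinates: Z is closed iff the set of (m+1)-tuples of vectors which, when
linearly independent, span a member of Z, is Zariski-closed in affine space. -/
def GrClosed (m n : ℕ) (Z : Set (Submodule KK (Fin (n + 1) → KK))) : Prop :=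
  (∀ W ∈ Z, Module.finrank KK W = m + 1) ∧
  ∃ S : Set (MvPolynomial (Fin (m + 1) × Fin (n + 1)) KK),
    {v : Fin (m + 1) → Fin (n + 1) → KK |
      LinearIndependent KK v → Submodule.span KK (Set.range v) ∈ Z}
    = {v | ∀ f ∈ S, MvPolynomial.eval (fun p => v p.1 p.2) f = 0}

def GrIrred (m n : ℕ) (Z : Set (Submodule KK (Fin (n + 1) → KK))) : Prop :=
  Z.Nonempty ∧ ∀ C₁ C₂ : Set (Submodule KK (Fin (n + 1) → KK)),
    GrClosed m n C₁ → GrClosed m n C₂ → Z ⊆ C₁ ∪ C₂ → Z ⊆ C₁ ∨ Z ⊆ C₂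

/-- A (geometrically integral) subvariety of the Grassmannian. -/
def GrVariety (m n : ℕ) (Z : Set (Submodule KK (Fin (n + 1) → KK))) : Prop :=
  GrClosed m n Z ∧ GrIrred m n Z

/-- Dimension of a subset of the Grassmannian of m-planes in Pⁿ. -/
def grDim (m n : ℕ) (Z : Set (Submodule KK (Fin (n + 1) → KK))) : WithBot ENat :=
  Order.krullDim {W : Set (Submodule KK (Fin (n + 1) → KK)) // GrVariety m n W ∧ W ⊆ Z}

/-- D(Z): the union of the planes parametrised by Z. -/
def DSet {n : ℕ} (Z : Set (Submodule KK (Fin (n + 1) → KK))) : Set (Pn n) :=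
  {x | ∃ Λ ∈ Z, x.rep ∈ Λ}

/-- A primitive integer vector: the gcd of its coordinates is 1. -/
def IsPrimitiveVec {n : ℕ} (x : Fin n → ℤ) : Prop := Finset.univ.gcd x = 1

/-- Height of an integer vector: the maximum modulus of its coordinates. -/
def heightVec {n : ℕ} (x : Fin n → ℤ) : ℝ :=
  ((Finset.univ.sup fun i => (x i).natAbs : ℕ) : ℝ)

def coeK {n : ℕ} (x : Fin n → ℤ) : Fin n → KK := fun i => ((x i : ℤ) : KK)

def coeQ {n : ℕ} (x : Fin n → ℤ) : Fin n → ℚ := fun i => ((x i : ℤ) : ℚ)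

/-- The number of rational points of height at most B on a subset V of projective
space, counted via primitive integer vectors (each projective rational point
corresponds to exactly two primitive vectors). -/
def NV {n : ℕ} (V : Set (Pn n)) (B : ℝ) : ℕ :=
  Set.ncard {x : Fin (n + 1) → ℤ | IsPrimitiveVec x ∧ heightVec x ≤ B ∧
    ∃ h : coeK x ≠ 0, Projectivization.mk KK (coeK x) h ∈ V}

/-- An integer form is non-singular if its partial derivatives have no common
non-trivial zero over the algebraic closure of ℚ. -/
def NonsingularZ {n : ℕ} (F : MvPolynomial (Fin (n + 1)) ℤ) : Prop :=
  ∀ z : Fin (n + 1) → KK,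
    (∀ i, MvPolynomial.aeval z (MvPolynomial.pderiv i F) = 0) → z = 0

/-- Base change of an integer polynomial to the algebraic closure of ℚ. -/
def mapK {n : ℕ} (F : MvPolynomial (Fin (n + 1)) ℤ) : MvPolynomial (Fin (n + 1)) KK :=
  MvPolynomial.map (Int.castRingHom KK) F

/-- The Plücker height of the rational m-plane spanned by the integer vectors v:
the maximum modulus of the (m+1)×(m+1) minors, divided by their gcd. -/
def pluckerHeight {m n : ℕ} (v : Fin (m + 1) → Fin (n + 1) → ℤ) : ℕ :=
  (Finset.univ.sup fun s : Fin (m + 1) → Fin (n + 1) =>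
    (Matrix.det (Matrix.of fun i j => v i (s j))).natAbs) /
  (Finset.univ.gcd fun s : Fin (m + 1) → Fin (n + 1) =>
    (Matrix.det (Matrix.of fun i j => v i (s j))).natAbs)

def betaExp (k : ℕ) : ℝ := if k ≤ 3 then 0 else 1/4

def sigmaExp (n k : ℕ) : ℝ :=
  if (k : ℝ) ≤ ((n : ℝ) - 1) / 2 then (k : ℝ) + 1 else (k : ℝ) + betaExp k

def tauExp (n k : ℕ) : ℝ :=
  if (k : ℝ) < ((n : ℝ) - 1) / 2 then (k : ℝ) + 1 else (k : ℝ) + betaExp k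

/-- E: the union of the (n-1)/2-planes contained in X (for n odd; empty for n even). -/
def bigE {n : ℕ} (X : Set (Pn n)) : Set (Pn n) :=
  {x | n % 2 = 1 ∧ ∃ W : Submodule KK (Fin (n + 1) → KK),
    Module.finrank KK W = (n - 1) / 2 + 1 ∧ planeSet W ⊆ X ∧ x ∈ planeSet W}

/-- The cone of lines contained in X passing through x. -/
def coneOfLines {n : ℕ} (X : Set (Pn n)) (x : Pn n) : Set (Pn n) :=
  {y | ∃ L : Submodule KK (Fin (n + 1) → KK),
    Module.finrank KK L = 2 ∧ planeSet L ⊆ X ∧ x.rep ∈ L ∧ y.rep ∈ L}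


namespace CL
set_option linter.all false
open MvPolynomial

variable {K : Type*} [Field K] [IsAlgClosed K] [CharZero K]

theorem eval_bind {ι τ : Type*} (h : ι → MvPolynomial τ K) (g : MvPolynomial ι K) (y : τ → K) :
    eval y (bind₁ h g) = eval (fun i => eval y (h i)) g :=
  eval₂Hom_bind₁ _ _ _ _

/-- translate a polynomial -/
theorem exists_translate {ι : Type*} (a : ι → K) (g : MvPolynomial ι K) :
    ∃ g' : MvPolynomial ι K, ∀ y, eval y g' = eval (y + a) g := by
  refine ⟨bind₁ (fun i => X i + C (a i)) g, fun y => ?_⟩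
  rw [eval_bind]
  simp
  rfl

theorem krull_zero {N k : ℕ} (hk : k < N) (g : Fin k → MvPolynomial (Fin N) K)
    (h0 : ∀ j, eval 0 (g j) = 0) : ∃ y : Fin N → K, y ≠ 0 ∧ ∀ j, eval y (g j) = 0 := by
  by_contra hcon
  push Not at hcon
  have hdim : ringKrullDim (MvPolynomial (Fin N) K) = N := by
    rw [MvPolynomial.ringKrullDim_of_isNoetherianRing]; simp
  have : FiniteRingKrullDim (MvPolynomial (Fin N) K) := by
    rw [finiteRingKrullDim_iff_ne_bot_and_top, hdim]
    exact ⟨by simp, fun h => ENat.natCast_ne_top N (WithBot.coe_injective h)⟩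
  obtain ⟨M, hM, hht⟩ := Ideal.exists_isMaximal_height (R := MvPolynomial (Fin N) K)
  obtain ⟨a, ha⟩ := isMaximal_iff_eq_vanishingIdeal_singleton.mp hM
  choose g' hg' using fun j => exists_translate (-a) (g j)
  have hmin : M ∈ (Ideal.span (Set.range g')).minimalPrimes := by
    refine ⟨⟨hM.isPrime, ?_⟩, ?_⟩
    · rw [Ideal.span_le]
      rintro _ ⟨j, rfl⟩
      rw [ha]
      have := h0 j
      rw [← add_neg_cancel a, ← hg'] at this
      simpa [mem_vanishingIdeal_iff, aeval_eq_eval] using this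
    · rintro J ⟨hJp, hJ⟩ hJM
      have : zeroLocus K J ⊆ {a} := by
        intro y hy
        by_contra hya
        obtain ⟨j, hj⟩ := hcon (y + -a) (by
          intro h; apply hya; rw [← sub_eq_add_neg] at h; simpa using sub_eq_zero.mp h)
        apply hj
        rw [← hg']
        have := hy (g' j) (hJ (Ideal.subset_span ⟨j, rfl⟩))
        simpa [aeval_eq_eval] using this
      rw [ha, ← IsPrime.vanishingIdeal_zeroLocus (K := K) J]
      exact vanishingIdeal_anti_mono this
  have h1 := Ideal.height_le_card_of_mem_minimalPrimes_span (Set.finite_range g') hmin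
  have h2 : (Set.range g').ncard ≤ k := by
    rw [← Set.image_univ]
    refine (Set.ncard_image_le Set.finite_univ).trans ?_
    simp
  rw [hdim] at hht
  have h3 : M.height = (N : ENat) := by exact_mod_cast hht
  rw [h3] at h1
  have : N ≤ (Set.range g').ncard := by exact_mod_cast h1
  omega

theorem null_one {ι : Type*} [Finite ι] (f g : MvPolynomial ι K)
    (h : ∀ y, eval y f = 0 → eval y g = 0) : ∃ N : ℕ, f ∣ g ^ N := by
  have : g ∈ (Ideal.span {f}).radical := by
    rw [← vanishingIdeal_zeroLocus_eq_radical (K := K)]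
    intro y hy
    rw [aeval_eq_eval]
    apply h
    have := hy f (Ideal.mem_span_singleton_self f)
    rwa [aeval_eq_eval] at this
  obtain ⟨N, hN⟩ := this
  exact ⟨N, Ideal.mem_span_singleton.mp hN⟩

theorem null_two {ι : Type*} [Finite ι] (f₁ f₂ g : MvPolynomial ι K)
    (h : ∀ y, eval y f₁ = 0 → eval y f₂ = 0 → eval y g = 0) :
    ∃ (N : ℕ) (a b : MvPolynomial ι K), g ^ N = f₁ * a + f₂ * b := by
  have : g ∈ (Ideal.span {f₁, f₂}).radical := by
    rw [← vanishingIdeal_zeroLocus_eq_radical (K := K)]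
    intro y hy
    rw [aeval_eq_eval]
    have h1 := hy f₁ (Ideal.subset_span (by simp))
    have h2 := hy f₂ (Ideal.subset_span (by simp))
    rw [aeval_eq_eval] at h1 h2
    exact h y h1 h2
  obtain ⟨N, hN⟩ := this
  obtain ⟨a, b, hab⟩ := Ideal.mem_span_pair.mp hN
  exact ⟨N, a, b, by rw [← hab]; ring⟩

theorem null_prime {ι : Type*} [Finite ι] (f g : MvPolynomial ι K) (hf : Prime f)
    (h : ∀ y, eval y f = 0 → eval y g = 0) : f ∣ g := by
  obtain ⟨N, hN⟩ := null_one f g h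
  exact hf.dvd_of_dvd_pow hN

/-- scaling homomorphism -/
noncomputable def scl (ι : Type*) (K : Type*) [Field K] :
    MvPolynomial ι K →ₐ[K] Polynomial (MvPolynomial ι K) :=
  aeval (fun i => Polynomial.C (X i) * Polynomial.X)

theorem scl_hom {ι : Type*} {d : ℕ} {g : MvPolynomial ι K} (hg : g.IsHomogeneous d) :
    scl ι K g = Polynomial.C g * Polynomial.X ^ d := by
  conv_lhs => rw [g.as_sum]
  conv_rhs => rw [g.as_sum]
  rw [map_sum, map_sum, Finset.sum_mul]
  refine Finset.sum_congr rfl fun m hm => ?_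
  have hd := hg.degree_eq_sum_deg_support hm
  rw [scl, aeval_monomial, hd]
  simp only [mul_pow, Finsupp.prod, Finset.prod_mul_distrib, Finset.prod_pow_eq_pow_sum]
  rw [← mul_assoc]
  congr 1
  rw [monomial_eq, Finsupp.prod]
  simp only [map_mul, map_prod, map_pow]
  congr 1

theorem scl_eval {ι : Type*} (g : MvPolynomial ι K) (y : ι → K) (t : K) :
    ((scl ι K g).map (eval y)).eval t = eval (t • y) g := by
  induction g using MvPolynomial.induction_on with
  | C a => simp [scl, Polynomial.algebraMap_apply, MvPolynomial.algebraMap_eq]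
  | add p q hp hq => simp only [map_add, Polynomial.map_add, Polynomial.eval_add, hp, hq]
  | mul_X p i hp =>
    simp only [map_mul, Polynomial.map_mul, Polynomial.eval_mul, hp]
    simp [scl]
    left; ring

theorem scl_eval_one {ι : Type*} (g : MvPolynomial ι K) :
    (scl ι K g).eval 1 = g := by
  induction g using MvPolynomial.induction_on with
  | C a => simp [scl, Polynomial.algebraMap_apply, MvPolynomial.algebraMap_eq]
  | add p q hp hq => simp only [map_add, Polynomial.eval_add, hp, hq]
  | mul_X p i hp =>
    simp only [map_mul, Polynomial.eval_mul, hp]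
    simp [scl]

theorem scl_coeff_zero {ι : Type*} (g : MvPolynomial ι K) :
    (scl ι K g).coeff 0 = C (eval 0 g) := by
  rw [Polynomial.coeff_zero_eq_eval_zero]
  induction g using MvPolynomial.induction_on with
  | C a => simp [scl, Polynomial.algebraMap_apply, MvPolynomial.algebraMap_eq]
  | add p q hp hq => simp only [map_add, Polynomial.eval_add, hp, hq]
  | mul_X p i hp =>
    simp only [map_mul, Polynomial.eval_mul, hp]
    simp [scl]

theorem scl_coeff {ι : Type*} (g : MvPolynomial ι K) (i : ℕ) :
    (scl ι K g).coeff i = homogeneousComponent i g := by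
  conv_lhs => rw [← sum_homogeneousComponent g]
  rw [map_sum, Polynomial.finsetSum_coeff]
  simp_rw [scl_hom (homogeneousComponent_isHomogeneous _ g), Polynomial.coeff_C_mul_X_pow]
  rw [Finset.sum_ite_eq]
  split_ifs with h
  · rfl
  · rw [homogeneousComponent_eq_zero]
    simpa using h

theorem hom_factor {ι : Type*} {d : ℕ} {a b : MvPolynomial ι K} (h0 : a * b ≠ 0)
    (h : (a * b).IsHomogeneous d) (ha : eval 0 a ≠ 0) : IsUnit a := by
  have hs : scl ι K a * scl ι K b = Polynomial.C (a * b) * Polynomial.X ^ d := by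
    rw [← map_mul, scl_hom h]
  have hne : scl ι K a * scl ι K b ≠ 0 := by
    rw [hs]; simpa using h0
  have hA : scl ι K a ≠ 0 := left_ne_zero_of_mul hne
  have hB : scl ι K b ≠ 0 := right_ne_zero_of_mul hne
  have h1 : (scl ι K a).natDegree + (scl ι K b).natDegree = d := by
    rw [← Polynomial.natDegree_mul hA hB, hs, Polynomial.natDegree_C_mul_X_pow _ _ h0]
  have h2 : (scl ι K a).natTrailingDegree + (scl ι K b).natTrailingDegree = d := by
    rw [← Polynomial.natTrailingDegree_mul hA hB, hs, Polynomial.natTrailingDegree_mul_X_pow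
      (Polynomial.C_ne_zero.mpr h0), Polynomial.natTrailingDegree_C, zero_add]
  have h3 : (scl ι K a).natTrailingDegree = 0 := by
    apply Polynomial.natTrailingDegree_eq_zero_of_constantCoeff_ne_zero
    rw [Polynomial.constantCoeff_apply, scl_coeff_zero]
    simpa using ha
  have h4 := Polynomial.natTrailingDegree_le_natDegree (scl ι K b)
  have h5 : (scl ι K a).natDegree = 0 := by omega
  have h6 := Polynomial.eq_C_of_natDegree_eq_zero h5
  have h7 := scl_eval_one a
  rw [h6, scl_coeff_zero, Polynomial.eval_C] at h7
  rw [← h7]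
  exact (IsUnit.mk0 _ ha).map C

/-- polynomial functions on a vector space -/
def PF (K : Type*) [Field K] (U : Type*) [AddCommGroup U] [Module K U] : Subalgebra K (U → K) :=
  Algebra.adjoin K (Set.range (fun φ : U →ₗ[K] K => (φ : U → K)))

section PF
variable {U : Type*} [AddCommGroup U] [Module K U] {W : Type*} [AddCommGroup W] [Module K W]

theorem PF.lin (φ : U →ₗ[K] K) : (fun u => φ u) ∈ PF K U := Algebra.subset_adjoin ⟨φ, rfl⟩
theorem PF.const (c : K) : (fun _ => c : U → K) ∈ PF K U := (PF K U).algebraMap_mem c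
theorem PF.add {f g : U → K} (hf : f ∈ PF K U) (hg : g ∈ PF K U) : (fun u => f u + g u) ∈ PF K U :=
  (PF K U).add_mem hf hg
theorem PF.sub {f g : U → K} (hf : f ∈ PF K U) (hg : g ∈ PF K U) : (fun u => f u - g u) ∈ PF K U :=
  (PF K U).sub_mem hf hg
theorem PF.mul {f g : U → K} (hf : f ∈ PF K U) (hg : g ∈ PF K U) : (fun u => f u * g u) ∈ PF K U :=
  (PF K U).mul_mem hf hg
theorem PF.pow {f : U → K} (hf : f ∈ PF K U) (n : ℕ) : (fun u => f u ^ n) ∈ PF K U :=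
  (PF K U).pow_mem hf n
theorem PF.sum {ι : Type*} {f : ι → U → K} (s : Finset ι) (hf : ∀ i ∈ s, f i ∈ PF K U) :
    (fun u => ∑ i ∈ s, f i u) ∈ PF K U := by
  have := (PF K U).sum_mem hf
  convert this using 1
  ext u; simp

theorem PF.comp {f : U → K} (hf : f ∈ PF K U) (L : W →ₗ[K] U) : (fun w => f (L w)) ∈ PF K W := by
  induction hf using Algebra.adjoin_induction with
  | mem x hx => obtain ⟨φ, rfl⟩ := hx; exact PF.lin (φ ∘ₗ L)
  | algebraMap r => exact PF.const r
  | add x y _ _ hx hy => exact PF.add hx hy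
  | mul x y _ _ hx hy => exact PF.mul hx hy

theorem PF.mv {ι : Type*} (g : MvPolynomial ι K) (L : U →ₗ[K] (ι → K)) :
    (fun u => eval (L u) g) ∈ PF K U := by
  induction g using MvPolynomial.induction_on with
  | C a => simpa using PF.const a
  | add p q hp hq => simpa using PF.add hp hq
  | mul_X p i hp =>
    simpa using PF.mul hp (PF.lin (LinearMap.proj i ∘ₗ L))

theorem PF.toMv {ι : Type*} [Fintype ι] [DecidableEq ι] {f : (ι → K) → K} (hf : f ∈ PF K (ι → K)) :
    ∃ g : MvPolynomial ι K, ∀ y, eval y g = f y := by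
  induction hf using Algebra.adjoin_induction with
  | mem x hx =>
    obtain ⟨φ, rfl⟩ := hx
    refine ⟨∑ i, C (φ (fun j => if i = j then 1 else 0)) * X i, fun y => ?_⟩
    show _ = φ y
    rw [LinearMap.pi_apply_eq_sum_univ φ y]
    simp [mul_comm]
  | algebraMap r => exact ⟨C r, fun y => by simp⟩
  | add x y _ _ hx hy =>
    obtain ⟨a, ha⟩ := hx; obtain ⟨b, hb⟩ := hy
    exact ⟨a + b, fun z => by simp [ha, hb]⟩
  | mul x y _ _ hx hy =>
    obtain ⟨a, ha⟩ := hx; obtain ⟨b, hb⟩ := hy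
    exact ⟨a * b, fun z => by simp [ha, hb]⟩

theorem PF.line {f : U → K} (hf : f ∈ PF K U) (y u : U) :
    ∃ p : Polynomial K, ∀ t, p.eval t = f (y + t • u) := by
  induction hf using Algebra.adjoin_induction with
  | mem x hx =>
    obtain ⟨φ, rfl⟩ := hx
    exact ⟨Polynomial.C (φ y) + Polynomial.X * Polynomial.C (φ u), fun t => by simp; ring⟩
  | algebraMap r => exact ⟨Polynomial.C r, fun y => by simp⟩
  | add x y _ _ hx hy =>
    obtain ⟨a, ha⟩ := hx; obtain ⟨b, hb⟩ := hy
    exact ⟨a + b, fun z => by simp [ha, hb]⟩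
  | mul x y _ _ hx hy =>
    obtain ⟨a, ha⟩ := hx; obtain ⟨b, hb⟩ := hy
    exact ⟨a * b, fun z => by simp [ha, hb]⟩

variable [FiniteDimensional K U]

theorem PF.krull {k : ℕ} (hk : k < Module.finrank K U) (g : Fin k → U → K)
    (hg : ∀ j, g j ∈ PF K U) (h0 : ∀ j, g j 0 = 0) : ∃ u : U, u ≠ 0 ∧ ∀ j, g j u = 0 := by
  let b := Module.finBasis K U
  choose p hp using fun j => PF.toMv (PF.comp (hg j) b.equivFun.symm.toLinearMap)
  obtain ⟨y, hy, hyz⟩ := krull_zero hk p (fun j => by simp [hp, h0, -eval_zero])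
  refine ⟨b.equivFun.symm y, (LinearEquiv.map_ne_zero_iff _).mpr hy, fun j => ?_⟩
  rw [← hyz j, hp]
  rfl

theorem PF.quad (B : U →ₗ[K] U →ₗ[K] K) : (fun u => B u u) ∈ PF K U := by
  let b := Module.finBasis K U
  have : (fun u => B u u) = fun u => ∑ i, b.coord i u * B (b i) u := by
    ext u
    have h := congrArg (fun v => B v u) (b.sum_repr u)
    simp only [map_sum, map_smul, LinearMap.sum_apply, LinearMap.smul_apply, smul_eq_mul] at h
    exact h.symm
  rw [this]
  exact PF.sum _ fun i _ => PF.mul (PF.lin _) (PF.lin _)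

theorem PF.cub (B : U →ₗ[K] U →ₗ[K] U →ₗ[K] K) : (fun u => B u u u) ∈ PF K U := by
  let b := Module.finBasis K U
  have : (fun u => B u u u) = fun u => ∑ i, b.coord i u * B (b i) u u := by
    ext u
    have h := congrArg (fun v => B v u u) (b.sum_repr u)
    simp only [map_sum, map_smul, LinearMap.sum_apply, LinearMap.smul_apply, smul_eq_mul] at h
    exact h.symm
  rw [this]
  exact PF.sum _ fun i _ => PF.mul (PF.lin _) (PF.quad _)

end PF
end CL

namespace CL
set_option linter.all false
open MvPolynomial

variable {K : Type*} [Field K] [IsAlgClosed K] [CharZero K]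

theorem lin_coeff_zero {a b c d : Polynomial K} {α β γ δ : K} (ha : a.eval 0 = 0)
    (hb : b.eval 0 = 0) (hc : c.eval 0 = 0) (hd : d.eval 0 = 0)
    (h : ∀ t : K, α + β * t + γ * t ^ 2 + δ * t ^ 3 = a.eval t * b.eval t + c.eval t * d.eval t) :
    β = 0 := by
  have h1 : Polynomial.C α + Polynomial.C β * Polynomial.X + Polynomial.C γ * Polynomial.X ^ 2
      + Polynomial.C δ * Polynomial.X ^ 3 = a * b + c * d := by
    apply Polynomial.funext
    intro t
    simpa using h t
  have h2 := congrArg (fun p => (Polynomial.derivative p).eval 0) h1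
  simpa [ha, hb, hc, hd] using h2

theorem quad_prime {k : ℕ} (B : (Fin k → K) →ₗ[K] (Fin k → K) →ₗ[K] K)
    (hsym : ∀ u v, B u v = B v u) (hrad : Module.finrank K (LinearMap.ker B) + 3 ≤ k)
    (Q : MvPolynomial (Fin k) K) (hQ : Q.IsHomogeneous 2) (hQB : ∀ z, eval z Q = B z z) :
    Prime Q := by
  rw [← irreducible_iff_prime]
  have hQ0 : Q ≠ 0 := by
    rintro rfl
    have h0 : ∀ z, B z z = 0 := fun z => by rw [← hQB]; simp
    have : B = 0 := by
      ext u v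
      have h1 := h0 (Pi.single u 1 + Pi.single v 1)
      simp only [map_add, LinearMap.add_apply, h0] at h1
      rw [hsym (Pi.single v 1)] at h1
      simpa using h1
    rw [this, LinearMap.ker_zero, finrank_top] at hrad
    simp at hrad
  have hQe : eval 0 Q = 0 := by rw [hQB]; simp
  refine ⟨fun hu => ?_, ?_⟩
  · exact (hu.map (eval (0 : Fin k → K))).ne_zero hQe
  · intro a b hab
    by_contra hcon
    push Not at hcon
    have ha : eval 0 a = 0 := by
      by_contra h
      exact hcon.1 (hom_factor (by rwa [← hab]) (by rwa [← hab]) h)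
    have hb : eval 0 b = 0 := by
      by_contra h
      exact hcon.2 (hom_factor (a := b) (b := a) (by rwa [mul_comm, ← hab])
        (by rw [mul_comm, ← hab]; exact hQ) h)
    obtain ⟨S, hS⟩ := Submodule.exists_isCompl (LinearMap.ker B)
    have hfr := Submodule.finrank_add_eq_of_isCompl hS
    simp at hfr
    obtain ⟨y, hy, hyz⟩ := PF.krull (K := K) (U := S) (k := 2) (by omega)
      ![fun u => eval (S.subtype u) a, fun u => eval (S.subtype u) b]
      (by intro j; fin_cases j <;> exact PF.mv _ _)
      (by intro j; fin_cases j <;> simp [ha, hb, -eval_zero])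
    have hya : eval (y : Fin k → K) a = 0 := hyz 0
    have hyb : eval (y : Fin k → K) b = 0 := hyz 1
    apply hy
    have : (y : Fin k → K) ∈ LinearMap.ker B := by
      rw [LinearMap.mem_ker]
      refine LinearMap.ext fun u => ?_
      obtain ⟨pa, hpa⟩ := PF.line (PF.mv a LinearMap.id) (y : Fin k → K) u
      obtain ⟨pb, hpb⟩ := PF.line (PF.mv b LinearMap.id) (y : Fin k → K) u
      have := lin_coeff_zero (a := pa) (b := pb) (c := 0) (d := 0) (α := B y y) (β := 2 * B y u)
        (γ := B u u) (δ := 0) (by simp [hpa, hya]) (by simp [hpb, hyb]) (by simp) (by simp)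
        (by
          intro t
          rw [hpa, hpb]
          simp only [LinearMap.id_apply]
          rw [← eval_mul, ← hab, hQB]
          simp [hsym u y]
          ring)
      simpa using this
    have h3 := Submodule.disjoint_def.mp hS.disjoint _ this y.2
    exact Subtype.ext h3

theorem coeffs7 {R : Type*} [CommRing R] {a0 a1 a2 a3 a4 a5 a6 b0 b1 b2 b3 b4 b5 b6 : R}
    (h : Polynomial.C a0 + Polynomial.C a1 * Polynomial.X + Polynomial.C a2 * Polynomial.X ^ 2
      + Polynomial.C a3 * Polynomial.X ^ 3 + Polynomial.C a4 * Polynomial.X ^ 4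
      + Polynomial.C a5 * Polynomial.X ^ 5 + Polynomial.C a6 * Polynomial.X ^ 6
      = Polynomial.C b0 + Polynomial.C b1 * Polynomial.X + Polynomial.C b2 * Polynomial.X ^ 2
      + Polynomial.C b3 * Polynomial.X ^ 3 + Polynomial.C b4 * Polynomial.X ^ 4
      + Polynomial.C b5 * Polynomial.X ^ 5 + Polynomial.C b6 * Polynomial.X ^ 6) :
    a0 = b0 ∧ a1 = b1 ∧ a2 = b2 ∧ a3 = b3 ∧ a4 = b4 ∧ a5 = b5 ∧ a6 = b6 := by
  have e := fun n => congrArg (fun p => Polynomial.coeff p n) h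
  refine ⟨?_, ?_, ?_, ?_, ?_, ?_, ?_⟩
  · simpa [Polynomial.coeff_X, Polynomial.coeff_X_pow, Polynomial.coeff_C] using e 0
  · simpa [Polynomial.coeff_X, Polynomial.coeff_X_pow, Polynomial.coeff_C] using e 1
  · simpa [Polynomial.coeff_X, Polynomial.coeff_X_pow, Polynomial.coeff_C] using e 2
  · simpa [Polynomial.coeff_X, Polynomial.coeff_X_pow, Polynomial.coeff_C] using e 3
  · simpa [Polynomial.coeff_X, Polynomial.coeff_X_pow, Polynomial.coeff_C] using e 4
  · simpa [Polynomial.coeff_X, Polynomial.coeff_X_pow, Polynomial.coeff_C] using e 5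
  · simpa [Polynomial.coeff_X, Polynomial.coeff_X_pow, Polynomial.coeff_C] using e 6

/-- The pieces of the cubic form in adapted coordinates. -/
structure Cub (k : ℕ) (K : Type*) [Field K] where
  Q : MvPolynomial (Fin k) K
  κ : K
  l0 : K
  m0 : K
  n0 : K
  l1 : MvPolynomial (Fin k) K
  m1 : MvPolynomial (Fin k) K
  n1 : MvPolynomial (Fin k) K
  m2 : MvPolynomial (Fin k) K
  n2 : MvPolynomial (Fin k) K
  n3 : MvPolynomial (Fin k) K
  hQ : Q.IsHomogeneous 2
  hl1 : l1.IsHomogeneous 1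
  hm1 : m1.IsHomogeneous 1
  hn1 : n1.IsHomogeneous 1
  hm2 : m2.IsHomogeneous 2
  hn2 : n2.IsHomogeneous 2
  hn3 : n3.IsHomogeneous 3

variable {k : ℕ}

namespace Cub

noncomputable def f (D : Cub k K) : MvPolynomial (Fin k) K :=
  C D.κ * D.Q ^ 3 + D.Q ^ 2 * (C D.l0 + D.l1) + D.Q * (C D.m0 + D.m1 + D.m2)
    + (C D.n0 + D.n1 + D.n2 + D.n3)

/-- The cubic is not of the form `q * m + G * H`. -/
def NoSplit (D : Cub k K) : Prop :=
  ∀ (α β g0 h0 : K) (g1 l h1 h2 : MvPolynomial (Fin k) K), g1.IsHomogeneous 1 →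
    l.IsHomogeneous 1 → h1.IsHomogeneous 1 → h2.IsHomogeneous 2 →
    D.κ = α * β → D.l1 = C α * l + C β * g1 →
    C D.l0 * D.Q + D.m2 = C α * h2 + g1 * l + C (g0 * β) * D.Q →
    D.Q * D.m1 + D.n3 = C α * D.Q * h1 + g1 * h2 + C g0 * D.Q * l →
    D.Q * C D.m0 + D.n2 = C (α * h0) * D.Q + g1 * h1 + C g0 * h2 →
    D.n1 = g1 * C h0 + C g0 * h1 → D.n0 = g0 * h0 → False

theorem scl_f (D : Cub k K) : scl (Fin k) K D.f =
    Polynomial.C (C D.n0) + Polynomial.C D.n1 * Polynomial.X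
    + Polynomial.C (D.Q * C D.m0 + D.n2) * Polynomial.X ^ 2
    + Polynomial.C (D.Q * D.m1 + D.n3) * Polynomial.X ^ 3
    + Polynomial.C (D.Q * (C D.l0 * D.Q + D.m2)) * Polynomial.X ^ 4
    + Polynomial.C (D.Q ^ 2 * D.l1) * Polynomial.X ^ 5
    + Polynomial.C (C D.κ * D.Q ^ 3) * Polynomial.X ^ 6 := by
  have hC : ∀ c : K, scl (Fin k) K (C c) = Polynomial.C (C c) := fun c => by
    rw [scl_hom (isHomogeneous_C _ c)]; simp
  unfold f
  simp only [map_add, map_mul, map_pow, hC, scl_hom D.hQ, scl_hom D.hl1, scl_hom D.hm1,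
    scl_hom D.hn1, scl_hom D.hm2, scl_hom D.hn2, scl_hom D.hn3]
  ring

theorem f_ne_zero (D : Cub k K) (hQ : D.Q ≠ 0) (hS : D.NoSplit) : D.f ≠ 0 := by
  intro h0
  have h1 := D.scl_f
  rw [h0, map_zero] at h1
  obtain ⟨e0, e1, e2, e3, e4, e5, e6⟩ := coeffs7 (R := MvPolynomial (Fin k) K) (a0 := 0) (a1 := 0)
    (a2 := 0) (a3 := 0) (a4 := 0) (a5 := 0) (a6 := 0) (by
      simp only [Polynomial.C_0, zero_mul, add_zero]; exact h1)
  have c0 : D.n0 = 0 := by simpa using e0.symm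
  have c5 : D.l1 = 0 := by simpa [hQ] using e5.symm
  have c6 : D.κ = 0 := by simpa [hQ] using e6.symm
  have c4 : C D.l0 * D.Q + D.m2 = 0 := by
    rcases mul_eq_zero.mp e4.symm with h | h
    · exact absurd h hQ
    · exact h
  refine hS 0 0 0 0 0 0 0 0 (isHomogeneous_zero _ _ _) (isHomogeneous_zero _ _ _)
    (isHomogeneous_zero _ _ _) (isHomogeneous_zero _ _ _) ?_ ?_ ?_ ?_ ?_ ?_ ?_
  · simp [c6]
  · simp [c5]
  · simp [c4]
  · simp [← e3]
  · simp [← e2]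
  · simp [← e1]
  · simp [c0]

theorem split_aux (D : Cub k K) (hQ : D.Q ≠ 0) (hκ : D.κ ≠ 0) (hS : D.NoSplit)
    (g h : MvPolynomial (Fin k) K) (hgh : D.f = g * h) (α β : K)
    (hg : (scl (Fin k) K g).natDegree = 2) (hh : (scl (Fin k) K h).natDegree = 4)
    (hgl : (scl (Fin k) K g).coeff 2 = C α * D.Q)
    (hhl : (scl (Fin k) K h).coeff 4 = C β * D.Q ^ 2) : False := by
  have sg := (scl (Fin k) K g).as_sum_range_C_mul_X_pow
  have sh := (scl (Fin k) K h).as_sum_range_C_mul_X_pow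
  rw [hg] at sg
  rw [hh] at sh
  simp only [Finset.sum_range_succ, Finset.sum_range_zero, hgl, hhl, scl_coeff_zero] at sg sh
  have h1 := D.scl_f
  rw [hgh, map_mul, sg, sh] at h1
  have g1 := homogeneousComponent_isHomogeneous 1 g
  have h1h := homogeneousComponent_isHomogeneous 1 h
  have h2h := homogeneousComponent_isHomogeneous 2 h
  rw [← scl_coeff] at g1 h1h h2h
  generalize (scl (Fin k) K g).coeff 1 = G1 at *
  generalize (scl (Fin k) K h).coeff 1 = H1 at *
  generalize (scl (Fin k) K h).coeff 2 = H2 at *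
  generalize (scl (Fin k) K h).coeff 3 = H3 at *
  generalize eval 0 g = g0 at *
  generalize eval 0 h = h0 at *
  obtain ⟨e0, e1, e2, e3, e4, e5, e6⟩ := coeffs7 (R := MvPolynomial (Fin k) K)
    (a0 := C g0 * C h0) (a1 := C g0 * H1 + G1 * C h0)
    (a2 := C g0 * H2 + G1 * H1 + C α * D.Q * C h0)
    (a3 := C g0 * H3 + G1 * H2 + C α * D.Q * H1)
    (a4 := C g0 * (C β * D.Q ^ 2) + G1 * H3 + C α * D.Q * H2)
    (a5 := G1 * (C β * D.Q ^ 2) + C α * D.Q * H3)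
    (a6 := C α * D.Q * (C β * D.Q ^ 2)) (by
      rw [← h1]; simp only [map_add, map_mul]; ring)
  have hk : D.κ = α * β := by
    have : (C D.κ - C (α * β) : MvPolynomial (Fin k) K) * D.Q ^ 3 = 0 := by
      rw [C_mul]; linear_combination -e6
    rcases mul_eq_zero.mp this with h | h
    · rw [← C_sub] at h
      exact sub_eq_zero.mp (C_eq_zero.mp h)
    · exact absurd (pow_eq_zero_iff (by norm_num) |>.mp h) hQ
  have hα : α ≠ 0 := by rintro rfl; simp at hk; exact hκ hk
  have hαC : (C α * C α⁻¹ : MvPolynomial (Fin k) K) = 1 := by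
    rw [← C_mul, mul_inv_cancel₀ hα, C_1]
  have hH3 : H3 = D.Q * (C α⁻¹ * (D.l1 - C β * G1)) := by
    have : D.Q * (C α * (H3 - D.Q * (C α⁻¹ * (D.l1 - C β * G1)))) = 0 := by
      linear_combination e5 - D.Q ^ 2 * (D.l1 - C β * G1) * hαC
    rcases mul_eq_zero.mp this with h | h
    · exact absurd h hQ
    · rcases mul_eq_zero.mp h with h | h
      · exact absurd (by simpa using h) hα
      · exact sub_eq_zero.mp h
  have hl : (C α⁻¹ * (D.l1 - C β * G1)).IsHomogeneous 1 := (D.hl1.sub (g1.C_mul β)).C_mul _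
  have hl1 : D.l1 = C α * (C α⁻¹ * (D.l1 - C β * G1)) + C β * G1 := by
    linear_combination -(D.l1 - C β * G1) * hαC
  generalize C α⁻¹ * (D.l1 - C β * G1) = l at *
  subst hH3
  refine hS α β g0 h0 G1 l H1 H2 g1 hl h1h h2h hk hl1 ?_ ?_ ?_ ?_ ?_
  · apply mul_left_cancel₀ hQ
    rw [C_mul]; linear_combination -e4
  · linear_combination -e3
  · rw [C_mul]; linear_combination -e2
  · linear_combination -e1
  · rw [← C_mul] at e0
    exact (C_injective _ _ e0).symm

theorem f_irred (D : Cub k K) (hQ : Prime D.Q) (hκ : D.κ ≠ 0) (hS : D.NoSplit) :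
    Irreducible D.f := by
  have hQ0 := hQ.ne_zero
  have htop : (C D.κ * D.Q ^ 3) ≠ 0 := by
    simp [hκ, hQ0]
  have hdeg : (scl (Fin k) K D.f).natDegree = 6 := by
    rw [scl_f]
    compute_degree
    all_goals first | exact htop | norm_num
  have hlc : (scl (Fin k) K D.f).leadingCoeff = C D.κ * D.Q ^ 3 := by
    rw [Polynomial.leadingCoeff, hdeg, scl_f]
    simp only [Polynomial.coeff_add, Polynomial.coeff_C_mul, Polynomial.coeff_X_pow,
      Polynomial.coeff_X, Polynomial.coeff_C]
    simp
  have unit_of : ∀ g : MvPolynomial (Fin k) K, g ≠ 0 → (scl (Fin k) K g).natDegree = 0 → IsUnit g := by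
    intro g hg h5
    have h6 := Polynomial.eq_C_of_natDegree_eq_zero h5
    have h7 := scl_eval_one g
    rw [h6, scl_coeff_zero, Polynomial.eval_C] at h7
    rw [← h7]
    refine (IsUnit.mk0 _ ?_).map C
    intro h
    rw [h] at h7
    exact hg (by simpa using h7.symm)
  refine ⟨fun hu => ?_, ?_⟩
  · have := hu.map (scl (Fin k) K)
    have := Polynomial.natDegree_eq_zero_of_isUnit this
    omega
  · intro g h hgh
    have hf0 := D.f_ne_zero hQ0 hS
    have hg0 : g ≠ 0 := by rintro rfl; simp at hgh; exact hf0 hgh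
    have hh0 : h ≠ 0 := by rintro rfl; simp at hgh; exact hf0 hgh
    have inj : ∀ g : MvPolynomial (Fin k) K, g ≠ 0 → scl (Fin k) K g ≠ 0 := by
      intro g hg h
      apply hg
      have := scl_eval_one g
      rw [h] at this
      simpa using this.symm
    have hs : scl (Fin k) K g * scl (Fin k) K h = scl (Fin k) K D.f := by rw [hgh, map_mul]
    have hd : (scl (Fin k) K g).natDegree + (scl (Fin k) K h).natDegree = 6 := by
      rw [← Polynomial.natDegree_mul (inj g hg0) (inj h hh0), hs, hdeg]
    have hl : (scl (Fin k) K g).leadingCoeff * (scl (Fin k) K h).leadingCoeff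
        = C D.κ * D.Q ^ 3 := by
      rw [← Polynomial.leadingCoeff_mul, hs, hlc]
    have key : ∀ g' h' : MvPolynomial (Fin k) K, g' ≠ 0 → (scl (Fin k) K g').leadingCoeff * h'
        = C D.κ * D.Q ^ 3 → ∃ (i : ℕ) (α : K), (scl (Fin k) K g').natDegree = 2 * i ∧
          (scl (Fin k) K g').leadingCoeff = C α * D.Q ^ i := by
      intro g' h' hg' he
      have hdvd : (scl (Fin k) K g').leadingCoeff ∣ D.Q ^ 3 := by
        refine ⟨C D.κ⁻¹ * h', ?_⟩
        have hkk : (C D.κ⁻¹ * C D.κ : MvPolynomial (Fin k) K) = 1 := by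
          rw [← C_mul, inv_mul_cancel₀ hκ, C_1]
        linear_combination -(C D.κ⁻¹) * he - D.Q ^ 3 * hkk
      obtain ⟨i, hi, hass⟩ := (dvd_prime_pow hQ 3).mp hdvd
      obtain ⟨u, hu⟩ := hass.symm
      obtain ⟨α, hα⟩ := MvPolynomial.isUnit_iff_eq_C_of_isReduced.mp u.isUnit
      have e : (scl (Fin k) K g').leadingCoeff = C α * D.Q ^ i := by
        rw [← hu, hα.2, mul_comm]
      refine ⟨i, α, ?_, e⟩
      have h1 : ((scl (Fin k) K g').leadingCoeff).IsHomogeneous (scl (Fin k) K g').natDegree := by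
        rw [Polynomial.leadingCoeff, scl_coeff]
        exact homogeneousComponent_isHomogeneous _ _
      have h2 : ((scl (Fin k) K g').leadingCoeff).IsHomogeneous (2 * i) := by
        rw [e]
        exact (D.hQ.pow i).C_mul α
      exact h1.inj_right h2 (by simpa using inj g' hg')
    obtain ⟨i, α, hi, hα⟩ := key g _ hg0 hl
    obtain ⟨j, β, hj, hβ⟩ := key h _ hh0 (by rw [mul_comm]; exact hl)
    have hij : i + j = 3 := by omega
    have hi3 : i ≤ 3 := by omega
    interval_cases i
    · left; exact unit_of g hg0 (by omega)
    · exfalso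
      obtain rfl : j = 2 := by omega
      exact D.split_aux hQ0 hκ hS g h hgh α β hi hj
        (by rw [Polynomial.leadingCoeff, hi] at hα; simpa using hα)
        (by rw [Polynomial.leadingCoeff, hj] at hβ; exact hβ)
    · exfalso
      obtain rfl : j = 1 := by omega
      exact D.split_aux hQ0 hκ hS h g (by rw [hgh, mul_comm]) β α hj hi
        (by rw [Polynomial.leadingCoeff, hj] at hβ; simpa using hβ)
        (by rw [Polynomial.leadingCoeff, hi] at hα; exact hα)
    · right; exact unit_of h hh0 (by omega)

end Cub
end CL

namespace CL
set_option linter.all false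
open MvPolynomial

variable {K : Type*} [Field K] [IsAlgClosed K] [CharZero K]

/-- Trilinear forms. -/
abbrev Tri (K V : Type*) [Field K] [AddCommGroup V] [Module K V] := V →ₗ[K] V →ₗ[K] V →ₗ[K] K

theorem lin_mv {k : ℕ} (φ : (Fin k → K) →ₗ[K] K) :
    ∃ g : MvPolynomial (Fin k) K, g.IsHomogeneous 1 ∧ ∀ z, eval z g = φ z := by
  refine ⟨∑ i, C (φ (Pi.single i 1)) * X i, ?_, fun z => ?_⟩
  · exact IsHomogeneous.sum _ _ _ fun i _ => (isHomogeneous_X K i).C_mul _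
  · conv_rhs => rw [← (Pi.basisFun K (Fin k)).sum_repr z]
    simp [mul_comm]

theorem quad_mv {k : ℕ} (B : (Fin k → K) →ₗ[K] (Fin k → K) →ₗ[K] K) :
    ∃ g : MvPolynomial (Fin k) K, g.IsHomogeneous 2 ∧ ∀ z, eval z g = B z z := by
  choose g hg hgz using fun i => lin_mv (B (Pi.single i 1))
  refine ⟨∑ i, X i * g i, ?_, fun z => ?_⟩
  · exact IsHomogeneous.sum _ _ _ fun i _ => (isHomogeneous_X K i).mul (hg i)
  · have : B z z = B (∑ i, (Pi.basisFun K (Fin k)).repr z i • Pi.basisFun K (Fin k) i) z := by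
      rw [(Pi.basisFun K (Fin k)).sum_repr z]
    rw [this, map_sum, map_sum, LinearMap.sum_apply]
    simp [hgz]

theorem cub_mv {k : ℕ} (B : Tri K (Fin k → K)) :
    ∃ g : MvPolynomial (Fin k) K, g.IsHomogeneous 3 ∧ ∀ z, eval z g = B z z z := by
  choose g hg hgz using fun i => quad_mv (B (Pi.single i 1))
  refine ⟨∑ i, X i * g i, ?_, fun z => ?_⟩
  · exact IsHomogeneous.sum _ _ _ fun i _ => (isHomogeneous_X K i).mul (hg i)
  · have : B z z z = B (∑ i, (Pi.basisFun K (Fin k)).repr z i • Pi.basisFun K (Fin k) i) z z := by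
      rw [(Pi.basisFun K (Fin k)).sum_repr z]
    rw [this, map_sum, map_sum, LinearMap.sum_apply, LinearMap.sum_apply]
    simp [hgz]

variable {V : Type*} [AddCommGroup V] [Module K V]

/-- Symmetric trilinear form -/
structure Tri.Sym (T : Tri K V) : Prop where
  s12 : ∀ a b c, T a b c = T b a c
  s23 : ∀ a b c, T a b c = T a c b

/-- Adapted frame at the point `x`. -/
structure Frame (T : Tri K V) (x : V) (k : ℕ) where
  w : V
  p : V
  p' : V
  ξ : V →ₗ[K] K
  ι : (Fin k → K) →ₗ[K] V
  cz : V →ₗ[K] (Fin k → K)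
  sym : T.Sym
  hx : T x x x = 0
  hxw : T x x w = 1
  hxp : T x x p = 0
  hxp' : T x x p' = 0
  hpw : T x p w = 0
  hqw : T x p' w = 0
  hpp : T x p p = 0
  hqq : T x p' p' = 0
  hpp' : 2 * T x p p' = 1
  ξx : ξ x = 1
  ξw : ξ w = 0
  ξp : ξ p = 0
  ξp' : ξ p' = 0
  ιx : ∀ z, T x x (ι z) = 0
  ιp : ∀ z, T x p (ι z) = 0
  ιp' : ∀ z, T x p' (ι z) = 0
  ιξ : ∀ z, ξ (ι z) = 0
  czι : ∀ z, cz (ι z) = z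
  czx : cz x = 0
  czw : cz w = 0
  czp : cz p = 0
  czp' : cz p' = 0
  dec : ∀ v, v = T x x v • w + ξ v • x + (2 * T x p v) • p' + (2 * T x p' v) • p + ι (cz v)
  rad : ∀ B : (Fin k → K) →ₗ[K] (Fin k → K) →ₗ[K] K, (∀ z z', B z z' = - T x (ι z) (ι z')) →
    Module.finrank K (LinearMap.ker B) + 3 ≤ k

theorem exists_frame [FiniteDimensional K V] (T : Tri K V) (hT : T.Sym) {k : ℕ} (hk : 4 ≤ k)
    (hV : Module.finrank K V = k + 4) (x : V) (hx0 : x ≠ 0) (hx : T x x x = 0)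
    (hker : Module.finrank K (LinearMap.ker (T x)) ≤ 1)
    (w0 : V) (hw0 : T x x w0 ≠ 0)
    (p : V) (hxp : T x x p = 0) (hpp : T x p p = 0)
    (e : V) (hxe : T x x e = 0) (hpe : T x p e ≠ 0) :
    ∃ Φ : Frame T x k, Φ.p = p := by
  have s12 := hT.s12
  have s23 := hT.s23
  obtain ⟨p1, hxp1, hpp1⟩ : ∃ p1, T x x p1 = 0 ∧ 2 * T x p p1 = 1 := by
    refine ⟨(2 * T x p e)⁻¹ • e, by simp [hxe], ?_⟩
    simp only [map_smul, smul_eq_mul]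
    field_simp
  obtain ⟨p', hxp', hpp', hqq⟩ : ∃ p', T x x p' = 0 ∧ 2 * T x p p' = 1 ∧ T x p' p' = 0 := by
    refine ⟨p1 - T x p1 p1 • p, by simp [hxp1, hxp], by simp [hpp, hpp1], ?_⟩
    simp only [map_sub, map_smul, LinearMap.sub_apply, LinearMap.smul_apply, smul_eq_mul, hpp]
    rw [s23 x p1 p]
    linear_combination - T x p1 p1 * hpp1
  obtain ⟨w1, hxw1⟩ : ∃ w1, T x x w1 = 1 := ⟨(T x x w0)⁻¹ • w0, by simp [hw0]⟩
  obtain ⟨w, hxw, hpw, hqw⟩ : ∃ w, T x x w = 1 ∧ T x p w = 0 ∧ T x p' w = 0 := by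
    refine ⟨w1 - (2 * T x p w1) • p' - (2 * T x p' w1) • p, by simp [hxw1, hxp, hxp'], ?_, ?_⟩
    · simp only [map_sub, map_smul, smul_eq_mul, hpp]
      linear_combination - T x p w1 * hpp'
    · simp only [map_sub, map_smul, smul_eq_mul, hqq]
      rw [s23 x p' p]
      linear_combination - T x p' w1 * hpp'
  obtain ⟨ξ0, hξ0⟩ := Module.exists_dual_forall_apply_ne_zero (K := K) (fun _ : Unit => x) (fun _ => hx0)
  obtain ⟨ξ1, hξ1⟩ : ∃ ξ1 : V →ₗ[K] K, ξ1 x = 1 :=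
    ⟨(ξ0 x)⁻¹ • ξ0, by simp [hξ0 ()]⟩
  have hpx : T x p x = 0 := by rw [s23]; exact hxp
  have hp'x : T x p' x = 0 := by rw [s23]; exact hxp'
  have hp'p : 2 * T x p' p = 1 := by rw [s23]; exact hpp'
  obtain ⟨ξ, ξx, ξw, ξp, ξp'⟩ : ∃ ξ : V →ₗ[K] K, ξ x = 1 ∧ ξ w = 0 ∧ ξ p = 0 ∧ ξ p' = 0 := by
    refine ⟨ξ1 - ξ1 w • T x x - (2 * ξ1 p') • T x p - (2 * ξ1 p) • T x p', ?_, ?_, ?_, ?_⟩ <;>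
    simp only [LinearMap.sub_apply, LinearMap.smul_apply, smul_eq_mul, hx, hpx, hp'x, hxw, hpw, hqw, hξ1,
      hxp, hxp', hpp, hqq]
    · ring
    · ring
    · linear_combination - ξ1 p * hp'p
    · linear_combination - ξ1 p' * hpp'
  -- the projection to Z
  let π : V →ₗ[K] V := LinearMap.id - (T x x).smulRight w - ξ.smulRight x
    - ((2:K) • T x p).smulRight p' - ((2:K) • T x p').smulRight p
  have hπ : ∀ v, π v = v - T x x v • w - ξ v • x - (2 * T x p v) • p' - (2 * T x p' v) • p := by
    intro v; simp [π]
  let Ψ : V →ₗ[K] (Fin 4 → K) := LinearMap.pi ![T x x, ξ, (2:K) • T x p, (2:K) • T x p']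
  have hΨ : ∀ v, Ψ v = ![T x x v, ξ v, 2 * T x p v, 2 * T x p' v] := by
    intro v; ext i; fin_cases i <;> simp [Ψ]
  let Z := LinearMap.ker Ψ
  have memZ : ∀ v, v ∈ Z ↔ T x x v = 0 ∧ ξ v = 0 ∧ T x p v = 0 ∧ T x p' v = 0 := by
    intro v
    rw [LinearMap.mem_ker, hΨ]
    constructor
    · intro h
      have h0 := congrFun h 0
      have h1 := congrFun h 1
      have h2 := congrFun h 2
      have h3 := congrFun h 3
      simp at h0 h1 h2 h3
      exact ⟨h0, h1, h2, h3⟩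
    · rintro ⟨h0, h1, h2, h3⟩
      rw [h0, h1, h2, h3]
      ext i; fin_cases i <;> simp
  have hsurj : LinearMap.range Ψ = ⊤ := by
    rw [LinearMap.range_eq_top]
    intro a
    refine ⟨a 0 • w + a 1 • x + a 2 • p' + a 3 • p, ?_⟩
    rw [hΨ]
    ext i
    fin_cases i <;> simp only [map_add, map_smul, smul_eq_mul, hx, hpx, hp'x, hxw, hpw, hqw,
      hxp, hxp', hpp, hqq, ξx, ξw, ξp, ξp'] <;> simp
    · linear_combination a 2 * hpp'
    · linear_combination a 3 * hp'p
  have hZ : Module.finrank K Z = k := by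
    have := LinearMap.finrank_range_add_finrank_ker Ψ
    rw [hsurj, finrank_top, hV] at this
    simp at this
    change Module.finrank K (LinearMap.ker Ψ) = k
    omega
  have hπZ : ∀ v, π v ∈ Z := by
    intro v
    rw [memZ, hπ]
    simp only [map_sub, map_smul, smul_eq_mul, hx, hpx, hp'x, hxw, hpw, hqw,
      hxp, hxp', hpp, hqq, ξx, ξw, ξp, ξp']
    refine ⟨by ring, by ring, ?_, ?_⟩
    · linear_combination - T x p v * hpp'
    · linear_combination - T x p' v * hp'p
  have hπid : ∀ v ∈ Z, π v = v := by
    intro v hv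
    obtain ⟨h0, h1, h2, h3⟩ := (memZ v).mp hv
    rw [hπ, h0, h1, h2, h3]; simp
  let b : Z ≃ₗ[K] (Fin k → K) := LinearEquiv.ofFinrankEq _ _ (by simp [hZ])
  let ι : (Fin k → K) →ₗ[K] V := Z.subtype ∘ₗ b.symm.toLinearMap
  let cz : V →ₗ[K] (Fin k → K) := b.toLinearMap ∘ₗ π.codRestrict Z hπZ
  have ιZ : ∀ z, ι z ∈ Z := fun z => (b.symm z).2
  have hιcz : ∀ v, ι (cz v) = π v := by
    intro v; simp [ι, cz]
  have hιinj : Function.Injective ι := by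
    intro a c h
    have : b.symm a = b.symm c := Subtype.ext h
    exact b.symm.injective this
  have hczι : ∀ z, cz (ι z) = z := by
    intro z
    apply hιinj
    rw [hιcz, hπid _ (ιZ z)]
  have cz0 : ∀ v, π v = 0 → cz v = 0 := by
    intro v hv
    apply hιinj
    rw [hιcz, hv, map_zero]
  refine ⟨⟨w, p, p', ξ, ι, cz, hT, hx, hxw, hxp, hxp', hpw, hqw, hpp, hqq, hpp', ξx, ξw, ξp, ξp',
    fun z => ((memZ _).mp (ιZ z)).1, fun z => ((memZ _).mp (ιZ z)).2.2.1,
    fun z => ((memZ _).mp (ιZ z)).2.2.2, fun z => ((memZ _).mp (ιZ z)).2.1, hczι, ?_, ?_, ?_, ?_,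
    ?_, ?_⟩, rfl⟩
  · apply cz0; rw [hπ, hx, ξx, hpx, hp'x]; simp
  · apply cz0; rw [hπ, hxw, ξw, hpw, hqw]; simp
  · apply cz0; rw [hπ, hxp, ξp, hpp, hp'p]; simp
  · apply cz0; rw [hπ, hxp', ξp', hpp', hqq]; simp
  · intro v
    rw [hιcz, hπ]; abel
  · intro B hB
    have : Module.finrank K (LinearMap.ker B) ≤ Module.finrank K (LinearMap.ker (T x)) := by
      let θ : (Fin k → K) →ₗ[K] V := ι - ((T x).flip w ∘ₗ ι).smulRight x
      have hθ : ∀ z, θ z = ι z - T x (ι z) w • x := by intro z; simp [θ]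
      have hθk : ∀ z ∈ LinearMap.ker B, θ z ∈ LinearMap.ker (T x) := by
        intro z hz
        obtain ⟨h0, h1, h2, h3⟩ := (memZ _).mp (ιZ z)
        rw [LinearMap.mem_ker]
        refine LinearMap.ext fun v => ?_
        have hv : v = T x x v • w + ξ v • x + (2 * T x p v) • p' + (2 * T x p' v) • p + ι (cz v) := by
          rw [hιcz, hπ]; abel
        have hBz : T x (ι z) (ι (cz v)) = 0 := by
          have := hB z (cz v)
          rw [LinearMap.mem_ker.mp hz] at this
          simpa using this.symm
        have e1 : T x (ι z) p = 0 := by rw [s23]; exact h2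
        have e2 : T x (ι z) p' = 0 := by rw [s23]; exact h3
        have e3 : T x (ι z) x = 0 := by rw [s23]; exact h0
        rw [hθ]
        obtain ⟨h0', h1', h2', h3'⟩ := (memZ _).mp (ιZ (cz v))
        rw [map_sub, map_smul, LinearMap.sub_apply, LinearMap.smul_apply]
        have : T x (ι z) v = T x x v * T x (ι z) w := by
          conv_lhs => rw [hv]
          simp only [map_add, map_smul, smul_eq_mul, e1, e2, e3, hBz]
          ring
        rw [this]
        simp [mul_comm]
      have hinj : Function.Injective (θ.restrict hθk) := by
        rw [← LinearMap.ker_eq_bot, LinearMap.ker_eq_bot']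
        intro z hz
        have h1 : θ z = 0 := congrArg Subtype.val hz
        have h2 := congrArg cz h1
        have czx : cz x = 0 := by apply cz0; rw [hπ, hx, ξx, hpx, hp'x]; simp
        rw [hθ, map_sub, hczι, map_smul, czx] at h2
        simpa using h2
      exact LinearMap.finrank_le_finrank_of_injective hinj
    omega

end CL

namespace CL
set_option linter.all false
open MvPolynomial

variable {K : Type*} [Field K] [IsAlgClosed K] [CharZero K]
variable {V : Type*} [AddCommGroup V] [Module K V]

namespace Frame
variable {T : Tri K V} {x : V} {k : ℕ}

/-- `D` describes the cubic form in the coordinates of the frame. -/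
structure Data (Φ : Frame T x k) (D : Cub k K) : Prop where
  Q : ∀ z, eval z D.Q = - T x (Φ.ι z) (Φ.ι z)
  κ : D.κ = T Φ.p Φ.p Φ.p
  l0 : D.l0 = 3 * T Φ.p Φ.p Φ.p'
  m0 : D.m0 = 3 * T Φ.p Φ.p' Φ.p'
  n0 : D.n0 = T Φ.p' Φ.p' Φ.p'
  l1 : ∀ z, eval z D.l1 = 3 * T Φ.p Φ.p (Φ.ι z)
  m1 : ∀ z, eval z D.m1 = 6 * T Φ.p Φ.p' (Φ.ι z)
  n1 : ∀ z, eval z D.n1 = 3 * T Φ.p' Φ.p' (Φ.ι z)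
  m2 : ∀ z, eval z D.m2 = 3 * T Φ.p (Φ.ι z) (Φ.ι z)
  n2 : ∀ z, eval z D.n2 = 3 * T Φ.p' (Φ.ι z) (Φ.ι z)
  n3 : ∀ z, eval z D.n3 = T (Φ.ι z) (Φ.ι z) (Φ.ι z)

theorem exists_data (Φ : Frame T x k) : ∃ D : Cub k K, Φ.Data D := by
  obtain ⟨Q, hQ, eQ⟩ := quad_mv (-((T x).compl₁₂ Φ.ι Φ.ι))
  obtain ⟨l1, hl1, el1⟩ := lin_mv ((3:K) • (T Φ.p Φ.p ∘ₗ Φ.ι))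
  obtain ⟨m1, hm1, em1⟩ := lin_mv ((6:K) • (T Φ.p Φ.p' ∘ₗ Φ.ι))
  obtain ⟨n1, hn1, en1⟩ := lin_mv ((3:K) • (T Φ.p' Φ.p' ∘ₗ Φ.ι))
  obtain ⟨m2, hm2, em2⟩ := quad_mv ((3:K) • ((T Φ.p).compl₁₂ Φ.ι Φ.ι))
  obtain ⟨n2, hn2, en2⟩ := quad_mv ((3:K) • ((T Φ.p').compl₁₂ Φ.ι Φ.ι))
  obtain ⟨n3, hn3, en3⟩ := cub_mv (K := K) (k := k)
    ((LinearMap.llcomp K (Fin k → K) (V →ₗ[K] K) ((Fin k → K) →ₗ[K] K)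
      (LinearMap.lcomp K K Φ.ι)) ∘ₗ ((LinearMap.lcomp K (V →ₗ[K] K) Φ.ι) ∘ₗ T ∘ₗ Φ.ι))
  exact ⟨⟨Q, T Φ.p Φ.p Φ.p, 3 * T Φ.p Φ.p Φ.p', 3 * T Φ.p Φ.p' Φ.p', T Φ.p' Φ.p' Φ.p',
    l1, m1, n1, m2, n2, n3, hQ, hl1, hm1, hn1, hm2, hn2, hn3⟩,
    ⟨fun z => by simp [eQ], rfl, rfl, rfl, rfl, fun z => by simp [el1], fun z => by simp [em1],
      fun z => by simp [en1], fun z => by simp [em2], fun z => by simp [en2],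
      fun z => by simp [en3]⟩⟩

/-- the point of the tangent space with given coordinates -/
def pt (Φ : Frame T x k) (s y0 y1 : K) (z : Fin k → K) : V :=
  s • x + y0 • Φ.p' + y1 • Φ.p + Φ.ι z

theorem x_pt (Φ : Frame T x k) (s y0 y1 : K) (z : Fin k → K) : T x x (Φ.pt s y0 y1 z) = 0 := by
  simp [pt, Φ.hx, Φ.hxp, Φ.hxp', Φ.ιx]

theorem q_pt (Φ : Frame T x k) {D : Cub k K} (hD : Φ.Data D) (s y0 y1 : K) (z : Fin k → K) :
    T x (Φ.pt s y0 y1 z) (Φ.pt s y0 y1 z) = y0 * y1 - eval z D.Q := by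
  have s23 := Φ.sym.s23
  rw [hD.Q]
  simp only [pt, map_add, map_smul, LinearMap.add_apply, LinearMap.smul_apply, smul_eq_mul,
    Φ.hx, Φ.hxp, Φ.hxp', Φ.ιx, Φ.hpp, Φ.hqq, Φ.ιp, Φ.ιp', s23 x Φ.p x, s23 x Φ.p' x,
    s23 x (Φ.ι z) Φ.p, s23 x (Φ.ι z) Φ.p', s23 x (Φ.ι z) x, s23 x Φ.p' Φ.p]
  linear_combination y0 * y1 * Φ.hpp'

theorem c_pt (Φ : Frame T x k) {D : Cub k K} (hD : Φ.Data D) (s y0 y1 : K) (z : Fin k → K) :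
    T (Φ.pt s y0 y1 z) (Φ.pt s y0 y1 z) (Φ.pt s y0 y1 z) = 3 * s * (y0 * y1 - eval z D.Q)
      + (D.κ * y1 ^ 3 + y1 ^ 2 * (D.l0 * y0 + eval z D.l1)
        + y1 * (D.m0 * y0 ^ 2 + eval z D.m1 * y0 + eval z D.m2)
        + (D.n0 * y0 ^ 3 + eval z D.n1 * y0 ^ 2 + eval z D.n2 * y0 + eval z D.n3)) := by
  have s12 := Φ.sym.s12
  have s23 := Φ.sym.s23
  have key : ∀ (e : V), T x x e = 0 → T (s • x + e) (s • x + e) (s • x + e)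
      = 3 * s * T x e e + T e e e := by
    intro e he
    have e1 : T x e x = 0 := by rw [s23]; exact he
    have e2 : T e x x = 0 := by rw [s12]; exact e1
    have e3 : T e x e = T x e e := s12 _ _ _
    have e4 : T e e x = T x e e := by rw [s23]; exact e3
    simp only [map_add, map_smul, LinearMap.add_apply, LinearMap.smul_apply, smul_eq_mul,
      he, e1, e2, e3, e4, Φ.hx]
    ring
  have h0 : ∀ s', Φ.pt s' y0 y1 z = s' • x + Φ.pt 0 y0 y1 z := by
    intro s'; simp [pt]; abel
  rw [h0 s, key _ (Φ.x_pt _ _ _ _), Φ.q_pt hD]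
  congr 1
  rw [hD.κ, hD.l0, hD.m0, hD.n0, hD.l1, hD.m1, hD.n1, hD.m2, hD.n2, hD.n3]
  simp only [pt, zero_smul, zero_add]
  generalize Φ.ι z = a
  generalize Φ.p = p
  generalize Φ.p' = r
  have c1 : T r p p = T p p r := by rw [s12, s23]
  have c2 : T p r p = T p p r := by rw [s23]
  have c3 : T r p r = T p r r := by rw [s12]
  have c4 : T r r p = T p r r := by rw [s23, s12]
  have c5 : T a p p = T p p a := by rw [s12, s23]
  have c6 : T p a p = T p p a := by rw [s23]
  have c7 : T a p a = T p a a := by rw [s12]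
  have c8 : T a a p = T p a a := by rw [s23, s12]
  have c9 : T a r r = T r r a := by rw [s12, s23]
  have c10 : T r a r = T r r a := by rw [s23]
  have c11 : T a r a = T r a a := by rw [s12]
  have c12 : T a a r = T r a a := by rw [s23, s12]
  have c13 : T p a r = T p r a := by rw [s23]
  have c14 : T r p a = T p r a := by rw [s12]
  have c15 : T r a p = T p r a := by rw [s23, s12]
  have c16 : T a p r = T p r a := by rw [s12, s23]
  have c17 : T a r p = T p r a := by rw [s12, s23, s12]
  simp only [map_add, map_smul, LinearMap.add_apply, LinearMap.smul_apply, smul_eq_mul, c1, c2, c3, c4,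
    c5, c6, c7, c8, c9, c10, c11, c12, c13, c14, c15, c16, c17]
  ring

theorem eval_f (Φ : Frame T x k) {D : Cub k K} (hD : Φ.Data D) (s : K) (z : Fin k → K) :
    eval z D.f = T (Φ.pt s 1 (eval z D.Q) z) (Φ.pt s 1 (eval z D.Q) z) (Φ.pt s 1 (eval z D.Q) z) := by
  rw [Φ.c_pt hD]
  simp [Cub.f]

theorem eq_pt (Φ : Frame T x k) (v : V) (hv : T x x v = 0) :
    v = Φ.pt (Φ.ξ v) (2 * T x Φ.p v) (2 * T x Φ.p' v) (Φ.cz v) := by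
  have := Φ.dec v
  rw [hv, zero_smul, zero_add] at this
  exact this

theorem pt_coord (Φ : Frame T x k) (s y0 y1 : K) (z : Fin k → K) :
    Φ.ξ (Φ.pt s y0 y1 z) = s ∧ 2 * T x Φ.p (Φ.pt s y0 y1 z) = y0 ∧
    2 * T x Φ.p' (Φ.pt s y0 y1 z) = y1 ∧ Φ.cz (Φ.pt s y0 y1 z) = z := by
  have s23 := Φ.sym.s23
  have h1 : T x Φ.p x = 0 := by rw [s23]; exact Φ.hxp
  have h2 : T x Φ.p' x = 0 := by rw [s23]; exact Φ.hxp'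
  simp only [pt, map_add, map_smul, smul_eq_mul, Φ.ξx, Φ.ξp, Φ.ξp', Φ.ιξ, h1, h2, Φ.hpp, Φ.hqq,
    Φ.ιp, Φ.ιp', Φ.czx, Φ.czp, Φ.czp', Φ.czι, s23 x Φ.p' Φ.p]
  refine ⟨by ring, ?_, ?_, by simp⟩
  · linear_combination y0 * Φ.hpp'
  · linear_combination y1 * Φ.hpp'

theorem Q_prime (Φ : Frame T x k) {D : Cub k K} (hD : Φ.Data D) : Prime D.Q := by
  have hB : ∀ z z', (-((T x).compl₁₂ Φ.ι Φ.ι)) z z' = - T x (Φ.ι z) (Φ.ι z') := by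
    intro z z'; simp
  refine quad_prime _ ?_ (Φ.rad _ hB) D.Q D.hQ ?_
  · intro u v; rw [hB, hB, Φ.sym.s23]
  · intro z; rw [hB, hD.Q]

theorem eval_zero_hom {k d : ℕ} {g : MvPolynomial (Fin k) K} (hg : g.IsHomogeneous (d + 1)) :
    eval 0 g = 0 := by
  have := scl_eval (K := K) g 0 0
  rw [scl_hom hg] at this
  simpa using this.symm

theorem noSplit [FiniteDimensional K V] (Φ : Frame T x k) (hk : 4 ≤ k)
    (hV : Module.finrank K V = k + 4)
    (hns : ∀ z, (∀ v, T z z v = 0) → z = 0) {D : Cub k K} (hD : Φ.Data D) : D.NoSplit := by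
  intro α β g0 h0 g1 l h1 h2 hg1 hl hh1 hh2 a1 a2 a3 a4 a5 a6 a7
  let y0 : V → K := fun v => 2 * T x Φ.p v
  let y1 : V → K := fun v => 2 * T x Φ.p' v
  have py0 : y0 ∈ PF K V := PF.mul (PF.const 2) (PF.lin (T x Φ.p))
  have py1 : y1 ∈ PF K V := PF.mul (PF.const 2) (PF.lin (T x Φ.p'))
  have pev : ∀ g : MvPolynomial (Fin k) K, (fun v => eval (Φ.cz v) g) ∈ PF K V :=
    fun g => PF.mv g Φ.cz
  let q : V → K := fun v => y0 v * y1 v - eval (Φ.cz v) D.Q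
  let μ : V → K := fun v => 3 * Φ.ξ v + ((D.l0 - β * g0) * y1 v + (D.m0 - α * h0) * y0 v
    + (eval (Φ.cz v) D.m1 - α * eval (Φ.cz v) h1 - g0 * eval (Φ.cz v) l))
  let G : V → K := fun v => α * y1 v + eval (Φ.cz v) g1 + g0 * y0 v
  let H : V → K := fun v => β * y1 v ^ 2 + y1 v * eval (Φ.cz v) l + eval (Φ.cz v) h2
    + eval (Φ.cz v) h1 * y0 v + h0 * y0 v ^ 2
  have pq : q ∈ PF K V := PF.sub (PF.mul py0 py1) (pev _)
  have pμ : μ ∈ PF K V := PF.add (PF.mul (PF.const 3) (PF.lin Φ.ξ)) (PF.add (PF.add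
    (PF.mul (PF.const _) py1) (PF.mul (PF.const _) py0)) (PF.sub (PF.sub (pev _)
      (PF.mul (PF.const _) (pev _))) (PF.mul (PF.const _) (pev _))))
  have pG : G ∈ PF K V := PF.add (PF.add (PF.mul (PF.const _) py1) (pev _)) (PF.mul (PF.const _) py0)
  have pH : H ∈ PF K V := PF.add (PF.add (PF.add (PF.add (PF.mul (PF.const _) (PF.pow py1 2))
    (PF.mul py1 (pev _))) (pev _)) (PF.mul (pev _) py0)) (PF.mul (PF.const _) (PF.pow py0 2))
  have key : ∀ v, T x x v = 0 → T v v v = q v * μ v + G v * H v := by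
    intro v hv
    have e := Φ.c_pt hD (Φ.ξ v) (y0 v) (y1 v) (Φ.cz v)
    rw [← Φ.eq_pt v hv] at e
    rw [e]
    simp only [q, μ, G, H]
    have b2 := congrArg (eval (Φ.cz v)) a2
    have b3 := congrArg (eval (Φ.cz v)) a3
    have b4 := congrArg (eval (Φ.cz v)) a4
    have b5 := congrArg (eval (Φ.cz v)) a5
    have b6 := congrArg (eval (Φ.cz v)) a6
    simp only [eval_add, eval_mul, eval_C] at b2 b3 b4 b5 b6
    generalize y0 v = y0
    generalize y1 v = y1
    linear_combination y1 ^ 3 * a1 + y1 ^ 2 * b2 + y1 * b3 + b4 + y0 * b5 + y0 ^ 2 * b6 + y0 ^ 3 * a7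
  have z0 : ∀ {d : ℕ} {g : MvPolynomial (Fin k) K}, g.IsHomogeneous (d + 1) →
    constantCoeff g = 0 := fun {d} {g} hg => by
      have := eval_zero_hom hg
      rwa [eval_zero] at this
  obtain ⟨y, hy, hyz⟩ := PF.krull (K := K) (U := V) (k := 6) (by omega)
    ![fun v => T x x v, q, μ, G, H, fun v => T.flip Φ.w v v]
    (by
      intro j
      fin_cases j
      · exact PF.lin _
      · exact pq
      · exact pμ
      · exact pG
      · exact pH
      · exact PF.quad (T.flip Φ.w))
    (by
      intro j
      fin_cases j <;> simp [q, μ, G, H, y0, y1, z0 D.hQ, z0 D.hm1, z0 hh1, z0 hl, z0 hg1, z0 hh2])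
  have y1' : T x x y = 0 := hyz 0
  have y2' : q y = 0 := hyz 1
  have y3' : μ y = 0 := hyz 2
  have y4' : G y = 0 := hyz 3
  have y5' : H y = 0 := hyz 4
  have y6' : T y Φ.w y = 0 := hyz 5
  have tang : ∀ u, T x x u = 0 → T y y u = 0 := by
    intro u hu
    obtain ⟨a, ha⟩ := PF.line pq y u
    obtain ⟨b, hb⟩ := PF.line pμ y u
    obtain ⟨c, hc⟩ := PF.line pG y u
    obtain ⟨d, hd⟩ := PF.line pH y u
    have := lin_coeff_zero (a := a) (b := b) (c := c) (d := d) (α := T y y y) (β := 3 * T y y u)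
      (γ := 3 * T y u u) (δ := T u u u) (by simp [ha, y2']) (by simp [hb, y3']) (by simp [hc, y4'])
      (by simp [hd, y5']) (by
        intro t
        rw [ha, hb, hc, hd, ← key _ (by simp [y1', hu])]
        have e1 : T y u y = T y y u := Φ.sym.s23 _ _ _
        have e2 : T u y y = T y y u := by rw [Φ.sym.s12, Φ.sym.s23]
        have e3 : T u y u = T y u u := Φ.sym.s12 _ _ _
        have e4 : T u u y = T y u u := by rw [Φ.sym.s23, Φ.sym.s12]
        simp only [map_add, map_smul, LinearMap.add_apply, LinearMap.smul_apply, smul_eq_mul, e1, e2, e3, e4]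
        ring)
    simpa using this
  apply hy
  apply hns
  intro v
  have h1 : T x x (v - T x x v • Φ.w) = 0 := by simp [Φ.hxw]
  have h2 := tang _ h1
  rw [map_sub, map_smul, Φ.sym.s23 y y Φ.w, y6'] at h2
  simpa using h2

end Frame
end CL

namespace CL
set_option linter.all false
open MvPolynomial

variable {K : Type*} [Field K] [IsAlgClosed K] [CharZero K]
variable {V : Type*} [AddCommGroup V] [Module K V]

theorem exists_good [FiniteDimensional K V] (T : Tri K V) (hT : T.Sym) {k : ℕ} (hk : 4 ≤ k)
    (hV : Module.finrank K V = k + 4) (hns : ∀ z, (∀ v, T z z v = 0) → z = 0)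
    (x : V) (hx0 : x ≠ 0) (hx : T x x x = 0)
    (hker : Module.finrank K (LinearMap.ker (T x)) ≤ 1) :
    ∃ (Φ : Frame T x k) (D : Cub k K), Φ.Data D ∧ D.κ ≠ 0 ∧ Prime D.Q ∧ Prime D.f := by
  obtain ⟨w0, hw0⟩ : ∃ w0, T x x w0 ≠ 0 := by
    by_contra h
    push Not at h
    exact hx0 (hns x h)
  let M := Submodule.span K {x} ⊔ LinearMap.ker (T x)
  have hM : Module.finrank K M ≤ 2 := by
    have h1 := Submodule.finrank_add_le_finrank_add_finrank (Submodule.span K {x}) (LinearMap.ker (T x))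
    have h2 := finrank_span_singleton (K := K) hx0
    change Module.finrank K ↥(Submodule.span K {x} ⊔ LinearMap.ker (T x)) ≤ 2
    omega
  obtain ⟨S, hS⟩ := Submodule.exists_isCompl M
  have hfr := Submodule.finrank_add_eq_of_isCompl hS
  obtain ⟨p0, hp0, hpz⟩ := PF.krull (K := K) (U := S) (k := 2) (by omega)
    ![fun u => T x x (S.subtype u), fun u => T x (S.subtype u) (S.subtype u)]
    (by
      intro j
      fin_cases j
      · exact PF.comp (PF.lin (T x x)) S.subtype
      · exact PF.comp (PF.quad (T x)) S.subtype)
    (by intro j; fin_cases j <;> simp)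
  have h1 : T x x (p0 : V) = 0 := hpz 0
  have h2 : T x (p0 : V) (p0 : V) = 0 := hpz 1
  obtain ⟨e, he, hpe⟩ : ∃ e, T x x e = 0 ∧ T x (p0 : V) e ≠ 0 := by
    by_contra h
    push Not at h
    apply hp0
    apply Subtype.ext
    refine Submodule.disjoint_def.mp hS.disjoint _ ?_ p0.2
    have : (p0 : V) = ((T x x w0)⁻¹ * T x p0 w0) • x + (p0 - ((T x x w0)⁻¹ * T x p0 w0) • x) := by abel
    rw [this]
    refine Submodule.add_mem_sup (Submodule.smul_mem _ _ (Submodule.mem_span_singleton_self x)) ?_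
    rw [LinearMap.mem_ker]
    refine LinearMap.ext fun v => ?_
    have h3 : T x x (v - ((T x x w0)⁻¹ * T x x v) • w0) = 0 := by
      simp; field_simp; ring
    have h4 := h _ h3
    simp only [map_sub, map_smul, smul_eq_mul, LinearMap.sub_apply, LinearMap.smul_apply,
      LinearMap.zero_apply] at h4 ⊢
    linear_combination h4
  obtain ⟨Φ0, hΦ0⟩ := exists_frame T hT hk hV x hx0 hx hker w0 hw0 p0 h1 h2 e he hpe
  obtain ⟨D0, hD0⟩ := Φ0.exists_data
  have hf0 := D0.f_ne_zero (Φ0.Q_prime hD0).ne_zero (Φ0.noSplit hk hV hns hD0)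
  obtain ⟨z0, hz0⟩ : ∃ z0, eval z0 D0.f ≠ 0 := by
    by_contra h
    push Not at h
    exact hf0 (MvPolynomial.funext fun z => by rw [h]; simp)
  obtain ⟨Φ, hΦ⟩ := exists_frame T hT hk hV x hx0 hx hker w0 hw0 (Φ0.pt 0 1 (eval z0 D0.Q) z0)
    (Φ0.x_pt _ _ _ _) (by rw [Φ0.q_pt hD0]; ring) Φ0.p Φ0.hxp (by
      have := (Φ0.pt_coord 0 1 (eval z0 D0.Q) z0).2.1
      rw [hT.s23]
      intro h0
      rw [h0] at this
      simp at this)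
  obtain ⟨D, hD⟩ := Φ.exists_data
  have hκ : D.κ ≠ 0 := by
    rw [hD.κ, hΦ, ← Φ0.eval_f hD0 0 z0]
    exact hz0
  have hQ := Φ.Q_prime hD
  exact ⟨Φ, D, hD, hκ, hQ, (D.f_irred hQ hκ (Φ.noSplit hk hV hns hD)).prime⟩

end CL

namespace CL
set_option linter.all false
open MvPolynomial

variable {K : Type*} [Field K] [IsAlgClosed K] [CharZero K]

theorem tri_line {V : Type*} [AddCommGroup V] [Module K V] {T : Tri K V} (hT : T.Sym) (y u : V) (t : K) :
    T (y + t • u) (y + t • u) (y + t • u)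
      = T y y y + 3 * T y y u * t + 3 * T y u u * t ^ 2 + T u u u * t ^ 3 := by
  have e1 : T y u y = T y y u := hT.s23 _ _ _
  have e2 : T u y y = T y y u := by rw [hT.s12, hT.s23]
  have e3 : T u y u = T y u u := hT.s12 _ _ _
  have e4 : T u u y = T y u u := by rw [hT.s23, hT.s12]
  simp only [map_add, map_smul, LinearMap.add_apply, LinearMap.smul_apply, smul_eq_mul, e1, e2, e3, e4]
  ring

variable {n : ℕ} {T : Tri K (Fin (n + 1) → K)} {F : MvPolynomial (Fin (n + 1)) K}

theorem F_squarefree (hn : 1 ≤ n) (hT : T.Sym) (hns : ∀ z, (∀ v, T z z v = 0) → z = 0)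
    (hF : F.IsHomogeneous 3) (hFT : ∀ y, eval y F = T y y y) : Squarefree F := by
  have hF0 : F ≠ 0 := by
    rintro rfl
    have : ∀ y : Fin (n + 1) → K, y = 0 := by
      intro y
      apply hns
      intro u
      have := lin_coeff_zero (a := (0 : Polynomial K)) (b := 0) (c := 0) (d := 0) (α := T y y y)
        (β := 3 * T y y u) (γ := 3 * T y u u) (δ := T u u u) (by simp) (by simp) (by simp) (by simp)
        (by intro t; rw [← tri_line hT, ← hFT]; simp)
      simpa using this
    have h1 := congrFun (this 1) 0
    simp at h1
  intro p hp
  obtain ⟨c, hc⟩ := hp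
  by_contra hu
  have hp0 : eval 0 p = 0 := by
    by_contra h
    refine hu (hom_factor (a := p) (b := p * c) (d := 3) ?_ ?_ h)
    · rw [← mul_assoc, ← hc]; exact hF0
    · rw [← mul_assoc, ← hc]; exact hF
  obtain ⟨y, hy, hyz⟩ := krull_zero (K := K) (N := n + 1) (k := 1) (by omega) (fun _ => p) (fun _ => hp0)
  apply hy
  apply hns
  intro u
  obtain ⟨a, ha⟩ := PF.line (PF.mv p LinearMap.id) y u
  obtain ⟨b, hb⟩ := PF.line (PF.mv c LinearMap.id) y u
  simp only [LinearMap.id_apply] at ha hb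
  have hpy := hyz 0
  have := lin_coeff_zero (a := a) (b := a * b) (c := 0) (d := 0) (α := T y y y)
    (β := 3 * T y y u) (γ := 3 * T y u u) (δ := T u u u) (by simp [ha, hpy]) (by simp [ha, hpy])
    (by simp) (by simp)
    (by
      intro t
      rw [← tri_line hT, ← hFT, hc]
      simp [ha, hb]
      ring)
  simpa using this

/-- rank condition -/
def RankAt (T : Tri K (Fin (n + 1) → K)) (r : ℕ) (x : Fin (n + 1) → K) : Prop :=
  ∃ a b : Fin r → (Fin (n + 1) → K), (Matrix.of fun i j => T x (a i) (b j)).det ≠ 0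

theorem rank_ker {x : Fin (n + 1) → K} (h : RankAt T n x) :
    Module.finrank K (LinearMap.ker (T x)) ≤ 1 := by
  obtain ⟨a, b, hab⟩ := h
  let Ψ : (Fin (n + 1) → K) →ₗ[K] (Fin n → K) := LinearMap.pi fun j => (T x).flip (b j)
  have hΨ : ∀ v j, Ψ v j = T x v (b j) := fun v j => rfl
  have hs : LinearMap.range Ψ = ⊤ := by
    have h1 : LinearIndependent K (fun i => Ψ (a i)) := by
      have := Matrix.linearIndependent_rows_of_det_ne_zero hab
      exact this
    have h2 := h1.span_eq_top_of_card_eq_finrank' (by simp)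
    rw [eq_top_iff, ← h2, Submodule.span_le]
    rintro _ ⟨i, rfl⟩
    exact ⟨a i, rfl⟩
  have h3 := LinearMap.finrank_range_add_finrank_ker Ψ
  rw [hs, finrank_top] at h3
  simp at h3
  have h4 : LinearMap.ker (T x) ≤ LinearMap.ker Ψ := by
    intro v hv
    rw [LinearMap.mem_ker] at hv ⊢
    ext j
    rw [hΨ, hv]; simp
  have := Submodule.finrank_mono h4
  omega

theorem rank_step (hn : 1 ≤ n) (hT : T.Sym) (hns : ∀ z, (∀ v, T z z v = 0) → z = 0)
    (hF : F.IsHomogeneous 3) (hFT : ∀ y, eval y F = T y y y) {r : ℕ} (hr : r < n)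
    {x0 : Fin (n + 1) → K} (hx0 : x0 ≠ 0) (hx : T x0 x0 x0 = 0) (h : RankAt T r x0) :
    ∃ x, x ≠ 0 ∧ T x x x = 0 ∧ RankAt T (r + 1) x := by
  by_contra hcon
  push Not at hcon
  obtain ⟨a, b, hab⟩ := h
  -- bordered matrices
  let M : (Fin (n+1) → K) → (Fin (n+1) → K) → (Fin (n+1) → K) → Matrix (Fin r ⊕ Fin 1) (Fin r ⊕ Fin 1) K :=
    fun x y y2 => Matrix.of fun i j => T x (Sum.elim a (fun _ => y) i) (Sum.elim b (fun _ => y2) j)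
  have hM : ∀ x y y2, T x x x = 0 → (M x y y2).det = 0 := by
    intro x y y2 hxx
    by_cases hx0' : x = 0
    · subst hx0'
      have : M 0 y y2 = 0 := by ext i j; simp [M]
      rw [this, Matrix.det_zero]
    · by_contra hd
      refine hcon x hx0' hxx ⟨Sum.elim a (fun _ => y) ∘ finSumFinEquiv.symm,
        Sum.elim b (fun _ => y2) ∘ finSumFinEquiv.symm, ?_⟩
      rw [← Matrix.det_submatrix_equiv_self finSumFinEquiv.symm] at hd
      exact hd
  let A : Matrix (Fin r) (Fin r) K := Matrix.of fun i j => T x0 (a i) (b j)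
  have hblock : ∀ x y y2, M x y y2 = Matrix.fromBlocks (Matrix.of fun i j => T x (a i) (b j))
      (Matrix.of fun i _ => T x (a i) y2) (Matrix.of fun _ j => T x y (b j))
      (Matrix.of fun _ _ => T x y y2) := by
    intro x y y2
    ext i j
    rcases i with i | i <;> rcases j with j | j <;> simp [M]
  let Ψ : (Fin (n + 1) → K) →ₗ[K] (Fin r → K) := LinearMap.pi fun j => (T x0).flip (b j)
  let N := LinearMap.ker Ψ
  have hNb : ∀ y ∈ N, ∀ j, T x0 y (b j) = 0 := fun y hy j => congrFun (LinearMap.mem_ker.mp hy) j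
  have hN : ∀ y ∈ N, ∀ y2, T x0 y y2 = 0 := by
    intro y hy y2
    have h1 := hM x0 y y2 hx
    rw [hblock] at h1
    have h2 : (Matrix.of fun (_ : Fin 1) j => T x0 y (b j)) = 0 := by
      ext i j; simp [hNb y hy j]
    rw [h2, Matrix.det_fromBlocks_zero₂₁] at h1
    rcases mul_eq_zero.mp h1 with h | h
    · exact absurd h hab
    · simpa using h
  have hNd : 2 ≤ Module.finrank K N := by
    have h3 := LinearMap.finrank_range_add_finrank_ker Ψ
    have h4 := Submodule.finrank_le (LinearMap.range Ψ)
    simp at h3 h4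
    change 2 ≤ Module.finrank K (LinearMap.ker Ψ)
    omega
  have key : ∀ y ∈ N, ∀ u, T x0 x0 u = 0 → T u y y = 0 := by
    intro y hy u hu
    -- the polynomial
    obtain ⟨G, hG⟩ : ∃ G : MvPolynomial (Fin (n + 1)) K, ∀ v, eval v G = (M v y y).det := by
      have : (fun v => (M v y y).det) ∈ PF K (Fin (n + 1) → K) := by
        simp only [Matrix.det_apply']
        refine PF.sum _ fun σ _ => PF.mul (PF.const _) ?_
        have := (PF K (Fin (n + 1) → K)).prod_mem (t := Finset.univ) (f := fun i => fun v => M v y y (σ i) i)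
          (fun i _ => PF.lin ((T.flip (Sum.elim a (fun _ => y) (σ i))).flip (Sum.elim b (fun _ => y) i)))
        convert this using 1
        ext v; simp
      exact PF.toMv this
    have hFG : F ∣ G := by
      obtain ⟨m, hm⟩ := null_one F G (fun v hv => by rw [hG]; exact hM v y y (by rw [← hFT]; exact hv))
      exact (F_squarefree hn hT hns hF hFT).isRadical m G hm
    obtain ⟨c, hc⟩ := hFG
    obtain ⟨c', hc'⟩ := PF.line (PF.mv c LinearMap.id) x0 u
    simp only [LinearMap.id_apply] at hc'
    let H : Matrix (Fin r ⊕ Fin 1) (Fin r ⊕ Fin 1) (Polynomial K) := Matrix.fromBlocks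
      (Matrix.of fun i j => Polynomial.C (T x0 (a i) (b j)) + Polynomial.X * Polynomial.C (T u (a i) (b j)))
      (Matrix.of fun i _ => Polynomial.C (T x0 (a i) y) + Polynomial.X * Polynomial.C (T u (a i) y))
      (Matrix.of fun _ j => Polynomial.C (T u y (b j)))
      (Matrix.of fun _ _ => Polynomial.C (T u y y))
    have hev : ∀ t, H.det.eval t = (H.map (Polynomial.eval t)).det := by
      intro t
      have := RingHom.map_det (Polynomial.evalRingHom t) H
      simpa using this
    have h1 : ∀ t, t * H.det.eval t = (M (x0 + t • u) y y).det := by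
      intro t
      rw [hev, hblock]
      have e : (H.map (Polynomial.eval t)) = Matrix.fromBlocks
          (Matrix.of fun i j => T (x0 + t • u) (a i) (b j))
          (Matrix.of fun i _ => T (x0 + t • u) (a i) y) (Matrix.of fun _ j => T u y (b j))
          (Matrix.of fun _ _ => T u y y) := by
        ext i j
        rcases i with i | i <;> rcases j with j | j <;> simp [H] <;> ring
      rw [e]
      have := Matrix.det_mul (Matrix.fromBlocks (1 : Matrix (Fin r) (Fin r) K) 0 0 (Matrix.of fun (_ _ : Fin 1) => t))
        (Matrix.fromBlocks
          (Matrix.of fun i j => T (x0 + t • u) (a i) (b j))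
          (Matrix.of fun i _ => T (x0 + t • u) (a i) y) (Matrix.of fun _ j => T u y (b j))
          (Matrix.of fun _ _ => T u y y))
      rw [Matrix.det_fromBlocks_zero₂₁, Matrix.det_one, one_mul, Matrix.det_fin_one] at this
      simp only [Matrix.of_apply] at this
      rw [← this, Matrix.fromBlocks_multiply]
      congr 1
      ext i j
      rcases i with i | i <;> rcases j with j | j <;>
        simp [hN y hy, Matrix.mul_apply]
    have h2 : Polynomial.X * H.det = Polynomial.X * (Polynomial.X * ((Polynomial.C (3 * T x0 u u)
        + Polynomial.C (T u u u) * Polynomial.X) * c')) := by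
      apply Polynomial.funext
      intro t
      rw [Polynomial.eval_mul, Polynomial.eval_X, h1, ← hG, hc, eval_mul, hFT, tri_line hT, hx, hu]
      simp [hc']
      ring
    have h3 := mul_left_cancel₀ Polynomial.X_ne_zero h2
    have h4 := congrArg (Polynomial.eval 0) h3
    rw [hev] at h4
    simp only [Polynomial.eval_mul, Polynomial.eval_X, zero_mul] at h4
    have e : (H.map (Polynomial.eval 0)) = Matrix.fromBlocks A 0
        (Matrix.of fun _ j => T u y (b j)) (Matrix.of fun _ _ => T u y y) := by
      ext i j
      rcases i with i | i <;> rcases j with j | j <;> simp [H, A, hT.s23 x0 _ y, hN y hy]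
    rw [e, Matrix.det_fromBlocks_zero₁₂] at h4
    rcases mul_eq_zero.mp h4 with h | h
    · exact absurd h hab
    · simpa using h
  obtain ⟨w, hw⟩ : ∃ w, T x0 x0 w ≠ 0 := by
    by_contra h
    push Not at h
    exact hx0 (hns x0 h)
  obtain ⟨y, hy, hyz⟩ := PF.krull (K := K) (U := N) (k := 1) (by omega)
    ![fun v => T w (N.subtype v) (N.subtype v)]
    (by intro j; fin_cases j; exact PF.comp (PF.quad (T w)) N.subtype)
    (by intro j; fin_cases j; simp)
  have hyw : T w (y : Fin (n+1) → K) y = 0 := hyz 0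
  apply hy
  apply Subtype.ext
  apply hns
  intro v
  have h3 : T x0 x0 (v - ((T x0 x0 w)⁻¹ * T x0 x0 v) • w) = 0 := by
    simp; field_simp; ring
  have h4 := key y y.2 _ h3
  rw [map_sub, map_smul, LinearMap.sub_apply, LinearMap.smul_apply, LinearMap.sub_apply, LinearMap.smul_apply, hyw] at h4
  rw [hT.s23, hT.s12]
  simpa using h4

theorem exists_generic (hn : 1 ≤ n) (hT : T.Sym) (hns : ∀ z, (∀ v, T z z v = 0) → z = 0)
    (hF : F.IsHomogeneous 3) (hFT : ∀ y, eval y F = T y y y) :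
    ∃ x, x ≠ 0 ∧ T x x x = 0 ∧ RankAt T n x := by
  have : ∀ r ≤ n, ∃ x, x ≠ 0 ∧ T x x x = 0 ∧ RankAt T r x := by
    intro r
    induction r with
    | zero =>
      intro _
      obtain ⟨y, hy, hyz⟩ := krull_zero (K := K) (N := n + 1) (k := 1) (by omega) (fun _ => F)
        (fun _ => by rw [hFT]; simp)
      exact ⟨y, hy, by rw [← hFT]; exact hyz 0, ⟨fun _ => 0, fun _ => 0, by simp⟩⟩
    | succ r ih =>
      intro hr
      obtain ⟨x, hx0, hx, h⟩ := ih (by omega)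
      exact rank_step hn hT hns hF hFT (by omega) hx0 hx h
  exact this n le_rfl

end CL

namespace CL
set_option linter.all false
open MvPolynomial

variable {K : Type*} [Field K] [IsAlgClosed K] [CharZero K]
variable {V : Type*} [AddCommGroup V] [Module K V]

/-- Irreducibility of a subset of a vector space, tested on polynomial functions. -/
def Irr (K : Type*) [Field K] {V : Type*} [AddCommGroup V] [Module K V] (S : Set V) : Prop :=
  ∀ g h : V → K, g ∈ PF K V → h ∈ PF K V → (∀ v ∈ S, g v * h v = 0) →
    (∀ v ∈ S, g v = 0) ∨ (∀ v ∈ S, h v = 0)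

theorem prime_ren {σ τ : Type*} (f : σ → τ) (hf : Function.Injective f) {p : MvPolynomial σ K}
    (hp : Prime p) : Prime (rename f p) := by
  let e : σ ≃ Set.range f := Equiv.ofInjective f hf
  have h1 : Prime (renameEquiv K e p) := (MulEquiv.prime_iff (renameEquiv K e)).mpr hp
  have h2 := (prime_rename_iff (Set.range f)).mpr h1
  have h3 : rename (Subtype.val : Set.range f → τ) (renameEquiv K e p) = rename f p := by
    rw [renameEquiv_apply, rename_rename]; rfl
  rwa [h3] at h2

/-- coordinates index -/
abbrev Ix (k : ℕ) := Fin 3 ⊕ Fin k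

noncomputable def rho (k : ℕ) (K : Type*) [Field K] : MvPolynomial (Ix k) K →ₐ[K] MvPolynomial (Ix k) K :=
  aeval (fun i => if i = Sum.inl 1 then 0 else X i)

theorem rho_dvd {k : ℕ} (a : MvPolynomial (Ix k) K) : X (Sum.inl 1) ∣ a - rho k K a := by
  induction a using MvPolynomial.induction_on with
  | C a => simp [rho, MvPolynomial.algebraMap_eq]
  | add p q hp hq =>
    have := dvd_add hp hq
    rw [map_add]
    convert this using 1; ring
  | mul_X p i hp =>
    have e : p * X i - rho k K (p * X i) = (p - rho k K p) * X i + rho k K p * (X i - rho k K (X i)) := by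
      rw [map_mul]; ring
    rw [e]
    refine dvd_add (Dvd.dvd.mul_right hp _) (Dvd.dvd.mul_left ?_ _)
    by_cases hi : i = Sum.inl 1
    · subst hi; simp [rho]
    · simp [rho, hi]

theorem rho_rename {k : ℕ} (Q : MvPolynomial (Fin k) K) :
    rho k K (rename Sum.inr Q) = rename Sum.inr Q := by
  rw [rho, aeval_rename]
  have : (fun i : Ix k => if i = Sum.inl 1 then (0 : MvPolynomial (Ix k) K) else X i) ∘ Sum.inr
      = fun i => X (Sum.inr i) := by ext1 i; simp
  rw [this, rename_eq_aeval]
  rfl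

theorem rho_y0 {k : ℕ} : rho k K (X (Sum.inl 1)) = 0 := by simp [rho]
theorem rho_y1 {k : ℕ} : rho k K (X (Sum.inl 2)) = X (Sum.inl 2) := by simp [rho]

namespace Cub
variable {k : ℕ}
noncomputable def qA (D : Cub k K) : MvPolynomial (Ix k) K :=
  X (Sum.inl 1) * X (Sum.inl 2) - rename Sum.inr D.Q

noncomputable def cA (D : Cub k K) : MvPolynomial (Ix k) K :=
  C D.κ * X (Sum.inl 2) ^ 3 + X (Sum.inl 2) ^ 2 * (C D.l0 * X (Sum.inl 1) + rename Sum.inr D.l1)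
  + X (Sum.inl 2) * (C D.m0 * X (Sum.inl 1) ^ 2 + rename Sum.inr D.m1 * X (Sum.inl 1)
    + rename Sum.inr D.m2)
  + (C D.n0 * X (Sum.inl 1) ^ 3 + rename Sum.inr D.n1 * X (Sum.inl 1) ^ 2
    + rename Sum.inr D.n2 * X (Sum.inl 1) + rename Sum.inr D.n3)

theorem rho_qA (D : Cub k K) : rho k K D.qA = - rename Sum.inr D.Q := by
  simp [qA, rho_y0, rho_rename]

theorem y0_not_dvd_qA (D : Cub k K) (hQ : Prime D.Q) : ¬ X (Sum.inl 1) ∣ D.qA := by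
  rintro ⟨a, ha⟩
  have := congrArg (rho k K) ha
  rw [rho_qA, map_mul, rho_y0, zero_mul, neg_eq_zero] at this
  exact hQ.ne_zero (rename_injective _ Sum.inr_injective (by rw [this, map_zero]))

theorem y0_prime : Prime (X (Sum.inl 1) : MvPolynomial (Ix k) K) := X_prime

theorem reg_q (D : Cub k K) (hQ : Prime D.Q) (h : MvPolynomial (Ix k) K)
    (hh : D.qA ∣ X (Sum.inl 1) * h) : D.qA ∣ h := by
  obtain ⟨a, ha⟩ := hh
  have h1 : X (Sum.inl 1) ∣ D.qA * a := ⟨h, ha.symm⟩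
  obtain ⟨a', rfl⟩ := (y0_prime.dvd_or_dvd h1).resolve_left (D.y0_not_dvd_qA hQ)
  refine ⟨a', mul_left_cancel₀ y0_prime.ne_zero ?_⟩
  rw [ha]; ring

theorem reg_qc (D : Cub k K) (hQ : Prime D.Q) (hκ : D.κ ≠ 0) (h a b : MvPolynomial (Ix k) K)
    (hh : X (Sum.inl 1) * h = D.qA * a + D.cA * b) : ∃ a' b', h = D.qA * a' + D.cA * b' := by
  have hQ' : Prime (rename Sum.inr D.Q : MvPolynomial (Ix k) K) :=
    prime_ren _ Sum.inr_injective hQ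
  have h1 := congrArg (rho k K) hh
  rw [map_mul, rho_y0, zero_mul, map_add, map_mul, map_mul, rho_qA] at h1
  have hc0 : ¬ rename Sum.inr D.Q ∣ rho k K D.cA := by
    rintro ⟨e, he⟩
    have := congrArg (eval (Sum.elim ![0, 0, 1] (fun _ => 0))) he
    have z0 : ∀ {d : ℕ} {g : MvPolynomial (Fin k) K}, g.IsHomogeneous (d + 1) →
        eval (fun _ => (0 : K)) g = 0 := fun {d} {g} hg => Frame.eval_zero_hom hg
    rw [eval_mul, eval_rename] at this
    simp [cA, rho_y0, rho_y1, rho_rename, eval_rename, Function.comp_def, -map_zero, z0 D.hQ, z0 D.hl1, z0 D.hm2, z0 D.hn3,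
      MvPolynomial.algebraMap_eq] at this
    have c0 : ∀ {d : ℕ} {g : MvPolynomial (Fin k) K}, g.IsHomogeneous (d + 1) →
        constantCoeff g = 0 := fun {d} {g} hg => by
      have h := z0 hg
      rwa [show (fun _ : Fin k => (0 : K)) = 0 from rfl, eval_zero] at h
    rw [c0 D.hQ, c0 D.hl1, c0 D.hm2, c0 D.hn3] at this
    exact hκ (by simpa using this)
  have h2 : rename Sum.inr D.Q ∣ rho k K D.cA * rho k K b := ⟨rho k K a, by linear_combination -h1⟩
  obtain ⟨t, ht⟩ := (hQ'.dvd_or_dvd h2).resolve_left hc0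
  obtain ⟨b1, hb1⟩ := rho_dvd b
  have hq : D.qA = X (Sum.inl 1) * X (Sum.inl 2) - rename Sum.inr D.Q := rfl
  have hb : b = - D.qA * t + X (Sum.inl 1) * (X (Sum.inl 2) * t + b1) := by
    rw [hq]; linear_combination hb1 + ht
  have h3 : X (Sum.inl 1) * (h - D.cA * (X (Sum.inl 2) * t + b1)) = D.qA * (a - D.cA * t) := by
    linear_combination hh + D.cA * hb
  obtain ⟨a', ha'⟩ := D.reg_q hQ _ ⟨_, h3⟩
  exact ⟨a', X (Sum.inl 2) * t + b1, by linear_combination ha'⟩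

end Cub

namespace Frame
variable {T : Tri K V} {x : V} {k : ℕ}

def ptA (Φ : Frame T x k) : (Ix k → K) →ₗ[K] V where
  toFun u := Φ.pt (u (Sum.inl 0)) (u (Sum.inl 1)) (u (Sum.inl 2)) (fun i => u (Sum.inr i))
  map_add' u v := by
    have : (fun i => (u + v) (Sum.inr i)) = (fun i => u (Sum.inr i)) + (fun i => v (Sum.inr i)) := rfl
    rw [pt, this]
    simp only [pt, Pi.add_apply, map_add, add_smul]
    abel
  map_smul' c u := by
    have : (fun i => (c • u) (Sum.inr i)) = c • (fun i => u (Sum.inr i)) := rfl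
    rw [pt, this]
    simp only [pt, Pi.smul_apply, map_smul, smul_add, mul_smul, smul_eq_mul, RingHom.id_apply]

theorem ptA_apply (Φ : Frame T x k) (u : Ix k → K) : Φ.ptA u =
    Φ.pt (u (Sum.inl 0)) (u (Sum.inl 1)) (u (Sum.inl 2)) (fun i => u (Sum.inr i)) := rfl

theorem eval_qA (Φ : Frame T x k) {D : Cub k K} (hD : Φ.Data D) (u : Ix k → K) :
    eval u D.qA = T x (Φ.ptA u) (Φ.ptA u) := by
  rw [ptA_apply, q_pt Φ hD]
  simp [Cub.qA, eval_rename, Function.comp_def]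

theorem eval_cA (Φ : Frame T x k) {D : Cub k K} (hD : Φ.Data D) (u : Ix k → K) :
    T (Φ.ptA u) (Φ.ptA u) (Φ.ptA u) = 3 * u (Sum.inl 0) * eval u D.qA + eval u D.cA := by
  rw [ptA_apply, c_pt Φ hD]
  simp [Cub.qA, Cub.cA, eval_rename, Function.comp_def]

theorem exists_ptA (Φ : Frame T x k) (v : V) (hv : T x x v = 0) : ∃ u, Φ.ptA u = v := by
  refine ⟨Sum.elim ![Φ.ξ v, 2 * T x Φ.p v, 2 * T x Φ.p' v] (Φ.cz v), ?_⟩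
  rw [ptA_apply]
  conv_rhs => rw [Φ.eq_pt v hv]
  rfl

/-- substitution -/
noncomputable def sub (D : Cub k K) : Ix k → MvPolynomial (Fin 2 ⊕ Fin k) K :=
  Sum.elim ![X (Sum.inl 1) * X (Sum.inl 0), X (Sum.inl 1), X (Sum.inl 1) * rename Sum.inr D.Q]
    (fun i => X (Sum.inl 1) * X (Sum.inr i))

theorem sub_pt (Φ : Frame T x k) (D : Cub k K) (y : Fin 2 ⊕ Fin k → K) :
    Φ.ptA (fun i => eval y (sub D i)) = y (Sum.inl 1) • Φ.pt (y (Sum.inl 0)) 1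
      (eval (fun i => y (Sum.inr i)) D.Q) (fun i => y (Sum.inr i)) := by
  have e : (fun i => eval y (sub D i)) = y (Sum.inl 1) • (Sum.elim ![y (Sum.inl 0), 1,
      (eval (fun i => y (Sum.inr i)) D.Q)] (fun i => y (Sum.inr i))) := by
    ext i
    rcases i with i | i
    · fin_cases i <;> simp [sub, eval_rename, Function.comp_def]
    · simp [sub]
  rw [e, map_smul, ptA_apply]
  rfl

/-- points with nonzero `y0` -/
theorem point_form (Φ : Frame T x k) {D : Cub k K} (hD : Φ.Data D) (u : Ix k → K)
    (h0 : u (Sum.inl 1) ≠ 0) (hq : eval u D.qA = 0) : ∃ y : Fin 2 ⊕ Fin k → K,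
      (fun i => eval y (sub D i)) = u ∧ y (Sum.inl 1) = u (Sum.inl 1) := by
  refine ⟨Sum.elim ![(u (Sum.inl 1))⁻¹ * u (Sum.inl 0), u (Sum.inl 1)]
    (fun i => (u (Sum.inl 1))⁻¹ * u (Sum.inr i)), ?_, rfl⟩
  ext i
  rcases i with i | i
  · fin_cases i
    · simp [sub, h0]
    · simp [sub]
    · simp [Cub.qA, eval_rename, Function.comp_def] at hq
      have hs := scl_eval D.Q (fun i => u (Sum.inr i)) (u (Sum.inl 1))⁻¹
      rw [scl_hom D.hQ] at hs
      simp at hs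
      simp [sub, eval_rename, Function.comp_def]
      have hs' : eval (fun i => (u (Sum.inl 1))⁻¹ * u (Sum.inr i)) D.Q =
        eval (fun i => u (Sum.inr i)) D.Q * ((u (Sum.inl 1)) ^ 2)⁻¹ := hs.symm
      rw [hs']
      field_simp
      linear_combination -hq
  · simp [sub, h0]

theorem irr_cone (Φ : Frame T x k) {D : Cub k K} (hD : Φ.Data D) (hκ : D.κ ≠ 0) (hQ : Prime D.Q)
    (hf : Prime D.f) : Irr K {v : V | T x x v = 0 ∧ T x v v = 0 ∧ T v v v = 0} := by
  intro g h hg hh hgh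
  obtain ⟨G, hG⟩ := PF.toMv (PF.comp hg Φ.ptA)
  obtain ⟨H, hH⟩ := PF.toMv (PF.comp hh Φ.ptA)
  have hf' : Prime (rename Sum.inr D.f : MvPolynomial (Fin 2 ⊕ Fin k) K) :=
    prime_ren _ Sum.inr_injective hf
  have hdvd : rename Sum.inr D.f ∣ bind₁ (sub D) G * bind₁ (sub D) H := by
    apply null_prime _ _ hf'
    intro y hy
    rw [eval_mul, eval_bind, eval_bind, hG, hH]
    apply hgh
    rw [eval_rename] at hy
    rw [Φ.sub_pt]
    refine ⟨by simp [Φ.x_pt], ?_, ?_⟩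
    · simp [Φ.q_pt hD]
    · have := Φ.eval_f hD (y (Sum.inl 0)) (fun i => y (Sum.inr i))
      simp only [map_smul, LinearMap.smul_apply, smul_eq_mul]
      rw [← this]
      have : eval (fun i => y (Sum.inr i)) D.f = 0 := hy
      rw [this]; ring
  have key : ∀ (g : V → K) (G : MvPolynomial (Ix k) K), (∀ u, eval u G = g (Φ.ptA u)) →
      rename Sum.inr D.f ∣ bind₁ (sub D) G →
      ∀ v ∈ {v : V | T x x v = 0 ∧ T x v v = 0 ∧ T v v v = 0}, g v = 0 := by
    intro g G hG hd v hv
    have h1 : ∀ u, eval u D.qA = 0 → eval u D.cA = 0 → eval u (X (Sum.inl 1) * G) = 0 := by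
      intro u hq hc
      rw [eval_mul, eval_X]
      by_cases h0 : u (Sum.inl 1) = 0
      · rw [h0, zero_mul]
      · obtain ⟨y, hy, hy1⟩ := Φ.point_form hD u h0 hq
        obtain ⟨e, he⟩ := hd
        have h2 := congrArg (eval y) he
        rw [eval_bind, hy, eval_mul, eval_rename] at h2
        have h3 := Φ.eval_cA hD u
        rw [hq, hc, ← hy, Φ.sub_pt, hy1] at h3
        simp only [map_smul, LinearMap.smul_apply, smul_eq_mul] at h3
        rw [← Φ.eval_f hD] at h3
        have h4 : eval (fun i => y (Sum.inr i)) D.f = 0 := by simpa [h0] using h3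
        have h5 : eval (y ∘ Sum.inr) D.f = 0 := h4
        rw [h2, h5]; simp
    obtain ⟨N, a, b, hab⟩ := null_two D.qA D.cA _ h1
    rw [mul_pow] at hab
    have h2 : ∀ M : ℕ, (∃ a b, X (Sum.inl 1) ^ M * G ^ N = D.qA * a + D.cA * b) →
        ∃ a b, G ^ N = D.qA * a + D.cA * b := by
      intro M
      induction M with
      | zero => rintro ⟨a, b, h⟩; exact ⟨a, b, by simpa using h⟩
      | succ M ih =>
        rintro ⟨a, b, h⟩
        apply ih
        exact D.reg_qc hQ hκ _ a b (by rw [← h]; ring)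
    obtain ⟨a, b, hab⟩ := h2 N ⟨a, b, hab⟩
    obtain ⟨u, rfl⟩ := Φ.exists_ptA v hv.1
    have h3 := congrArg (eval u) hab
    have hq : eval u D.qA = 0 := by rw [Φ.eval_qA hD]; exact hv.2.1
    have hc : eval u D.cA = 0 := by
      have := Φ.eval_cA hD u
      rw [hv.2.2, hq] at this
      simpa using this.symm
    rw [eval_pow, eval_add, eval_mul, eval_mul, hq, hc, hG] at h3
    simp only [zero_mul, add_zero] at h3
    exact eq_zero_of_pow_eq_zero h3
  rcases hf'.dvd_or_dvd hdvd with h1 | h1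
  · left; exact key g G hG h1
  · right; exact key h H hH h1

theorem irr_quad (Φ : Frame T x k) {D : Cub k K} (hD : Φ.Data D) (hQ : Prime D.Q) :
    Irr K {v : V | T x x v = 0 ∧ T x v v = 0} := by
  intro g h hg hh hgh
  obtain ⟨G, hG⟩ := PF.toMv (PF.comp hg Φ.ptA)
  obtain ⟨H, hH⟩ := PF.toMv (PF.comp hh Φ.ptA)
  have hz : bind₁ (sub D) G * bind₁ (sub D) H = 0 := by
    apply MvPolynomial.funext
    intro y
    rw [eval_mul, eval_bind, eval_bind, hG, hH, map_zero]
    apply hgh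
    rw [Φ.sub_pt]
    refine ⟨by simp [Φ.x_pt], ?_⟩
    simp [Φ.q_pt hD]
  have key : ∀ (g : V → K) (G : MvPolynomial (Ix k) K), (∀ u, eval u G = g (Φ.ptA u)) →
      bind₁ (sub D) G = 0 → ∀ v ∈ {v : V | T x x v = 0 ∧ T x v v = 0}, g v = 0 := by
    intro g G hG hd v hv
    have h1 : ∀ u, eval u D.qA = 0 → eval u (X (Sum.inl 1) * G) = 0 := by
      intro u hq
      rw [eval_mul, eval_X]
      by_cases h0 : u (Sum.inl 1) = 0
      · rw [h0, zero_mul]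
      · obtain ⟨y, hy, hy1⟩ := Φ.point_form hD u h0 hq
        have h2 := congrArg (eval y) hd
        rw [eval_bind, hy, map_zero] at h2
        rw [h2, mul_zero]
    obtain ⟨N, hab⟩ := null_one D.qA _ h1
    rw [mul_pow] at hab
    have h2 : ∀ M : ℕ, D.qA ∣ X (Sum.inl 1) ^ M * G ^ N → D.qA ∣ G ^ N := by
      intro M
      induction M with
      | zero => intro h; simpa using h
      | succ M ih =>
        intro h
        apply ih
        apply D.reg_q hQ
        rwa [← mul_assoc, ← pow_succ']
    obtain ⟨a, hab⟩ := h2 N hab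
    obtain ⟨u, rfl⟩ := Φ.exists_ptA v hv.1
    have h3 := congrArg (eval u) hab
    have hq : eval u D.qA = 0 := by rw [Φ.eval_qA hD]; exact hv.2
    rw [eval_pow, eval_mul, hq, hG, zero_mul] at h3
    exact eq_zero_of_pow_eq_zero h3
  rcases mul_eq_zero.mp hz with h1 | h1
  · left; exact key g G hG h1
  · right; exact key h H hH h1

theorem irr_tan (Φ : Frame T x k) : Irr K {v : V | T x x v = 0} := by
  intro g h hg hh hgh
  obtain ⟨G, hG⟩ := PF.toMv (PF.comp hg Φ.ptA)
  obtain ⟨H, hH⟩ := PF.toMv (PF.comp hh Φ.ptA)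
  have hz : G * H = 0 := by
    apply MvPolynomial.funext
    intro u
    rw [eval_mul, hG, hH, map_zero]
    apply hgh
    rw [ptA_apply]; exact Φ.x_pt _ _ _ _
  rcases mul_eq_zero.mp hz with h1 | h1
  · left; intro v hv
    obtain ⟨u, rfl⟩ := Φ.exists_ptA v hv
    rw [← hG, h1, map_zero]
  · right; intro v hv
    obtain ⟨u, rfl⟩ := Φ.exists_ptA v hv
    rw [← hH, h1, map_zero]

end Frame
end CL

namespace CL
set_option linter.all false
open MvPolynomial

variable {K : Type*} [Field K] [IsAlgClosed K] [CharZero K]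

theorem pderiv_swap {σ : Type*} (i j : σ) (p : MvPolynomial σ K) :
    pderiv i (pderiv j p) = pderiv j (pderiv i p) := by
  classical
  have h : ⁅pderiv (R := K) i, pderiv (R := K) j⁆ = 0 := by
    apply MvPolynomial.derivation_ext
    intro l
    rw [Derivation.commutator_apply]
    simp only [pderiv_X, Derivation.zero_apply]
    by_cases h1 : l = j <;> by_cases h2 : l = i <;> simp [h1, h2, Pi.single_apply, apply_ite (pderiv (R := K) _)]
  have h1 := congrArg (fun d => d p) h
  simp only [Derivation.commutator_apply, Derivation.zero_apply] at h1
  exact sub_eq_zero.mp h1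

theorem euler_eval {m d : ℕ} {g : MvPolynomial (Fin m) K} (hg : g.IsHomogeneous d) (y : Fin m → K) :
    ∑ i, y i * eval y (pderiv i g) = d * eval y g := by
  have := congrArg (eval y) hg.sum_X_mul_pderiv
  simpa [map_sum] using this

theorem exists_tri {m : ℕ} {F : MvPolynomial (Fin m) K} (hF : F.IsHomogeneous 3) :
    ∃ T : Tri K (Fin m → K), T.Sym ∧ (∀ y, eval y F = T y y y) ∧
      ∀ y i, eval y (pderiv i F) = 3 * T y y (Pi.single i 1) := by
  classical
  let M : Fin m → Fin m → Fin m → K := fun i j k => eval 0 (pderiv i (pderiv j (pderiv k F)))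
  have M1 : ∀ i j k, M i j k = M j i k := fun i j k => by simp only [M]; rw [pderiv_swap]
  have M2 : ∀ i j k, M i j k = M i k j := fun i j k => by simp only [M]; rw [pderiv_swap j k]
  have hM : ∀ y i j k, eval y (pderiv i (pderiv j (pderiv k F))) = M i j k := by
    intro y i j k
    have h : (pderiv i (pderiv j (pderiv k F))).IsHomogeneous 0 := hF.pderiv.pderiv.pderiv
    have h' := (totalDegree_eq_zero_iff_eq_C.mp (Nat.le_zero.mp h.totalDegree_le))
    simp only [M]
    rw [h']; simp
  let T : Tri K (Fin m → K) := ∑ i, (LinearMap.proj i : (Fin m → K) →ₗ[K] K).smulRight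
    (∑ j, (LinearMap.proj j : (Fin m → K) →ₗ[K] K).smulRight
      (∑ k, (M i j k / 6) • (LinearMap.proj k : (Fin m → K) →ₗ[K] K)))
  have hT : ∀ a b c, T a b c = ∑ i, ∑ j, ∑ k, a i * (b j * (M i j k / 6 * c k)) := by
    intro a b c
    simp only [T, LinearMap.sum_apply, LinearMap.smulRight_apply, LinearMap.smul_apply,
      LinearMap.proj_apply, smul_eq_mul, Finset.mul_sum]
  have e1 : ∀ y j k, eval y (pderiv j (pderiv k F)) = ∑ i, y i * M i j k := by
    intro y j k
    have := euler_eval (g := pderiv j (pderiv k F)) (d := 1) (hF.pderiv.pderiv) y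
    simp only [hM] at this
    rw [this]; simp
  have e2 : ∀ y k, 2 * eval y (pderiv k F) = ∑ j, ∑ i, y j * (y i * M i j k) := by
    intro y k
    have := euler_eval (g := pderiv k F) (d := 2) (hF.pderiv) y
    simp only [e1, Finset.mul_sum] at this
    rw [this]; norm_num
  have e3 : ∀ y k, eval y (pderiv k F) = 3 * T y y (Pi.single k 1) := by
    intro y k
    rw [hT, Finset.sum_comm]
    have : (2:K) * eval y (pderiv k F) = 2 * (3 * ∑ j, ∑ i, ∑ l, y i * (y j * (M i j l / 6 * (Pi.single k 1 : Fin m → K) l))) := by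
      rw [e2, ← mul_assoc, Finset.mul_sum]
      refine Finset.sum_congr rfl fun j _ => ?_
      rw [Finset.mul_sum]
      refine Finset.sum_congr rfl fun i _ => ?_
      rw [Finset.sum_eq_single k]
      · simp; ring
      · intro b _ hb; simp [hb]
      · simp
    exact mul_left_cancel₀ two_ne_zero this
  refine ⟨T, ⟨?_, ?_⟩, ?_, e3⟩
  · intro a b c
    rw [hT, hT, Finset.sum_comm]
    refine Finset.sum_congr rfl fun j _ => Finset.sum_congr rfl fun i _ => Finset.sum_congr rfl fun k _ => ?_
    rw [M1 i j k]; ring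
  · intro a b c
    rw [hT, hT]
    refine Finset.sum_congr rfl fun j _ => ?_
    rw [Finset.sum_comm]
    refine Finset.sum_congr rfl fun i _ => Finset.sum_congr rfl fun k _ => ?_
    rw [M2 j k i]; ring
  · intro y
    have h := euler_eval hF y
    simp only [e3] at h
    have h2 : ∑ i, y i * (3 * T y y (Pi.single i 1)) = 3 * T y y y := by
      have h3 : T y y y = ∑ i, y i * T y y (Pi.single i 1) := by
        conv_lhs => rw [show T y y y = T y y (∑ i, y i • Pi.single i (1:K)) by congr 1; exact pi_eq_sum_univ' y]
        rw [map_sum]; simp only [map_smul, smul_eq_mul]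
      rw [h3, Finset.mul_sum]
      exact Finset.sum_congr rfl fun i _ => by ring
    rw [h2] at h
    exact (mul_left_cancel₀ (by norm_num) h).symm

theorem tri_nonsing {m : ℕ} {F : MvPolynomial (Fin m) K} {T : Tri K (Fin m → K)}
    (h3 : ∀ y i, eval y (pderiv i F) = 3 * T y y (Pi.single i 1))
    (hns : ∀ z, (∀ i, eval z (pderiv i F) = 0) → z = 0) :
    ∀ z, (∀ v, T z z v = 0) → z = 0 := fun z hz => hns z fun i => by rw [h3, hz, mul_zero]

end CL

namespace CL
set_option linter.all false
open MvPolynomial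

variable {K : Type*} [Field K] [IsAlgClosed K] [CharZero K]
variable {V : Type*} [AddCommGroup V] [Module K V]

theorem PF.nonvan {g h : V → K} (hg : g ∈ PF K V) (hh : h ∈ PF K V) {y u : V} (hy : g y ≠ 0)
    (hu : h u ≠ 0) : ∃ v, g v * h v ≠ 0 := by
  obtain ⟨p, hp⟩ := PF.line hg y (u - y)
  obtain ⟨r, hr⟩ := PF.line hh y (u - y)
  have hp0 : p ≠ 0 := by
    rintro rfl
    have := hp 0
    simp at this; exact hy this.symm
  have hr0 : r ≠ 0 := by
    rintro rfl
    have := hr 1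
    simp at this; exact hu this.symm
  obtain ⟨t, ht⟩ : ∃ t, (p * r).eval t ≠ 0 := by
    by_contra! hcon
    exact mul_ne_zero hp0 hr0 (Polynomial.funext fun t => by rw [hcon]; simp)
  refine ⟨y + t • (u - y), ?_⟩
  rwa [Polynomial.eval_mul, hp, hr] at ht

theorem PF.nonvan_prod {ι : Type*} (s : Finset ι) (g : ι → V → K) (hg : ∀ i ∈ s, g i ∈ PF K V)
    (h : ∀ i ∈ s, ∃ v, g i v ≠ 0) : ∃ v, ∀ i ∈ s, g i v ≠ 0 := by
  classical
  suffices h : ∃ G ∈ PF K V, (∃ v, G v ≠ 0) ∧ ∀ v, G v ≠ 0 → ∀ i ∈ s, g i v ≠ 0 by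
    obtain ⟨G, _, ⟨v, hv⟩, h2⟩ := h
    exact ⟨v, h2 v hv⟩
  induction s using Finset.induction_on with
  | empty => exact ⟨fun _ => 1, PF.const 1, ⟨0, one_ne_zero⟩, by simp⟩
  | insert a s ha ih =>
    obtain ⟨G, hG, ⟨v, hv⟩, h2⟩ := ih (fun i hi => hg i (Finset.mem_insert_of_mem hi))
      (fun i hi => h i (Finset.mem_insert_of_mem hi))
    obtain ⟨u, hu⟩ := h a (Finset.mem_insert_self _ _)
    obtain ⟨w, hw⟩ := PF.nonvan hG (hg a (Finset.mem_insert_self _ _)) hv hu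
    refine ⟨fun v => G v * g a v, PF.mul hG (hg a (Finset.mem_insert_self _ _)), ⟨w, hw⟩, ?_⟩
    intro v hv i hi
    rcases Finset.mem_insert.mp hi with rfl | hi
    · exact right_ne_zero_of_mul hv
    · exact h2 v (left_ne_zero_of_mul hv) i hi

section core
variable {B : V →ₗ[K] V →ₗ[K] K} {T : Tri K V}

theorem core3 (hB : ∀ a b, B a b = B b a) (hT : T.Sym) (v1 v2 v : V)
    (hli : ∀ t z : K, t • v2 + z • v = 0 → t = 0) (hv : B v v = 1) (P : Finset V)
    (hP : ∀ p ∈ P, (∃ t z : K, p = v1 + t • v2 + z • v) ∧ B p p = 0 ∧ T p p p = 0)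
    (hinj : ∀ p ∈ P, ∀ p' ∈ P, ∀ z : K, p - p' = z • v → p = p')
    (hall : ∀ t z : K, ∀ u, u = v1 + t • v2 + z • v → B u u = 0 → T u u u = 0 → u ∈ P) :
    P.card ≤ 6 := by
  classical
  let b : Polynomial K := Polynomial.C (2 * B v1 v) + Polynomial.C (2 * B v2 v) * Polynomial.X
  let c : Polynomial K := Polynomial.C (B v1 v1) + Polynomial.C (2 * B v1 v2) * Polynomial.X
    + Polynomial.C (B v2 v2) * Polynomial.X ^ 2
  let γ : Polynomial K := Polynomial.C (T v v v)
  let α : Polynomial K := Polynomial.C (3 * T v1 v v) + Polynomial.C (3 * T v2 v v) * Polynomial.X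
  let β : Polynomial K := Polynomial.C (3 * T v1 v1 v) + Polynomial.C (6 * T v1 v2 v) * Polynomial.X
    + Polynomial.C (3 * T v2 v2 v) * Polynomial.X ^ 2
  let δ : Polynomial K := Polynomial.C (T v1 v1 v1) + Polynomial.C (3 * T v1 v1 v2) * Polynomial.X
    + Polynomial.C (3 * T v1 v2 v2) * Polynomial.X ^ 2 + Polynomial.C (T v2 v2 v2) * Polynomial.X ^ 3
  let A : Polynomial K := γ * (b ^ 2 - c) - α * b + β
  let E : Polynomial K := γ * b * c - α * c + δ
  let N : Polynomial K := E ^ 2 - b * A * E + c * A ^ 2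
  have hb : b.natDegree ≤ 1 := by simp only [b]; compute_degree
  have hc : c.natDegree ≤ 2 := by simp only [c]; compute_degree
  have hγ : γ.natDegree ≤ 0 := by simp only [γ]; compute_degree
  have hα : α.natDegree ≤ 1 := by simp only [α]; compute_degree
  have hβ : β.natDegree ≤ 2 := by simp only [β]; compute_degree
  have hδ : δ.natDegree ≤ 3 := by simp only [δ]; compute_degree
  have mulle : ∀ {p q : Polynomial K} {i j m : ℕ}, p.natDegree ≤ i → q.natDegree ≤ j → i + j ≤ m →
      (p * q).natDegree ≤ m := fun h1 h2 h3 =>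
    (Polynomial.natDegree_mul_le.trans (add_le_add h1 h2)).trans h3
  have hbc : (b ^ 2 - c).natDegree ≤ 2 :=
    (Polynomial.natDegree_sub_le_of_le (m := 2) (by rw [sq]; exact mulle hb hb le_rfl) hc).trans (by simp)
  have hA : A.natDegree ≤ 2 :=
    (Polynomial.natDegree_add_le_of_degree_le ((Polynomial.natDegree_sub_le_of_le
      (mulle hγ hbc (m := 2) (by simp)) (mulle hα hb (m := 2) le_rfl)).trans (by simp)) hβ)
  have hE : E.natDegree ≤ 3 := by
    refine (Polynomial.natDegree_add_le_of_degree_le ((Polynomial.natDegree_sub_le_of_le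
      (mulle (mulle hγ hb le_rfl) hc le_rfl) (mulle hα hc le_rfl)).trans (by simp)) hδ)
  have hN : N.natDegree ≤ 6 := by
    refine (Polynomial.natDegree_add_le_of_degree_le ((Polynomial.natDegree_sub_le_of_le (m := 6) (n := 6)
      (by rw [sq]; exact mulle hE hE le_rfl) (mulle (mulle hb hA le_rfl) hE le_rfl)).trans (by simp))
      (by rw [sq]; exact mulle hc (mulle hA hA le_rfl) le_rfl))
  have hBu : ∀ t z : K, ∀ u, u = v1 + t • v2 + z • v → B u u = z ^ 2 + b.eval t * z + c.eval t := by
    rintro t z u rfl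
    simp only [map_add, map_smul, LinearMap.add_apply, LinearMap.smul_apply, smul_eq_mul, hv,
      hB v v1, hB v v2, hB v2 v1, b, c]
    simp
    ring
  have hTu : ∀ t z : K, ∀ u, u = v1 + t • v2 + z • v →
      T u u u = T v v v * z ^ 3 + α.eval t * z ^ 2 + β.eval t * z + δ.eval t := by
    rintro t z u rfl
    rw [tri_line hT, tri_line hT]
    simp only [map_add, map_smul, LinearMap.add_apply, LinearMap.smul_apply, smul_eq_mul, α, β, δ,
      hT.s12 v2 v1 v]
    simp
    ring
  have hAE : ∀ t z : K, ∀ u, u = v1 + t • v2 + z • v → B u u = 0 → T u u u = A.eval t * z + E.eval t := by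
    intro t z u hu h0
    rw [hBu t z u hu] at h0
    rw [hTu t z u hu]
    simp only [A, E, γ, Polynomial.eval_add, Polynomial.eval_mul, Polynomial.eval_sub,
      Polynomial.eval_pow, Polynomial.eval_C]
    linear_combination (T v v v * z + α.eval t - T v v v * b.eval t) * h0
  have hNe : ∀ t, N.eval t = E.eval t ^ 2 - b.eval t * A.eval t * E.eval t + c.eval t * A.eval t ^ 2 := by
    intro t; simp [N]
  by_cases hN0 : N = 0
  · exfalso
    have key : ∀ t : K, ∃ z : K, v1 + t • v2 + z • v ∈ P := by
      intro t
      have h0 := hNe t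
      rw [hN0, Polynomial.eval_zero] at h0
      suffices ∃ z : K, z ^ 2 + b.eval t * z + c.eval t = 0 ∧ A.eval t * z + E.eval t = 0 by
        obtain ⟨z, h1, h2⟩ := this
        have h3 : B (v1 + t • v2 + z • v) (v1 + t • v2 + z • v) = 0 := by rw [hBu t z _ rfl, h1]
        exact ⟨z, hall t z _ rfl h3 (by rw [hAE t z _ rfl h3, h2])⟩
      by_cases hA0 : A.eval t = 0
      · rw [hA0] at h0
        have hE0 : E.eval t = 0 := by
          have : E.eval t ^ 2 = 0 := by linear_combination -h0
          exact eq_zero_of_pow_eq_zero this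
        obtain ⟨z, hz⟩ := IsAlgClosed.exists_root (Polynomial.X ^ 2 + Polynomial.C (b.eval t) * Polynomial.X
          + Polynomial.C (c.eval t)) (by
            have : (Polynomial.X ^ 2 + Polynomial.C (b.eval t) * Polynomial.X
              + Polynomial.C (c.eval t)).degree = 2 := by compute_degree!
            rw [this]; exact two_ne_zero)
        exact ⟨z, by simpa using hz, by rw [hA0, hE0]; ring⟩
      · refine ⟨- E.eval t / A.eval t, ?_, ?_⟩
        · field_simp
          linear_combination -h0
        · field_simp; ring
    choose z hz using key
    have hinj : Function.Injective fun t : K => (⟨_, hz t⟩ : P) := by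
      intro t s hts
      have h1 : v1 + t • v2 + z t • v = v1 + s • v2 + z s • v := congrArg Subtype.val hts
      have : (t - s) • v2 + (z t - z s) • v = 0 := by
        rw [sub_smul, sub_smul]
        have := sub_eq_zero.mpr h1
        rw [← this]; abel
      exact sub_eq_zero.mp (hli _ _ this)
    exact not_injective_infinite_finite _ hinj
  · choose! t z htz using fun p hp => (hP p hp).1
    have hti : Set.InjOn t P := by
      intro p hp p' hp' h
      refine hinj p hp p' hp' (z p - z p') ?_
      conv_lhs => rw [htz p hp, htz p' hp', h]
      rw [sub_smul]; abel
    by_contra hcard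
    rw [not_le, ← Finset.card_image_of_injOn hti] at hcard
    refine hN0 (Polynomial.eq_zero_of_natDegree_lt_card_of_eval_eq_zero' N (P.image t) ?_ (hN.trans_lt hcard))
    intro s hs
    obtain ⟨p, hp, rfl⟩ := Finset.mem_image.mp hs
    have h1 := hBu _ _ p (htz p hp)
    have h2 := hAE _ _ p (htz p hp) (hP p hp).2.1
    rw [(hP p hp).2.1] at h1
    rw [(hP p hp).2.2] at h2
    rw [hNe]
    have h3 : E.eval (t p) = - (A.eval (t p) * z p) := by linear_combination -h2
    rw [h3]
    linear_combination - A.eval (t p) ^ 2 * h1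

theorem core2 (hB : ∀ a b, B a b = B b a) (hT : T.Sym) (v1 v2 : V)
    (hli : v2 ≠ 0) (P : Finset V)
    (hP : ∀ p ∈ P, (∃ t : K, p = v1 + t • v2) ∧ B p p = 0 ∧ T p p p = 0)
    (hall : ∀ t : K, ∀ u, u = v1 + t • v2 → B u u = 0 → T u u u = 0 → u ∈ P) :
    P.card ≤ 6 := by
  classical
  let c : Polynomial K := Polynomial.C (B v1 v1) + Polynomial.C (2 * B v1 v2) * Polynomial.X
    + Polynomial.C (B v2 v2) * Polynomial.X ^ 2
  let δ : Polynomial K := Polynomial.C (T v1 v1 v1) + Polynomial.C (3 * T v1 v1 v2) * Polynomial.X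
    + Polynomial.C (3 * T v1 v2 v2) * Polynomial.X ^ 2 + Polynomial.C (T v2 v2 v2) * Polynomial.X ^ 3
  have hc : c.natDegree ≤ 6 := by simp only [c]; compute_degree!
  have hδ : δ.natDegree ≤ 6 := by simp only [δ]; compute_degree!
  have hBu : ∀ t : K, ∀ u, u = v1 + t • v2 → B u u = c.eval t := by
    rintro t u rfl
    simp only [map_add, map_smul, LinearMap.add_apply, LinearMap.smul_apply, smul_eq_mul,
      hB v2 v1, c]
    simp
    ring
  have hTu : ∀ t : K, ∀ u, u = v1 + t • v2 → T u u u = δ.eval t := by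
    rintro t u rfl
    rw [tri_line hT]
    simp [δ]
  choose! t ht using fun p hp => (hP p hp).1
  have hti : Set.InjOn t P := by
    intro p hp p' hp' h
    rw [ht p hp, ht p' hp', h]
  by_contra hcard
  rw [not_le, ← Finset.card_image_of_injOn hti] at hcard
  have c0 : c = 0 := by
    refine (Polynomial.eq_zero_of_natDegree_lt_card_of_eval_eq_zero' c (P.image t) ?_ (hc.trans_lt hcard))
    intro s hs
    obtain ⟨p, hp, rfl⟩ := Finset.mem_image.mp hs
    rw [← hBu _ p (ht p hp), (hP p hp).2.1]
  have δ0 : δ = 0 := by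
    refine (Polynomial.eq_zero_of_natDegree_lt_card_of_eval_eq_zero' δ (P.image t) ?_ (hδ.trans_lt hcard))
    intro s hs
    obtain ⟨p, hp, rfl⟩ := Finset.mem_image.mp hs
    rw [← hTu _ p (ht p hp), (hP p hp).2.2]
  have hz : ∀ t : K, v1 + t • v2 ∈ P := fun t => hall t _ rfl (by rw [hBu t _ rfl, c0]; simp)
    (by rw [hTu t _ rfl, δ0]; simp)
  have hinj : Function.Injective fun t : K => (⟨_, hz t⟩ : P) := by
    intro t s hts
    have h1 : v1 + t • v2 = v1 + s • v2 := congrArg Subtype.val hts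
    exact smul_left_injective K hli (add_left_cancel h1)
  exact not_injective_infinite_finite _ hinj

theorem normal (φ : V →ₗ[K] K) (U : Submodule K V) (P : Finset V)
    (hPU : ∀ p ∈ P, p ∈ U) (hpair : ∀ p ∈ P, ∀ p' ∈ P, p ∈ Submodule.span K {p'} → p = p')
    (hq : ∀ p ∈ P, B p p = 0) (hc : ∀ p ∈ P, T p p p = 0)
    (hall : ∀ u ∈ U, u ≠ 0 → B u u = 0 → T u u u = 0 → ∃ p ∈ P, u ∈ Submodule.span K {p})
    (hφ : ∀ p ∈ P, φ p ≠ 0) :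
    ∃ P' : Finset V, P'.card = P.card ∧ (∀ p ∈ P', p ∈ U ∧ φ p = 1 ∧ B p p = 0 ∧ T p p p = 0 ∧
      ∃ q ∈ P, p ∈ Submodule.span K {q}) ∧
      ∀ u ∈ U, φ u = 1 → B u u = 0 → T u u u = 0 → u ∈ P' := by
  classical
  refine ⟨P.image fun p => (φ p)⁻¹ • p, Finset.card_image_of_injOn ?_, ?_, ?_⟩
  · intro p hp p' hp' h
    refine hpair p hp p' hp' ?_
    rw [Submodule.mem_span_singleton]
    refine ⟨φ p * (φ p')⁻¹, ?_⟩
    have h' : (φ p)⁻¹ • p = (φ p')⁻¹ • p' := h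
    rw [mul_smul, ← h', smul_smul, mul_inv_cancel₀ (hφ p hp), one_smul]
  · intro q hq'
    obtain ⟨p, hp, rfl⟩ := Finset.mem_image.mp hq'
    refine ⟨U.smul_mem _ (hPU p hp), by simp [hφ p hp], by simp [hq p hp], by simp [hc p hp], p, hp, ?_⟩
    exact Submodule.smul_mem _ _ (Submodule.mem_span_singleton_self p)
  · intro u hu h1 h2 h3
    have hu0 : u ≠ 0 := by rintro rfl; simp at h1
    obtain ⟨p, hp, hup⟩ := hall u hu hu0 h2 h3
    obtain ⟨a, rfl⟩ := Submodule.mem_span_singleton.mp hup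
    refine Finset.mem_image.mpr ⟨p, hp, ?_⟩
    rw [map_smul, smul_eq_mul] at h1
    show (φ p)⁻¹ • p = a • p
    congr 1
    exact (eq_inv_of_mul_eq_one_left h1).symm

theorem exists_notMem {m : ℕ} (U : Submodule K V) [FiniteDimensional K V] (s : Fin m → V)
    (h : m < Module.finrank K U) : ∃ u ∈ U, u ∉ Submodule.span K (Set.range s) := by
  by_contra! hcon
  have h1 := Submodule.finrank_mono (show U ≤ Submodule.span K (Set.range s) from hcon)
  have h2 := finrank_range_le_card (R := K) s
  rw [Fintype.card_fin] at h2
  exact absurd (h1.trans h2) (not_le.mpr h)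

theorem deg_le [FiniteDimensional K V] (hB : ∀ a b, B a b = B b a) (hT : T.Sym) (U : Submodule K V)
    (P : Finset V)
    (hP0 : ∀ p ∈ P, p ≠ 0)
    (hPU : ∀ p ∈ P, p ∈ U) (hpair : ∀ p ∈ P, ∀ p' ∈ P, p ∈ Submodule.span K {p'} → p = p')
    (hq : ∀ p ∈ P, B p p = 0) (hc : ∀ p ∈ P, T p p p = 0)
    (hall : ∀ u ∈ U, u ≠ 0 → B u u = 0 → T u u u = 0 → ∃ p ∈ P, u ∈ Submodule.span K {p}) :
    P.card ≤ 6 := by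
  classical
  haveI : Infinite K := IsAlgClosed.instInfinite
  have hBU : (fun u : U => B u u) ∈ PF K U := PF.comp (PF.quad B) U.subtype
  have hTU : (fun u : U => T u u u) ∈ PF K U := PF.comp (PF.cub T) U.subtype
  have hno : ∀ φ : V →ₗ[K] K, (∀ p ∈ P, φ p ≠ 0) → ∀ u ∈ U, φ u = 0 → B u u = 0 → T u u u = 0 → u = 0 := by
    intro φ hφ u hu h0 h1 h2
    by_contra hu0
    obtain ⟨p, hp, hup⟩ := hall u hu hu0 h1 h2
    obtain ⟨a, rfl⟩ := Submodule.mem_span_singleton.mp hup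
    rw [map_smul, smul_eq_mul, mul_eq_zero] at h0
    rcases h0 with h0 | h0
    · exact hu0 (by rw [h0, zero_smul])
    · exact hφ p hp h0
  obtain ⟨φ, hφ⟩ : ∃ φ : V →ₗ[K] K, ∀ p ∈ P, φ p ≠ 0 := by
    obtain ⟨f, hf⟩ := Module.exists_dual_forall_apply_ne_zero (K := K) (fun p : P => (p : V)) (fun p => hP0 p p.2)
    exact ⟨f, fun p hp => hf ⟨p, hp⟩⟩
  have hφU : (fun u : U => φ u) ∈ PF K U := PF.comp (PF.lin φ) U.subtype
  rcases P.eq_empty_or_nonempty with rfl | hne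
  · simp
  by_cases h4 : 4 ≤ Module.finrank K U
  · exfalso
    obtain ⟨u, hu, h⟩ := PF.krull (K := K) (U := U) (k := 3) h4
      ![fun u => B u u, fun u => T u u u, fun u => φ u]
      (by intro j; fin_cases j <;> assumption) (by intro j; fin_cases j <;> simp)
    exact hu (Subtype.ext (hno φ hφ u u.2 (h 2) (h 0) (h 1)))
  by_cases h3 : Module.finrank K U = 3
  · obtain ⟨u0, hu0⟩ : ∃ u : U, B u u ≠ 0 := by
      by_contra! hcon
      obtain ⟨u, hu, h⟩ := PF.krull (K := K) (U := U) (k := 2) (by omega)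
        ![fun u => T u u u, fun u => φ u]
        (by intro j; fin_cases j <;> assumption) (by intro j; fin_cases j <;> simp)
      exact hu (Subtype.ext (hno φ hφ u u.2 (h 1) (hcon u) (h 0)))
    have hψ : ∀ pp : V × V, ∃ ψ : V →ₗ[K] K, ψ pp.1 = 0 ∧ ψ pp.2 = 0 ∧ ∃ u : U, ψ u ≠ 0 := by
      intro pp
      obtain ⟨u, hu, hn⟩ := exists_notMem U ![pp.1, pp.2] (by omega)
      obtain ⟨ψ, h1, h2⟩ := Submodule.exists_le_ker_of_notMem hn
      exact ⟨ψ, h2 (Submodule.subset_span ⟨0, rfl⟩), h2 (Submodule.subset_span ⟨1, rfl⟩), ⟨u, hu⟩, h1⟩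
    choose ψ hψ1 hψ2 hψ3 using hψ
    obtain ⟨v, hv⟩ := PF.nonvan_prod (K := K) (V := U) (P ×ˢ P) (fun pp u => ψ pp u * B u u)
      (fun pp _ => PF.mul (PF.comp (PF.lin (ψ pp)) U.subtype) hBU)
      (fun pp _ => by
        obtain ⟨u, hu⟩ := hψ3 pp
        exact PF.nonvan (PF.comp (PF.lin (ψ pp)) U.subtype) hBU hu hu0)
    obtain ⟨p0, hp0⟩ := hne
    have hvB : B v v ≠ 0 := right_ne_zero_of_mul (hv (p0, p0) (Finset.mk_mem_product hp0 hp0))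
    have hvψ : ∀ p ∈ P, ∀ p' ∈ P, ψ (p, p') v ≠ 0 := fun p hp p' hp' =>
      left_ne_zero_of_mul (hv (p, p') (Finset.mk_mem_product hp hp'))
    obtain ⟨r, hr⟩ := IsAlgClosed.exists_pow_nat_eq ((B v v)⁻¹) (n := 2) two_pos
    have hr0 : r ≠ 0 := by rintro rfl; simp at hr; exact hvB hr.symm
    obtain ⟨w, hw⟩ : ∃ w : V, w = r • (v : V) := ⟨_, rfl⟩
    have hwU : w ∈ U := hw ▸ U.smul_mem _ v.2
    have hwB : B w w = 1 := by
      rw [hw]; simp only [map_smul, LinearMap.smul_apply, smul_eq_mul]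
      rw [← mul_assoc, ← sq, hr, inv_mul_cancel₀ hvB]
    have hw0 : w ≠ 0 := by rintro h; rw [h] at hwB; simp at hwB
    have hwψ : ∀ p ∈ P, ∀ p' ∈ P, ψ (p, p') w ≠ 0 := fun p hp p' hp' => by
      rw [hw, map_smul, smul_eq_mul]; exact mul_ne_zero hr0 (hvψ p hp p' hp')
    obtain ⟨f, hf⟩ := Module.exists_dual_forall_apply_ne_zero (K := K)
      (fun p : P => (Submodule.span K {w}).mkQ (p : V)) (fun p h => by
        rw [Submodule.mkQ_apply, Submodule.Quotient.mk_eq_zero, Submodule.mem_span_singleton] at h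
        obtain ⟨a, ha⟩ := h
        have h1 := hq p p.2
        rw [← ha] at h1
        simp only [map_smul, LinearMap.smul_apply, smul_eq_mul, hwB, mul_one, mul_self_eq_zero] at h1
        exact hP0 p p.2 (by rw [← ha, h1, zero_smul]))
    let χ : V →ₗ[K] K := f ∘ₗ (Submodule.span K {w}).mkQ
    have hχw : χ w = 0 := by
      simp only [χ, LinearMap.comp_apply]
      rw [Submodule.mkQ_apply, (Submodule.Quotient.mk_eq_zero _).mpr (Submodule.mem_span_singleton_self w), map_zero]
    have hχ : ∀ p ∈ P, χ p ≠ 0 := fun p hp => hf ⟨p, hp⟩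
    obtain ⟨P', hcard, hP', hall'⟩ := normal χ U P hPU hpair hq hc hall hχ
    rw [← hcard]
    obtain ⟨v1, hv1⟩ : P'.Nonempty := by
      rw [← Finset.card_pos, hcard, Finset.card_pos]; exact ⟨p0, hp0⟩
    obtain ⟨hv1U, hv1χ, -⟩ := hP' v1 hv1
    obtain ⟨u, hu, hun⟩ := exists_notMem U ![v1, w] (by omega)
    obtain ⟨v2, hv2⟩ : ∃ v2, v2 = u - χ u • v1 := ⟨_, rfl⟩
    have hv2U : v2 ∈ U := hv2 ▸ U.sub_mem hu (U.smul_mem _ hv1U)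
    have hv2χ : χ v2 = 0 := by rw [hv2]; simp [hv1χ]
    have hli : ∀ t z : K, t • v2 + z • w = 0 → t = 0 := by
      intro t z h
      by_contra ht
      apply hun
      have e : u = χ u • v1 + (- t⁻¹ * z) • w := by
        have h' := congrArg (fun y => t⁻¹ • y) h
        simp only [smul_add, smul_smul, inv_mul_cancel₀ ht, one_smul, smul_zero] at h'
        rw [hv2] at h'
        rw [neg_mul, neg_smul]
        rw [sub_add_eq_add_sub, sub_eq_zero] at h'
        rw [← h']; abel
      rw [e]
      exact Submodule.add_mem _ (Submodule.smul_mem _ _ (Submodule.subset_span ⟨0, rfl⟩))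
        (Submodule.smul_mem _ _ (Submodule.subset_span ⟨1, rfl⟩))
    have hLI : LinearIndependent K ![v1, v2, w] := by
      rw [Fintype.linearIndependent_iff]
      intro g hg
      rw [Fin.sum_univ_three] at hg
      simp only [Matrix.cons_val] at hg
      have g0 : g 0 = 0 := by
        have := congrArg χ hg
        simpa [hv1χ, hv2χ, hχw] using this
      rw [g0, zero_smul, zero_add] at hg
      have g1 := hli _ _ hg
      rw [g1, zero_smul, zero_add] at hg
      have g2 := (smul_eq_zero.mp hg).resolve_right hw0
      intro i; fin_cases i <;> assumption
    have hspan : Submodule.span K (Set.range ![v1, v2, w]) = U := by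
      apply Submodule.eq_of_le_of_finrank_le
      · rw [Submodule.span_le]
        rintro _ ⟨i, rfl⟩
        fin_cases i <;> assumption
      · rw [h3, finrank_span_eq_card hLI]; simp
    have hcoord : ∀ y ∈ U, χ y = 1 → ∃ t z : K, y = v1 + t • v2 + z • w := by
      intro y hy hy1
      rw [← hspan, Submodule.mem_span_range_iff_exists_fun] at hy
      obtain ⟨g, hg⟩ := hy
      rw [Fin.sum_univ_three] at hg
      simp only [Matrix.cons_val] at hg
      have g0 : g 0 = 1 := by
        rw [← hg] at hy1
        simpa [hv1χ, hv2χ, hχw] using hy1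
      exact ⟨g 1, g 2, by rw [← hg, g0, one_smul]⟩
    refine core3 hB hT v1 v2 w hli hwB P' (fun p hp => ?_) ?_ ?_
    · obtain ⟨a1, a2, a3, a4, -⟩ := hP' p hp
      exact ⟨hcoord p a1 a2, a3, a4⟩
    · intro p hp p' hp' z hz
      obtain ⟨-, -, -, -, q, hq1, hq2⟩ := hP' p hp
      obtain ⟨-, -, -, -, q', hq1', hq2'⟩ := hP' p' hp'
      obtain ⟨a, rfl⟩ := Submodule.mem_span_singleton.mp hq2
      obtain ⟨a', rfl⟩ := Submodule.mem_span_singleton.mp hq2'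
      have h := congrArg (ψ (q, q')) hz
      have e1 := hψ1 (q, q')
      have e2 := hψ2 (q, q')
      dsimp only at e1 e2
      rw [map_sub, map_smul, map_smul, e1, e2, map_smul, smul_zero, smul_zero, sub_zero,
        smul_eq_mul, eq_comm, mul_eq_zero] at h
      rw [h.resolve_right (hwψ q hq1 q' hq1'), zero_smul] at hz
      exact sub_eq_zero.mp hz
    · rintro t z y rfl h1 h2
      refine hall' _ ?_ ?_ h1 h2
      · exact U.add_mem (U.add_mem hv1U (U.smul_mem _ hv2U)) (U.smul_mem _ hwU)
      · simp [hv1χ, hv2χ, hχw]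
  by_cases h2 : Module.finrank K U = 2
  · obtain ⟨P', hcard, hP', hall'⟩ := normal φ U P hPU hpair hq hc hall hφ
    rw [← hcard]
    obtain ⟨v1, hv1⟩ : P'.Nonempty := by
      rw [← Finset.card_pos, hcard, Finset.card_pos]; exact hne
    obtain ⟨hv1U, hv1φ, -⟩ := hP' v1 hv1
    obtain ⟨u, hu, hun⟩ := exists_notMem U ![v1] (by omega)
    obtain ⟨v2, hv2⟩ : ∃ v2, v2 = u - φ u • v1 := ⟨_, rfl⟩
    have hv2U : v2 ∈ U := hv2 ▸ U.sub_mem hu (U.smul_mem _ hv1U)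
    have hv2φ : φ v2 = 0 := by rw [hv2]; simp [hv1φ]
    have hv20 : v2 ≠ 0 := by
      intro h
      apply hun
      rw [h, eq_comm, sub_eq_zero] at hv2
      rw [hv2]
      exact (Submodule.smul_mem _ _ (Submodule.subset_span ⟨0, rfl⟩))
    have hLI : LinearIndependent K ![v1, v2] := by
      rw [Fintype.linearIndependent_iff]
      intro g hg
      rw [Fin.sum_univ_two] at hg
      simp only [Matrix.cons_val] at hg
      have g0 : g 0 = 0 := by
        have := congrArg φ hg
        simpa [hv1φ, hv2φ] using this
      rw [g0, zero_smul, zero_add] at hg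
      have g2 := (smul_eq_zero.mp hg).resolve_right hv20
      intro i; fin_cases i <;> assumption
    have hspan : Submodule.span K (Set.range ![v1, v2]) = U := by
      apply Submodule.eq_of_le_of_finrank_le
      · rw [Submodule.span_le]
        rintro _ ⟨i, rfl⟩
        fin_cases i <;> assumption
      · rw [h2, finrank_span_eq_card hLI]; simp
    refine core2 hB hT v1 v2 hv20 P' (fun p hp => ?_) ?_
    · obtain ⟨a1, a2, a3, a4, -⟩ := hP' p hp
      refine ⟨?_, a3, a4⟩
      rw [← hspan, Submodule.mem_span_range_iff_exists_fun] at a1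
      obtain ⟨g, hg⟩ := a1
      rw [Fin.sum_univ_two] at hg
      simp only [Matrix.cons_val] at hg
      have g0 : g 0 = 1 := by
        rw [← hg] at a2
        simpa [hv1φ, hv2φ] using a2
      exact ⟨g 1, by rw [← hg, g0, one_smul]⟩
    · rintro t y rfl h1 h2
      refine hall' _ ?_ ?_ h1 h2
      · exact U.add_mem hv1U (U.smul_mem _ hv2U)
      · simp [hv1φ, hv2φ]
  · have h1 : Module.finrank K U ≤ 1 := by omega
    by_contra hcard
    obtain ⟨p, hp, q, hq', hpq⟩ := Finset.one_lt_card.mp (show 1 < P.card by omega)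
    have hq0 : (⟨q, hPU q hq'⟩ : U) ≠ 0 := fun h => hP0 q hq' (congrArg Subtype.val h)
    obtain ⟨w, hw⟩ := finrank_le_one_iff.mp h1
    obtain ⟨a, ha⟩ := hw ⟨q, hPU q hq'⟩
    obtain ⟨b, hb⟩ := hw ⟨p, hPU p hp⟩
    have ha0 : a ≠ 0 := by rintro rfl; exact hq0 (by rw [← ha, zero_smul])
    apply hpq
    apply hpair p hp q hq'
    rw [Submodule.mem_span_singleton]
    refine ⟨b * a⁻¹, ?_⟩
    have ha' : a • (w : V) = q := congrArg Subtype.val ha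
    have hb' : b • (w : V) = p := congrArg Subtype.val hb
    rw [← ha', ← hb', smul_smul, mul_assoc, inv_mul_cancel₀ ha0, mul_one]

end core
end CL

namespace CL
set_option linter.all false
open MvPolynomial

variable {K : Type*} [Field K] [IsAlgClosed K] [CharZero K]

section lines
variable {k : ℕ}

/-- restriction of a polynomial to a line -/
noncomputable def ln (a b : Fin k → K) (G : MvPolynomial (Fin k) K) : Polynomial K :=
  aeval (fun i => Polynomial.C (a i) + Polynomial.C (b i) * Polynomial.X) G

theorem ln_eval (a b : Fin k → K) (G : MvPolynomial (Fin k) K) (t : K) :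
    (ln a b G).eval t = eval (a + t • b) G := by
  induction G using MvPolynomial.induction_on with
  | C c => simp [ln]
  | add p q hp hq => simpa [ln] using congrArg₂ (· + ·) hp hq
  | mul_X p i hp =>
    have : ln a b (p * X i) = ln a b p * (Polynomial.C (a i) + Polynomial.C (b i) * Polynomial.X) := by
      simp [ln]
    rw [this, Polynomial.eval_mul, hp]
    simp
    left; ring

theorem ln_mon (a b : Fin k → K) (m : Fin k → ℕ) (s : Finset (Fin k)) :
    (∏ i ∈ s, (Polynomial.C (a i) + Polynomial.C (b i) * Polynomial.X) ^ m i).natDegree ≤ ∑ i ∈ s, m i ∧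
    (∏ i ∈ s, (Polynomial.C (a i) + Polynomial.C (b i) * Polynomial.X) ^ m i).coeff (∑ i ∈ s, m i)
      = ∏ i ∈ s, b i ^ m i := by
  classical
  have h1 : ∀ i, (Polynomial.C (a i) + Polynomial.C (b i) * Polynomial.X).natDegree ≤ 1 := by
    intro i; compute_degree
  have hp : ∀ i, ((Polynomial.C (a i) + Polynomial.C (b i) * Polynomial.X) ^ m i).natDegree ≤ m i := by
    intro i
    have := Polynomial.natDegree_pow_le_of_le (m i) (h1 i)
    simpa using this
  induction s using Finset.induction_on with
  | empty => simp
  | insert i s hi ih =>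
    rw [Finset.prod_insert hi, Finset.sum_insert hi, Finset.prod_insert hi]
    refine ⟨Polynomial.natDegree_mul_le.trans (add_le_add (hp i) ih.1), ?_⟩
    rw [Polynomial.coeff_mul_add_eq_of_natDegree_le (hp i) ih.1, ih.2]
    have := Polynomial.coeff_pow_of_natDegree_le (m := m i) (h1 i)
    rw [mul_one] at this
    rw [this]
    simp

theorem ln_hom (a b : Fin k → K) {d : ℕ} {G : MvPolynomial (Fin k) K} (hG : G.IsHomogeneous d) :
    (ln a b G).natDegree ≤ d ∧ (ln a b G).coeff d = eval b G := by
  classical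
  have e : ln a b G = ∑ m ∈ G.support, Polynomial.C (coeff m G) *
      ∏ i, (Polynomial.C (a i) + Polynomial.C (b i) * Polynomial.X) ^ m i := by
    rw [ln, aeval_eq_eval₂Hom, coe_eval₂Hom, eval₂_eq']
    rfl
  have hd : ∀ m ∈ G.support, ∑ i, m i = d := by
    intro m hm
    have := hG (mem_support_iff.mp hm)
    rw [← this, Finsupp.weight_apply, Finsupp.sum_fintype] <;> simp
  constructor
  · rw [e]
    refine Polynomial.natDegree_sum_le_of_forall_le _ _ fun m hm => ?_
    refine (Polynomial.natDegree_C_mul_le _ _).trans ?_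
    rw [← hd m hm]
    exact (ln_mon a b m Finset.univ).1
  · rw [e, Polynomial.finset_sum_coeff, eval_eq']
    refine Finset.sum_congr rfl fun m hm => ?_
    rw [Polynomial.coeff_C_mul, ← hd m hm, (ln_mon a b m Finset.univ).2]

theorem ln_f (D : Cub k K) (a b : Fin k → K) :
    (ln a b D.f).natDegree ≤ 6 ∧ (ln a b D.f).coeff 6 = D.κ * eval b D.Q ^ 3 := by
  obtain ⟨q1, q2⟩ := ln_hom a b D.hQ
  have mulle : ∀ {p q : Polynomial K} {i j m : ℕ}, p.natDegree ≤ i → q.natDegree ≤ j → i + j ≤ m →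
      (p * q).natDegree ≤ m := fun h1 h2 h3 =>
    (Polynomial.natDegree_mul_le.trans (add_le_add h1 h2)).trans h3
  have addle : ∀ {p q : Polynomial K} {i j m : ℕ}, p.natDegree ≤ i → q.natDegree ≤ j → i ≤ m → j ≤ m →
      (p + q).natDegree ≤ m := fun h1 h2 h3 h4 =>
    (Polynomial.natDegree_add_le _ _).trans (max_le (h1.trans h3) (h2.trans h4))
  have hC : ∀ c : K, (Polynomial.C c).natDegree ≤ 0 := fun c => by simp
  have e : ln a b D.f = Polynomial.C D.κ * ln a b D.Q ^ 3 + ((ln a b D.Q * ln a b D.Q) * (Polynomial.C D.l0 + ln a b D.l1)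
      + ln a b D.Q * (Polynomial.C D.m0 + ln a b D.m1 + ln a b D.m2)
      + (Polynomial.C D.n0 + ln a b D.n1 + ln a b D.n2 + ln a b D.n3)) := by
    simp [ln, Cub.f, MvPolynomial.algebraMap_eq]
    ring
  have h5 : ((ln a b D.Q * ln a b D.Q) * (Polynomial.C D.l0 + ln a b D.l1)
      + ln a b D.Q * (Polynomial.C D.m0 + ln a b D.m1 + ln a b D.m2)
      + (Polynomial.C D.n0 + ln a b D.n1 + ln a b D.n2 + ln a b D.n3)).natDegree ≤ 5 := by
    have e1 : (Polynomial.C D.l0 + ln a b D.l1).natDegree ≤ 1 :=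
      addle (hC _) (ln_hom a b D.hl1).1 (by norm_num) (by norm_num)
    have e2 : (Polynomial.C D.m0 + ln a b D.m1 + ln a b D.m2).natDegree ≤ 2 :=
      addle (addle (hC _) (ln_hom a b D.hm1).1 (m := 1) (by norm_num) (by norm_num)) (ln_hom a b D.hm2).1
        (by norm_num) (by norm_num)
    have e3 : (Polynomial.C D.n0 + ln a b D.n1 + ln a b D.n2 + ln a b D.n3).natDegree ≤ 3 :=
      addle (addle (addle (hC _) (ln_hom a b D.hn1).1 (m := 1) (by norm_num) (by norm_num)) (ln_hom a b D.hn2).1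
        (m := 2) (by norm_num) (by norm_num)) (ln_hom a b D.hn3).1 (by norm_num) (by norm_num)
    exact addle (addle (mulle (mulle q1 q1 le_rfl) e1 le_rfl) (mulle q1 e2 le_rfl) (m := 5) (by norm_num) (by norm_num))
      e3 (by norm_num) (by norm_num)
  have h6 : (ln a b D.Q ^ 3).natDegree ≤ 6 := Polynomial.natDegree_pow_le_of_le 3 q1
  refine ⟨?_, ?_⟩
  · rw [e]
    exact addle (mulle (hC _) h6 le_rfl) h5 (by norm_num) (by norm_num)
  · rw [e, Polynomial.coeff_add, Polynomial.coeff_eq_zero_of_natDegree_lt (h5.trans_lt (by norm_num)),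
      add_zero, Polynomial.coeff_C_mul]
    have := Polynomial.coeff_pow_of_natDegree_le (m := 3) q1
    rw [show 2 * 3 = 6 from rfl] at this
    first
    | rw [this, q2]
    | (rw [show (6:ℕ) = 3 * 2 from rfl]; rw [this, q2])

/-- generic line in direction `b` -/
noncomputable def th (b : Fin k → K) :
    Polynomial (MvPolynomial (Fin k) K) →+* Polynomial (MvPolynomial (Fin k) K) :=
  Polynomial.eval₂RingHom (eval₂Hom (Polynomial.C.comp C) (fun i => Polynomial.C (X i) +
    Polynomial.C (C (b i)) * Polynomial.X)) Polynomial.X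

theorem th_inv (b : Fin k → K) : (th (-b)).comp (th b) = RingHom.id _ := by
  apply Polynomial.ringHom_ext
  · intro p
    have : ((th (-b)).comp (th b)).comp Polynomial.C = Polynomial.C := by
      apply MvPolynomial.ringHom_ext
      · intro c; simp [th]
      · intro i; simp [th]; ring
    exact congrArg (fun g => g p) this
  · simp [th]

noncomputable def thE (b : Fin k → K) :
    Polynomial (MvPolynomial (Fin k) K) ≃+* Polynomial (MvPolynomial (Fin k) K) :=
  RingEquiv.ofRingHom (th b) (th (-b)) (by simpa using th_inv (-b)) (th_inv b)

theorem th_spec (a b : Fin k → K) (G : MvPolynomial (Fin k) K) :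
    (th b (Polynomial.C G)).map (eval a) = ln a b G := by
  have : ((Polynomial.mapRingHom (eval a)).comp (th b)).comp Polynomial.C =
      ((aeval (fun i => Polynomial.C (a i) + Polynomial.C (b i) * Polynomial.X) :
        MvPolynomial (Fin k) K →ₐ[K] Polynomial K) : MvPolynomial (Fin k) K →+* Polynomial K) := by
    apply MvPolynomial.ringHom_ext
    · intro c; simp [th]
    · intro i; simp [th]
  exact congrArg (fun g => g G) this

theorem exists_sep {f : MvPolynomial (Fin k) K} (hf : Prime f) (b : Fin k → K)
    (hdeg : (ln 0 b f).natDegree ≠ 0) : ∃ a, (ln a b f).Separable := by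
  let R := MvPolynomial (Fin k) K
  let L := FractionRing R
  obtain ⟨g, hg⟩ : ∃ g, g = th b (Polynomial.C f) := ⟨_, rfl⟩
  have hgp : Prime g := by
    rw [hg]
    exact (MulEquiv.prime_iff (thE b)).mpr (Polynomial.prime_C_iff.mpr hf)
  have hgd : g.natDegree ≠ 0 := by
    intro h0
    apply hdeg
    rw [← th_spec, ← hg]
    exact Nat.le_zero.mp (Polynomial.natDegree_map_le.trans h0.le)
  have hprim : g.IsPrimitive := hgp.irreducible.isPrimitive hgd
  have hirr : Irreducible (g.map (algebraMap R L)) := by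
    letI : NormalizedGCDMonoid R := Classical.choice (inferInstance : Nonempty (NormalizedGCDMonoid R))
    exact hprim.irreducible_iff_irreducible_map_fraction_map.mp hgp.irreducible
  haveI : CharZero L := charZero_of_injective_algebraMap (IsFractionRing.injective R L)
  have hsep : (g.map (algebraMap R L)).Separable := hirr.separable
  obtain ⟨u, v, huv⟩ := hsep
  obtain ⟨b1, hb1, h1⟩ := IsLocalization.integerNormalization_spec (nonZeroDivisors R) u
  obtain ⟨b2, hb2, h2⟩ := IsLocalization.integerNormalization_spec (nonZeroDivisors R) v
  obtain ⟨u1, hu1⟩ : ∃ u1, u1 = IsLocalization.integerNormalization (nonZeroDivisors R) u := ⟨_, rfl⟩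
  obtain ⟨v1, hv1⟩ : ∃ v1, v1 = IsLocalization.integerNormalization (nonZeroDivisors R) v := ⟨_, rfl⟩
  rw [← hu1] at h1
  rw [← hv1] at h2
  have hid : Polynomial.C b2 * u1 * g + Polynomial.C b1 * v1 * Polynomial.derivative g
      = Polynomial.C (b1 * b2) := by
    apply Polynomial.map_injective (algebraMap R L) (IsFractionRing.injective R L)
    simp only [Polynomial.map_add, Polynomial.map_mul, Polynomial.map_C, h1, h2,
      ← Polynomial.derivative_map]
    rw [← IsScalarTower.algebraMap_smul L b1 u, ← IsScalarTower.algebraMap_smul L b2 v,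
      Polynomial.smul_eq_C_mul, Polynomial.smul_eq_C_mul, map_mul, Polynomial.C_mul]
    linear_combination (Polynomial.C (algebraMap R L b1) * Polynomial.C (algebraMap R L b2)) * huv
  have hb0 : b1 * b2 ≠ 0 := mul_ne_zero (nonZeroDivisors.ne_zero hb1) (nonZeroDivisors.ne_zero hb2)
  obtain ⟨a, ha⟩ : ∃ a, eval a (b1 * b2) ≠ 0 := by
    by_contra! hcon
    exact hb0 (MvPolynomial.funext fun a => by rw [hcon, map_zero])
  refine ⟨a, ?_⟩
  have h3 := congrArg (Polynomial.map (eval a)) hid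
  simp only [Polynomial.map_add, Polynomial.map_mul, Polynomial.map_C,
      ← Polynomial.derivative_map] at h3
  rw [hg, th_spec] at h3
  refine ⟨Polynomial.C (eval a (b1 * b2))⁻¹ * (Polynomial.C (eval a b2) * u1.map (eval a)),
    Polynomial.C (eval a (b1 * b2))⁻¹ * (Polynomial.C (eval a b1) * v1.map (eval a)), ?_⟩
  have h4 : Polynomial.C (eval a (b1 * b2))⁻¹ * Polynomial.C (eval a (b1 * b2)) = 1 := by
    rw [← Polynomial.C_mul, inv_mul_cancel₀ ha, Polynomial.C_1]
  linear_combination Polynomial.C (eval a (b1 * b2))⁻¹ * h3 + h4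

end lines

namespace Frame
variable {V : Type*} [AddCommGroup V] [Module K V] {T : Tri K V} {x : V} {k : ℕ}

theorem deg_eq (Φ : Frame T x k) {D : Cub k K} (hD : Φ.Data D) (hκ : D.κ ≠ 0) (hQ : Prime D.Q)
    (hf : Prime D.f) : ∃ (W : Submodule K V) (P : Finset V), P.card = 6 ∧
      (∀ p ∈ P, p ∈ W ∧ p ≠ 0 ∧ T x x p = 0 ∧ T x p p = 0 ∧ T p p p = 0) ∧
      (∀ p ∈ P, ∀ p' ∈ P, p ∈ Submodule.span K {p'} → p = p') ∧
      ∀ u ∈ W, u ≠ 0 → T x x u = 0 → T x u u = 0 → T u u u = 0 → ∃ p ∈ P, u ∈ Submodule.span K {p} := by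
  classical
  obtain ⟨b, hb⟩ : ∃ b, eval b D.Q ≠ 0 := by
    by_contra! hcon
    exact hQ.ne_zero (MvPolynomial.funext fun a => by rw [hcon, map_zero])
  have hb0 : b ≠ 0 := by
    rintro rfl
    exact hb (Frame.eval_zero_hom D.hQ)
  have hc6 : D.κ * eval b D.Q ^ 3 ≠ 0 := mul_ne_zero hκ (pow_ne_zero _ hb)
  have hdeg : ∀ a, (ln a b D.f).natDegree = 6 := by
    intro a
    obtain ⟨h1, h2⟩ := ln_f D a b
    exact le_antisymm h1 (Polynomial.le_natDegree_of_ne_zero (by rw [h2]; exact hc6))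
  obtain ⟨a, ha⟩ := exists_sep hf b (by rw [hdeg]; norm_num)
  let r := (ln a b D.f).roots.toFinset
  have hf0 : ln a b D.f ≠ 0 := by
    intro h; have := hdeg a; rw [h] at this; simp at this
  have hr : r.card = 6 := by
    rw [Multiset.toFinset_card_of_nodup (Polynomial.nodup_roots ha), ← hdeg a]
    exact (IsAlgClosed.splits _).natDegree_eq_card_roots.symm
  have hmem : ∀ t, t ∈ r ↔ eval (a + t • b) D.f = 0 := by
    intro t
    simp only [r, Multiset.mem_toFinset, Polynomial.mem_roots hf0, Polynomial.IsRoot.def, ln_eval]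
  let pp : K → V := fun t => Φ.pt 0 1 (eval (a + t • b) D.Q) (a + t • b)
  have hpp : ∀ t, pp t = Φ.p' + Φ.ι a + t • Φ.ι b + eval (a + t • b) D.Q • Φ.p := by
    intro t
    simp only [pp, pt, zero_smul, zero_add, one_smul, map_add, map_smul]
    abel
  have hinj : ∀ s t c : K, pp s = c • pp t → s = t := by
    intro s t c h
    obtain ⟨-, e1, -, e2⟩ := Φ.pt_coord 0 1 (eval (a + s • b) D.Q) (a + s • b)
    obtain ⟨-, e3, -, e4⟩ := Φ.pt_coord 0 1 (eval (a + t • b) D.Q) (a + t • b)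
    have h1 : 2 * T x Φ.p (pp s) = c * (2 * T x Φ.p (pp t)) := by
      rw [h, map_smul, smul_eq_mul]; ring
    have e1' : 2 * T x Φ.p (pp s) = 1 := e1
    have e3' : 2 * T x Φ.p (pp t) = 1 := e3
    have h1' : (1 : K) = c * 1 := by
      rw [e1', e3'] at h1; exact h1
    have hc : c = 1 := by rw [mul_one] at h1'; exact h1'.symm
    rw [hc, one_smul] at h
    have h2 : Φ.cz (pp s) = Φ.cz (pp t) := by rw [h]
    have h3 : a + s • b = a + t • b := by rw [← e2, ← e4]; exact h2
    exact smul_left_injective K hb0 (add_left_cancel h3)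
  refine ⟨Submodule.span K (Set.range ![Φ.p, Φ.p' + Φ.ι a, Φ.ι b]), r.image pp, ?_, ?_, ?_, ?_⟩
  · rw [Finset.card_image_of_injective, hr]
    intro s t h
    exact hinj s t 1 (by rw [one_smul]; exact h)
  · intro v hv
    obtain ⟨t, ht, rfl⟩ := Finset.mem_image.mp hv
    refine ⟨?_, ?_, Φ.x_pt _ _ _ _, ?_, ?_⟩
    · rw [hpp]
      exact Submodule.add_mem _ (Submodule.add_mem _ (Submodule.subset_span ⟨1, rfl⟩)
        (Submodule.smul_mem _ _ (Submodule.subset_span ⟨2, rfl⟩)))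
        (Submodule.smul_mem _ _ (Submodule.subset_span ⟨0, rfl⟩))
    · intro h0
      obtain ⟨-, e1, -, e2⟩ := Φ.pt_coord 0 1 (eval (a + t • b) D.Q) (a + t • b)
      have h1 : 2 * T x Φ.p (pp t) = 1 := e1
      rw [h0] at h1
      simp at h1
    · rw [Φ.q_pt hD]; ring
    · rw [← Φ.eval_f hD]; exact (hmem t).mp ht
  · intro v hv v' hv' h
    obtain ⟨t, ht, rfl⟩ := Finset.mem_image.mp hv
    obtain ⟨s, hs, rfl⟩ := Finset.mem_image.mp hv'
    obtain ⟨c, hc⟩ := Submodule.mem_span_singleton.mp h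
    rw [hinj t s c hc.symm]
  · intro u hu hu0 h1 h2 h3
    rw [Submodule.mem_span_range_iff_exists_fun] at hu
    obtain ⟨g, hg⟩ := hu
    rw [Fin.sum_univ_three] at hg
    simp only [Matrix.cons_val] at hg
    obtain ⟨y1, hy1⟩ : ∃ y, y = g 0 := ⟨_, rfl⟩
    obtain ⟨y0, hy0⟩ : ∃ y, y = g 1 := ⟨_, rfl⟩
    obtain ⟨s, hs⟩ : ∃ y, y = g 2 := ⟨_, rfl⟩
    rw [← hy1, ← hy0, ← hs] at hg
    by_cases hy : y0 = 0
    · exfalso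
      have e : u = Φ.pt 0 0 y1 (s • b) := by
        rw [← hg, hy]; simp [pt]
      rw [e, Φ.q_pt hD, hD.Q] at h2
      simp only [map_smul, LinearMap.smul_apply, smul_eq_mul] at h2
      rw [hD.Q] at hb
      have hs0 : s = 0 := by
        by_contra hs0
        have hb' : T x (Φ.ι b) (Φ.ι b) ≠ 0 := fun h => hb (by rw [h, neg_zero])
        apply mul_ne_zero hs0 (mul_ne_zero hs0 hb')
        linear_combination h2
      have e' : u = y1 • Φ.p := by rw [e, hs0]; simp [pt]
      rw [e'] at h3
      simp only [map_smul, LinearMap.smul_apply, smul_eq_mul, ← hD.κ] at h3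
      have : y1 = 0 := by
        by_contra hy1
        exact mul_ne_zero hy1 (mul_ne_zero hy1 (mul_ne_zero hy1 hκ)) h3
      exact hu0 (by rw [e', this, zero_smul])
    · have e : u = y0 • Φ.pt 0 1 (y1 / y0) (a + (s / y0) • b) := by
        rw [← hg]
        simp only [pt, map_add, map_smul, smul_add, smul_smul, mul_div_cancel₀ _ hy, zero_smul, smul_zero,
          zero_add, mul_one]
        abel
      rw [e] at h2 h3
      simp only [map_smul, LinearMap.smul_apply, smul_eq_mul, mul_eq_zero, hy, false_or] at h2 h3
      rw [Φ.q_pt hD] at h2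
      have h4 : y1 / y0 = eval (a + (s / y0) • b) D.Q := by linear_combination h2
      rw [h4, ← Φ.eval_f hD] at h3
      refine ⟨pp (s / y0), Finset.mem_image_of_mem _ ((hmem _).mpr h3), ?_⟩
      rw [Submodule.mem_span_singleton]
      refine ⟨y0, ?_⟩
      rw [e, h4]

end Frame
end CL

namespace CL
set_option linter.all false
open MvPolynomial

theorem hom_eval {K : Type*} [Field K] {k d : ℕ} {f : MvPolynomial (Fin k) K} (hf : f.IsHomogeneous d)
    (c : K) (v : Fin k → K) : eval (c • v) f = c ^ d * eval v f := by
  rw [eval_eq', eval_eq', Finset.mul_sum]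
  refine Finset.sum_congr rfl fun m hm => ?_
  have h := hf (mem_support_iff.mp hm)
  rw [Finsupp.weight_apply, Finsupp.sum_fintype _ _ (by simp)] at h
  simp only [Pi.one_apply, smul_eq_mul, mul_one] at h
  simp only [Pi.smul_apply, smul_eq_mul, mul_pow, Finset.prod_mul_distrib, Finset.prod_pow_eq_pow_sum, h]
  ring

section proj
variable {N : ℕ}

local notation "RR" => MvPolynomial (Fin (N + 1)) KK
local notation "VV" => (Fin (N + 1) → KK)

/-- points where `f` vanishes along the whole line -/
def Zf (f : RR) : Set (Pn N) := {x | ∀ c : KK, eval (c • x.rep) f = 0}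

theorem zf_closed (f : RR) : ProjClosed (Zf f) := by
  refine ⟨Set.range fun d => homogeneousComponent d f, ?_, ?_⟩
  · rintro _ ⟨d, rfl⟩
    exact ⟨d, homogeneousComponent_isHomogeneous d f⟩
  · ext x
    have key : ∀ c : KK, eval (c • x.rep) f =
        (∑ d ∈ Finset.range (f.totalDegree + 1), Polynomial.C (eval x.rep (homogeneousComponent d f)) *
          Polynomial.X ^ d : Polynomial KK).eval c := by
      intro c
      conv_lhs => rw [← sum_homogeneousComponent f]
      rw [map_sum, Polynomial.eval_finset_sum]
      refine Finset.sum_congr rfl fun d _ => ?_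
      rw [hom_eval (homogeneousComponent_isHomogeneous d f)]
      rw [Polynomial.eval_mul, Polynomial.eval_C, Polynomial.eval_pow, Polynomial.eval_X, mul_comm]
    constructor
    · rintro hx _ ⟨d, rfl⟩
      show eval x.rep (homogeneousComponent d f) = 0
      have h0 : (∑ d ∈ Finset.range (f.totalDegree + 1), Polynomial.C (eval x.rep (homogeneousComponent d f)) *
          Polynomial.X ^ d : Polynomial KK) = 0 := by
        apply Polynomial.funext
        intro c
        rw [← key, hx c, Polynomial.eval_zero]
      by_cases hd : d < f.totalDegree + 1
      · have h1 := congrArg (fun p => Polynomial.coeff p d) h0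
        simp only [Polynomial.finset_sum_coeff, Polynomial.coeff_C_mul_X_pow, Polynomial.coeff_zero] at h1
        rw [Finset.sum_eq_single d] at h1
        · simpa using h1
        · intro b _ hb; rw [if_neg (Ne.symm hb)]
        · intro h; exact absurd (Finset.mem_range.mpr hd) h
      · rw [homogeneousComponent_eq_zero _ _ (by omega), map_zero]
    · intro hx c
      rw [key c, Polynomial.eval_finset_sum]
      refine Finset.sum_eq_zero fun d _ => ?_
      have : eval x.rep (homogeneousComponent d f) = 0 := hx _ ⟨d, rfl⟩
      rw [this]; simp

/-- vanishing ideal -/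
def vI (V : Set (Pn N)) : Ideal RR where
  carrier := {f | V ⊆ Zf f}
  add_mem' := fun {f g} hf hg x hx c => by rw [map_add, hf hx c, hg hx c, add_zero]
  zero_mem' := fun x hx c => map_zero _
  smul_mem' := fun r f hf x hx c => by rw [smul_eq_mul, map_mul, hf hx c, mul_zero]

theorem mem_vI {V : Set (Pn N)} {f : RR} : f ∈ vI V ↔ V ⊆ Zf f := Iff.rfl

theorem vI_anti {V W : Set (Pn N)} (h : V ⊆ W) : vI W ≤ vI V := fun f hf => h.trans hf

theorem vI_inj {V W : Set (Pn N)} (hW : ProjClosed W) (h : vI W ≤ vI V) : V ⊆ W := by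
  obtain ⟨S, hS, rfl⟩ := hW
  intro x hx f hf
  obtain ⟨d, hd⟩ := hS f hf
  have h1 : f ∈ vI (projZeros S) := by
    intro y hy c
    rw [hom_eval hd, hy f hf, mul_zero]
  have h2 := h h1 hx 1
  rwa [one_smul] at h2

theorem vI_strict {V W : Set (Pn N)} (hV : ProjClosed V) (hVW : V ⊂ W) : vI W < vI V :=
  lt_of_le_of_ne (vI_anti hVW.1) fun h => hVW.2 (vI_inj hV h.ge)

theorem vI_prime {V : Set (Pn N)} (hV : ProjIrred V) : (vI V).IsPrime := by
  refine ⟨?_, ?_⟩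
  · intro h
    obtain ⟨x, hx⟩ := hV.1
    have h1 : (1 : RR) ∈ vI V := by rw [h]; trivial
    have := h1 hx 0
    rw [map_one] at this
    exact one_ne_zero this
  · intro f g hfg
    refine hV.2 (Zf f) (Zf g) (zf_closed f) (zf_closed g) ?_
    intro x hx
    obtain ⟨p, hp⟩ := PF.line (PF.mv f (LinearMap.id : VV →ₗ[KK] VV)) 0 x.rep
    obtain ⟨q, hq⟩ := PF.line (PF.mv g (LinearMap.id : VV →ₗ[KK] VV)) 0 x.rep
    simp only [LinearMap.id_coe, id_eq, zero_add] at hp hq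
    have h0 : p * q = 0 := by
      apply Polynomial.funext
      intro t
      have := hfg hx t
      rw [map_mul] at this
      rw [Polynomial.eval_mul, hp, hq, this, Polynomial.eval_zero]
    rcases mul_eq_zero.mp h0 with h | h
    · left; intro c; rw [← hp, h, Polynomial.eval_zero]
    · right; intro c; rw [← hq, h, Polynomial.eval_zero]

abbrev PV (N : ℕ) := {W : Set (Pn N) // ProjVariety W}

def toSpec (W : PV N) : (PrimeSpectrum RR)ᵒᵈ := OrderDual.toDual ⟨vI W.1, vI_prime W.2.2⟩

theorem toSpec_strict : StrictMono (toSpec (N := N)) := by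
  intro V W h
  have h' : V.1 ⊂ W.1 := h
  exact vI_strict V.2.1 h'

noncomputable def irrelevant : Ideal RR := RingHom.ker (eval (0 : VV))

theorem series_le (p : LTSeries (PV N)) : p.length ≤ N := by
  have hpr : (irrelevant (N := N)).IsPrime := RingHom.ker_isPrime _
  have hlt : ∀ W : PV N, vI W.1 < irrelevant := by
    intro W
    obtain ⟨x, hx⟩ := W.2.2.1
    refine lt_of_le_of_ne ?_ ?_
    · intro f hf
      have := hf hx 0
      rw [zero_smul] at this
      exact RingHom.mem_ker.mpr this
    · intro h
      apply x.rep_nonzero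
      ext i
      have : (X i : RR) ∈ vI W.1 := by rw [h]; exact RingHom.mem_ker.mpr (by simp)
      have := this hx 1
      simpa using this
  let q := p.map toSpec toSpec_strict
  let q' : LTSeries (PrimeSpectrum RR)ᵒᵈ := RelSeries.cons q (OrderDual.toDual ⟨irrelevant, hpr⟩) (hlt _)
  have h1 : (q'.length : WithBot ℕ∞) ≤ Order.krullDim (PrimeSpectrum RR)ᵒᵈ :=
    Order.le_krullDim_iff.mpr ⟨q', rfl⟩
  rw [Order.krullDim_orderDual] at h1
  have h2 : ringKrullDim RR = ((N + 1 : ℕ) : WithBot ℕ∞) := by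
    rw [MvPolynomial.ringKrullDim_of_isNoetherianRing, ringKrullDim_eq_zero_of_field]
    simp
  have h3 : (q'.length : WithBot ℕ∞) ≤ ((N + 1 : ℕ) : WithBot ℕ∞) := h2 ▸ h1
  have h4 : q'.length ≤ N + 1 := by exact_mod_cast h3
  have h5 : q'.length = p.length + 1 := RelSeries.cons_length _ _ _
  omega

theorem closed_inter {V W : Set (Pn N)} (hV : ProjClosed V) (hW : ProjClosed W) : ProjClosed (V ∩ W) := by
  obtain ⟨S, hS, rfl⟩ := hV
  obtain ⟨S', hS', rfl⟩ := hW
  refine ⟨S ∪ S', ?_, ?_⟩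
  · rintro f (hf | hf)
    exacts [hS f hf, hS' f hf]
  · ext x
    constructor
    · rintro ⟨h1, h2⟩ f (hf | hf)
      exacts [h1 f hf, h2 f hf]
    · intro h
      exact ⟨fun f hf => h f (Or.inl hf), fun f hf => h f (Or.inr hf)⟩

theorem closed_hom {d : ℕ} {f : RR} (hf : f.IsHomogeneous d) : ProjClosed {x : Pn N | eval x.rep f = 0} :=
  ⟨{f}, fun g hg => ⟨d, by rw [Set.mem_singleton_iff.mp hg]; exact hf⟩, by ext x; simp [projZeros]⟩

theorem decomp (V : Set (Pn N)) (hV : ProjClosed V) :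
    ∃ s : Set (Set (Pn N)), s.Finite ∧ (∀ W ∈ s, ProjVariety W) ∧ V = ⋃₀ s := by
  obtain ⟨I, hI⟩ : ∃ I, I = vI V := ⟨_, rfl⟩
  induction I using WellFoundedGT.induction generalizing V with
  | _ I ih =>
    subst hI
    by_cases hne : V.Nonempty
    · by_cases hirr : ProjIrred V
      · exact ⟨{V}, Set.finite_singleton _, fun W hW => by rw [Set.mem_singleton_iff.mp hW]; exact ⟨hV, hirr⟩, by simp⟩
      · have : ∃ C₁ C₂ : Set (Pn N), ProjClosed C₁ ∧ ProjClosed C₂ ∧ V ⊆ C₁ ∪ C₂ ∧ ¬ V ⊆ C₁ ∧ ¬ V ⊆ C₂ := by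
          by_contra hcon
          apply hirr
          refine ⟨hne, fun C₁ C₂ h1 h2 h3 => ?_⟩
          by_contra h4
          rw [not_or] at h4
          exact hcon ⟨C₁, C₂, h1, h2, h3, h4.1, h4.2⟩
        obtain ⟨C₁, C₂, h1, h2, h3, h4, h5⟩ := this
        have k1 := closed_inter hV h1
        have k2 := closed_inter hV h2
        obtain ⟨s1, a1, a2, a3⟩ := ih _ (vI_strict k1 ⟨Set.inter_subset_left, fun h => h4 fun x hx => (h hx).2⟩) _ k1 rfl
        obtain ⟨s2, b1, b2, b3⟩ := ih _ (vI_strict k2 ⟨Set.inter_subset_left, fun h => h5 fun x hx => (h hx).2⟩) _ k2 rfl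
        refine ⟨s1 ∪ s2, a1.union b1, ?_, ?_⟩
        · rintro W (hW | hW)
          exacts [a2 W hW, b2 W hW]
        · rw [Set.sUnion_union, ← a3, ← b3, ← Set.inter_union_distrib_left]
          exact (Set.inter_eq_left.mpr h3).symm
    · exact ⟨∅, Set.finite_empty, by simp, by simpa using Set.not_nonempty_iff_eq_empty.mp hne⟩

theorem closed_empty : ProjClosed (∅ : Set (Pn N)) :=
  ⟨{1}, fun f hf => ⟨0, by rw [Set.mem_singleton_iff.mp hf]; exact isHomogeneous_one _ _⟩,
    by ext x; simp [projZeros]⟩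

theorem closed_union {V W : Set (Pn N)} (hV : ProjClosed V) (hW : ProjClosed W) : ProjClosed (V ∪ W) := by
  obtain ⟨S, hS, rfl⟩ := hV
  obtain ⟨S', hS', rfl⟩ := hW
  refine ⟨{h | ∃ f ∈ S, ∃ g ∈ S', h = f * g}, ?_, ?_⟩
  · rintro _ ⟨f, hf, g, hg, rfl⟩
    obtain ⟨d, hd⟩ := hS f hf
    obtain ⟨e, he⟩ := hS' g hg
    exact ⟨d + e, hd.mul he⟩
  · ext x
    constructor
    · rintro (h | h) _ ⟨f, hf, g, hg, rfl⟩
      · rw [map_mul, h f hf, zero_mul]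
      · rw [map_mul, h g hg, mul_zero]
    · intro h
      by_contra hcon
      rw [Set.mem_union, not_or] at hcon
      have h1 : ∃ f ∈ S, eval x.rep f ≠ 0 := by
        by_contra! h'; exact hcon.1 h'
      have h2 : ∃ f ∈ S', eval x.rep f ≠ 0 := by
        by_contra! h'; exact hcon.2 h'
      obtain ⟨f, hf, hf0⟩ := h1
      obtain ⟨g, hg, hg0⟩ := h2
      have := h _ ⟨f, hf, g, hg, rfl⟩
      rw [map_mul] at this
      exact mul_ne_zero hf0 hg0 this

theorem irred_sUnion {V : Set (Pn N)} (hV : ProjIrred V) (s : Set (Set (Pn N))) (hs : s.Finite)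
    (hc : ∀ W ∈ s, ProjClosed W) (h : V ⊆ ⋃₀ s) : ∃ W ∈ s, V ⊆ W := by
  have main : ProjClosed (⋃₀ s) ∧ (V ⊆ ⋃₀ s → ∃ W ∈ s, V ⊆ W) := by
    clear h
    induction s, hs using Set.Finite.induction_on with
    | empty =>
      refine ⟨by simpa using closed_empty, fun h => ?_⟩
      obtain ⟨x, hx⟩ := hV.1
      simpa using h hx
    | @insert W s hW hs ih =>
      obtain ⟨h1, h2⟩ := ih fun W hW => hc W (Set.mem_insert_of_mem _ hW)
      have h3 := hc W (Set.mem_insert _ _)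
      rw [Set.sUnion_insert]
      refine ⟨closed_union h3 h1, fun h => ?_⟩
      rcases hV.2 _ _ h3 h1 h with h | h
      · exact ⟨W, Set.mem_insert _ _, h⟩
      · obtain ⟨W', hW', h'⟩ := h2 h
        exact ⟨W', Set.mem_insert_of_mem _ hW', h'⟩
  exact main.2 h

theorem cut (j : ℕ) (V : Set (Pn N)) (hV : ProjClosed V)
    (h : ∀ p : LTSeries {W : Set (Pn N) // ProjVariety W ∧ W ⊆ V}, p.length < j) :
    ∃ l : Fin j → VV →ₗ[KK] KK, ∀ y ∈ V, ∃ i, l i y.rep ≠ 0 := by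
  induction j generalizing V with
  | zero =>
    refine ⟨fun i => 0, fun y hy => ?_⟩
    exfalso
    obtain ⟨s, hs, hsv, rfl⟩ := decomp V hV
    obtain ⟨W, hW, hy⟩ := hy
    exact absurd (h (RelSeries.singleton _ ⟨W, hsv W hW, Set.subset_sUnion_of_mem hW⟩)) (by simp)
  | succ j ih =>
    obtain ⟨s, hs, hsv, hVs⟩ := decomp V hV
    haveI : Finite s := hs
    choose pt hpt using fun W : s => (hsv W.1 W.2).2.1
    haveI : Infinite KK := IsAlgClosed.instInfinite
    obtain ⟨l, hl⟩ := Module.exists_dual_forall_apply_ne_zero (K := KK) (fun W : s => (pt W).rep)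
      (fun W => (pt W).rep_nonzero)
    obtain ⟨g, hg, hgl⟩ := lin_mv l
    obtain ⟨m, hm⟩ := ih (V ∩ {x | eval x.rep g = 0}) (closed_inter hV (closed_hom hg)) (by
      intro p
      let q : LTSeries {W : Set (Pn N) // ProjVariety W ∧ W ⊆ V} :=
        p.map (fun W => ⟨W.1, W.2.1, W.2.2.trans Set.inter_subset_left⟩) (fun a b hab => hab)
      have hlast := p.last.2
      have hq : q.last.1 = p.last.1 := rfl
      obtain ⟨W, hW, hsub⟩ := irred_sUnion hlast.1.2 s hs (fun W hW => (hsv W hW).1)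
        (hVs ▸ hlast.2.trans Set.inter_subset_left)
      let W' : {W : Set (Pn N) // ProjVariety W ∧ W ⊆ V} :=
        ⟨W, hsv W hW, hVs ▸ Set.subset_sUnion_of_mem hW⟩
      have hlt : q.last < W' := by
        show q.last.1 ⊂ W
        rw [hq]
        refine ⟨hsub, fun hcon => ?_⟩
        have h1 := (hlast.2 (hcon (hpt ⟨W, hW⟩))).2
        have h2 : eval (pt ⟨W, hW⟩).rep g = 0 := h1
        rw [hgl] at h2
        exact hl ⟨W, hW⟩ h2
      have := h (RelSeries.snoc q W' hlt)
      have e : (RelSeries.snoc q W' hlt).length = p.length + 1 := rfl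
      omega)
    refine ⟨Fin.cons l m, fun y hy => ?_⟩
    by_cases hy0 : l y.rep = 0
    · obtain ⟨i, hi⟩ := hm y ⟨hy, by rw [Set.mem_setOf_eq, hgl, hy0]⟩
      exact ⟨i.succ, by simpa using hi⟩
    · exact ⟨0, by simpa using hy0⟩

theorem irred_of_irr {A : Set VV} (hA : Irr KK A) (hA1 : ∃ y : Pn N, y.rep ∈ A)
    (hAc : ∀ v ∈ A, v ≠ 0 → ∀ c : KK, c • v ∈ A) : ProjIrred {y : Pn N | y.rep ∈ A} := by
  refine ⟨hA1, ?_⟩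
  rintro _ _ ⟨S, hS, rfl⟩ ⟨S', hS', rfl⟩ h
  by_contra hcon
  rw [not_or, Set.not_subset, Set.not_subset] at hcon
  obtain ⟨⟨y1, hy1, h1⟩, ⟨y2, hy2, h2⟩⟩ := hcon
  have h1' : ∃ f ∈ S, eval y1.rep f ≠ 0 := by
    by_contra! h'; exact h1 h'
  have h2' : ∃ f ∈ S', eval y2.rep f ≠ 0 := by
    by_contra! h'; exact h2 h'
  obtain ⟨f, hf, hf0⟩ := h1'
  obtain ⟨g, hg, hg0⟩ := h2'
  obtain ⟨d, hd⟩ := hS f hf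
  obtain ⟨e, he⟩ := hS' g hg
  have hrep : ∀ y : Pn N, y.rep ∈ A → eval y.rep (f * g) = 0 := by
    intro y hy
    rw [map_mul]
    rcases h hy with h | h
    · rw [h f hf, zero_mul]
    · rw [h g hg, mul_zero]
  have hfg : ∀ v ∈ A, eval v f * eval v g = 0 := by
    intro v hv
    rw [← map_mul]
    by_cases hv0 : v = 0
    · have := hom_eval (hd.mul he) 0 y1.rep
      rw [zero_smul, hrep y1 hy1, mul_zero] at this
      rw [hv0, this]
    · obtain ⟨a, ha⟩ := Projectivization.exists_smul_eq_mk_rep KK v hv0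
      have h1 := hrep (Projectivization.mk KK v hv0) (by rw [← ha]; exact hAc v hv hv0 a)
      rw [← ha, Units.smul_def, hom_eval (hd.mul he)] at h1
      exact (mul_eq_zero.mp h1).resolve_left (pow_ne_zero _ a.ne_zero)
  rcases hA _ _ (PF.mv f LinearMap.id) (PF.mv g LinearMap.id) hfg with h | h
  · exact hf0 (h _ hy1)
  · exact hg0 (h _ hy2)

theorem irr_univ : Irr KK (Set.univ : Set VV) := by
  intro g h hg hh hgh
  by_contra hcon
  rw [not_or] at hcon
  push Not at hcon
  obtain ⟨⟨u, -, hu⟩, ⟨v, -, hv⟩⟩ := hcon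
  obtain ⟨w, hw⟩ := PF.nonvan hg hh hu hv
  exact hw (hgh w trivial)

end proj
end CL

namespace CL
set_option linter.all false
open MvPolynomial

section fin
variable {n : ℕ}

local notation "RR" => MvPolynomial (Fin (n + 1)) KK
local notation "VV" => (Fin (n + 1) → KK)

/-- The vectors over the cone of lines. -/
def coneA (T : Tri KK VV) (x : VV) : Set VV := {v | T x x v = 0 ∧ T x v v = 0 ∧ T v v v = 0}

theorem coneA_smul {T : Tri KK VV} {x v : VV} (hv : v ∈ coneA T x) (c : KK) : c • v ∈ coneA T x := by
  obtain ⟨h1, h2, h3⟩ := hv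
  refine ⟨?_, ?_, ?_⟩ <;> simp [h1, h2, h3]

theorem rep_mk (v : VV) (hv : v ≠ 0) : ∃ c : KK, c ≠ 0 ∧ (Projectivization.mk KK v hv : Pn n).rep = c • v := by
  obtain ⟨a, ha⟩ := Projectivization.exists_smul_eq_mk_rep KK v hv
  exact ⟨a, a.ne_zero, by rw [← ha, Units.smul_def]⟩

theorem plane_vanish {T : Tri KK VV} {F : RR} (hF : ∀ y, eval y F = T y y y) {L : Submodule KK VV}
    (hL : planeSet L ⊆ hyp F) (v : VV) (hv : v ∈ L) : T v v v = 0 := by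
  by_cases h0 : v = 0
  · simp [h0]
  · obtain ⟨c, hc, e⟩ := rep_mk v h0
    have h1 : Projectivization.mk KK v h0 ∈ hyp F := hL (by
      show _ ∈ L
      rw [e]; exact L.smul_mem _ hv)
    have h2 : eval (Projectivization.mk KK v h0).rep F = 0 := h1
    rw [hF, e] at h2
    simpa [hc] using h2

theorem plane_sub {T : Tri KK VV} (hT : T.Sym) {F : RR} (hF : ∀ y, eval y F = T y y y) {x v : VV}
    (hx : T x x x = 0) (hv : v ∈ coneA T x) : planeSet (Submodule.span KK {x, v}) ⊆ hyp F := by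
  intro y hy
  have hy' : y.rep ∈ Submodule.span KK {x, v} := hy
  obtain ⟨a, b, e⟩ := Submodule.mem_span_pair.mp hy'
  show eval y.rep F = 0
  obtain ⟨h1, h2, h3⟩ := hv
  rw [hF, ← e, tri_line hT]
  simp [hx, h1, h2, h3]

theorem cone_eq {T : Tri KK VV} (hT : T.Sym) {F : RR} (hF : ∀ y, eval y F = T y y y) (x : Pn n)
    (hx : T x.rep x.rep x.rep = 0) (hn : 7 ≤ n) (ξ : VV →ₗ[KK] KK) (hξ : ξ x.rep = 1) :
    coneOfLines (hyp F) x = {y | y.rep ∈ coneA T x.rep} := by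
  have fr : ∀ v, v ∉ Submodule.span KK {x.rep} → Module.finrank KK (Submodule.span KK {x.rep, v}) = 2 := by
    intro v hv
    have hli : LinearIndependent KK ![x.rep, v] := by
      rw [LinearIndependent.pair_iff' x.rep_nonzero]
      intro a ha
      exact hv (Submodule.mem_span_singleton.mpr ⟨a, ha⟩)
    have := finrank_span_eq_card hli
    rw [Matrix.range_cons, Matrix.range_cons, Matrix.range_empty, Set.union_empty, Set.singleton_union, Fintype.card_fin] at this
    exact this
  ext y
  constructor
  · rintro ⟨L, -, hL, hxL, hyL⟩
    have h := plane_vanish hF hL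
    have e1 := tri_line hT x.rep y.rep 1
    have e2 := tri_line hT x.rep y.rep (-1)
    rw [h _ (L.add_mem hxL (L.smul_mem _ hyL)), h _ hxL, h _ hyL] at e1 e2
    refine ⟨?_, ?_, h _ hyL⟩
    · linear_combination (-1/6) * e1 + (1/6) * e2
    · linear_combination (-1/6) * e1 - (1/6) * e2
  · intro hy
    by_cases hs : y.rep ∈ Submodule.span KK {x.rep}
    · obtain ⟨v, hv0, hv⟩ := PF.krull (K := KK) (U := VV) (k := 4) (by simp; omega)
        ![fun v => T x.rep x.rep v, fun v => T x.rep v v, fun v => T v v v, fun v => ξ v]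
        (by intro j
            fin_cases j
            exacts [PF.lin _, PF.quad _, PF.cub _, PF.lin _])
        (by intro j; fin_cases j <;> simp)
      have hvA : v ∈ coneA T x.rep := ⟨hv 0, hv 1, hv 2⟩
      have hξv : ξ v = 0 := hv 3
      refine ⟨Submodule.span KK {x.rep, v}, fr v ?_, plane_sub hT hF hx hvA,
        Submodule.subset_span (by simp), ?_⟩
      · intro h
        obtain ⟨a, rfl⟩ := Submodule.mem_span_singleton.mp h
        rw [map_smul, hξ, smul_eq_mul, mul_one] at hξv
        exact hv0 (by rw [hξv, zero_smul])
      · exact Submodule.span_mono (by simp) hs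
    · exact ⟨_, fr _ hs, plane_sub hT hF hx hy, Submodule.subset_span (by simp),
        Submodule.subset_span (by simp)⟩

theorem closed1 (φ : VV →ₗ[KK] KK) : ProjClosed {y : Pn n | φ y.rep = 0} := by
  obtain ⟨g, hg, e⟩ := lin_mv φ
  have := closed_hom hg
  simpa only [e] using this

theorem closed2 (φ : VV →ₗ[KK] VV →ₗ[KK] KK) : ProjClosed {y : Pn n | φ y.rep y.rep = 0} := by
  obtain ⟨g, hg, e⟩ := quad_mv φ
  have := closed_hom hg
  simpa only [e] using this

theorem closed3 (φ : Tri KK VV) : ProjClosed {y : Pn n | φ y.rep y.rep y.rep = 0} := by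
  obtain ⟨g, hg, e⟩ := cub_mv φ
  have := closed_hom hg
  simpa only [e] using this

theorem cone_var {T : Tri KK VV} {x : Pn n} {k : ℕ} (Φ : Frame T x.rep k) {D : Cub k KK} (hD : Φ.Data D)
    (hκ : D.κ ≠ 0) (hQ : Prime D.Q) (hf : Prime D.f) : ProjVariety {y : Pn n | y.rep ∈ coneA T x.rep} := by
  refine ⟨closed_inter (closed1 _) (closed_inter (closed2 (T x.rep)) (closed3 T)), ?_⟩
  exact irred_of_irr (Φ.irr_cone hD hκ hQ hf) ⟨x, Φ.hx, Φ.hx, Φ.hx⟩ fun v hv _ c => coneA_smul hv c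

theorem cone_ub {T : Tri KK VV} {x : Pn n} {k : ℕ} (Φ : Frame T x.rep k) {D : Cub k KK} (hD : Φ.Data D)
    (hκ : D.κ ≠ 0) (hQ : Prime D.Q)
    (p : LTSeries {W : Set (Pn n) // ProjVariety W ∧ W ⊆ {y : Pn n | y.rep ∈ coneA T x.rep}}) :
    p.length + 3 ≤ n := by
  let V2 : PV n := ⟨{y | y.rep ∈ {v | T x.rep x.rep v = 0 ∧ T x.rep v v = 0}},
    closed_inter (closed1 _) (closed2 (T x.rep)),
    irred_of_irr (Φ.irr_quad hD hQ) ⟨x, Φ.hx, Φ.hx⟩ fun v hv _ c => by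
      obtain ⟨h1, h2⟩ := hv
      constructor <;> simp [h1, h2]⟩
  let V1 : PV n := ⟨{y | y.rep ∈ {v | T x.rep x.rep v = 0}}, closed1 _,
    irred_of_irr Φ.irr_tan ⟨x, Φ.hx⟩ fun v hv _ c => by
      have h1 : T x.rep x.rep v = 0 := hv
      simp [h1]⟩
  let V0 : PV n := ⟨{y | y.rep ∈ (Set.univ : Set VV)}, ⟨∅, by simp, by ext; simp [projZeros]⟩,
    irred_of_irr irr_univ ⟨x, trivial⟩ fun v hv _ c => trivial⟩
  let q : LTSeries (PV n) := p.map (fun W => ⟨W.1, W.2.1⟩) (fun a b hab => hab)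
  have h2 : q.last < V2 := by
    have hp0 : Φ.p ≠ 0 := by
      intro h; apply hκ; rw [hD.κ, h]; simp
    refine lt_of_le_of_ne (b := V2) ?_ ?_
    · intro y hy
      have := p.last.2.2 hy
      exact ⟨this.1, this.2.1⟩
    · intro h
      have h' : (q.last).1 = V2.1 := congrArg _ h
      obtain ⟨c, hc, e⟩ := rep_mk Φ.p hp0
      have hm : Projectivization.mk KK Φ.p hp0 ∈ V2.1 := by
        show _ ∧ _
        rw [e]; constructor <;> simp [Φ.hxp, Φ.hpp]
      rw [← h'] at hm
      have h3 := (p.last.2.2 hm).2.2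
      rw [e] at h3
      simp [hc, ← hD.κ, hκ] at h3
  have h1 : V2 < V1 := by
    have hxs : T x.rep (Φ.p + Φ.p') (Φ.p + Φ.p') = 1 := by
      have := Φ.sym.s23 x.rep Φ.p' Φ.p
      simp only [map_add, LinearMap.add_apply, Φ.hpp, Φ.hqq, this]
      linear_combination Φ.hpp'
    have hp0 : Φ.p + Φ.p' ≠ 0 := by
      intro h; rw [h] at hxs; simp at hxs
    refine lt_of_le_of_ne (fun y hy => hy.1) ?_
    · intro h
      have h' : V2.1 = V1.1 := congrArg _ h
      obtain ⟨c, hc, e⟩ := rep_mk _ hp0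
      have hm : Projectivization.mk KK _ hp0 ∈ V1.1 := by
        show T x.rep x.rep _ = 0
        rw [e]; simp [Φ.hxp, Φ.hxp']
      rw [← h'] at hm
      have h3 : T x.rep _ _ = 0 := hm.2
      rw [e, map_smul, map_smul, LinearMap.smul_apply, hxs] at h3
      simp [hc] at h3
  have h0 : V1 < V0 := by
    have hp0 : Φ.w ≠ 0 := by
      intro h; have := Φ.hxw; rw [h] at this; simp at this
    refine lt_of_le_of_ne (fun y hy => trivial) ?_
    · intro h
      have h' : V1.1 = V0.1 := congrArg _ h
      obtain ⟨c, hc, e⟩ := rep_mk _ hp0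
      have hm : Projectivization.mk KK _ hp0 ∈ V0.1 := trivial
      rw [← h'] at hm
      have h3 : T x.rep x.rep _ = 0 := hm
      rw [e, map_smul, Φ.hxw] at h3
      simp [hc] at h3
  let q1 := RelSeries.snoc q V2 h2
  let q2 := RelSeries.snoc q1 V1 (by rw [RelSeries.last_snoc]; exact h1)
  let q3 := RelSeries.snoc q2 V0 (by rw [RelSeries.last_snoc]; exact h0)
  exact series_le q3

theorem cone_lb {T : Tri KK VV} {x : Pn n} (hn : 7 ≤ n) (hcl : ProjClosed {y : Pn n | y.rep ∈ coneA T x.rep}) :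
    ∃ p : LTSeries {W : Set (Pn n) // ProjVariety W ∧ W ⊆ {y : Pn n | y.rep ∈ coneA T x.rep}},
    n - 3 ≤ p.length := by
  by_contra! hcon
  obtain ⟨l, hl⟩ := cut (n - 3) _ hcl hcon
  obtain ⟨v, hv0, hv⟩ := PF.krull (K := KK) (U := VV) (k := n - 3 + 3) (by simp; omega)
    (Fin.append (fun i v => l i v) ![fun v => T x.rep x.rep v, fun v => T x.rep v v, fun v => T v v v])
    (by intro j
        refine Fin.addCases (fun i => ?_) (fun i => ?_) j
        · rw [Fin.append_left]; exact PF.lin _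
        · rw [Fin.append_right]
          fin_cases i
          exacts [PF.lin _, PF.quad _, PF.cub _])
    (by intro j
        refine Fin.addCases (fun i => ?_) (fun i => ?_) j
        · rw [Fin.append_left]; simp
        · rw [Fin.append_right]
          fin_cases i <;> simp)
  have hA : v ∈ coneA T x.rep := by
    have h0 := hv (Fin.natAdd _ 0)
    have h1 := hv (Fin.natAdd _ 1)
    have h2 := hv (Fin.natAdd _ 2)
    rw [Fin.append_right] at h0 h1 h2
    exact ⟨h0, h1, h2⟩
  obtain ⟨c, hc, e⟩ := rep_mk v hv0
  obtain ⟨i, hi⟩ := hl (Projectivization.mk KK v hv0) (by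
    show _ ∈ coneA T x.rep
    rw [e]; exact coneA_smul hA c)
  apply hi
  have h0 := hv (Fin.castAdd _ i)
  rw [Fin.append_left] at h0
  rw [e, map_smul, h0, smul_zero]

theorem cone_dim {T : Tri KK VV} {x : Pn n} (hn : 7 ≤ n) {k : ℕ} (Φ : Frame T x.rep k) {D : Cub k KK}
    (hD : Φ.Data D) (hκ : D.κ ≠ 0) (hQ : Prime D.Q) (hf : Prime D.f) :
    projDim {y : Pn n | y.rep ∈ coneA T x.rep} = (((n - 3 : ℕ) : ENat) : WithBot ENat) := by
  obtain ⟨p, hp⟩ := cone_lb hn (cone_var Φ hD hκ hQ hf).1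
  have hp' := cone_ub Φ hD hκ hQ p
  have e : p.length = n - 3 := by omega
  refine le_antisymm ?_ ?_
  · refine iSup_le fun q => ?_
    have := cone_ub Φ hD hκ hQ q
    have : q.length ≤ n - 3 := by omega
    exact_mod_cast this
  · rw [← e]
    exact Order.le_krullDim_iff.mpr ⟨p, rfl⟩

theorem rep_inj {y z : Pn n} (h : y.rep ∈ Submodule.span KK {z.rep}) : y = z := by
  obtain ⟨a, ha⟩ := Submodule.mem_span_singleton.mp h
  rw [← y.mk_rep, ← z.mk_rep, Projectivization.mk_eq_mk_iff']
  exact ⟨a, ha⟩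

theorem cone_deg {T : Tri KK VV} {x : Pn n} {k : ℕ} (Φ : Frame T x.rep k) {D : Cub k KK}
    (hD : Φ.Data D) (hκ : D.κ ≠ 0) (hQ : Prime D.Q) (hf : Prime D.f) :
    projDeg {y : Pn n | y.rep ∈ coneA T x.rep} = 6 := by
  have ub : ∀ m ∈ {k : ℕ | ∃ W : Submodule KK VV,
      ({y : Pn n | y.rep ∈ coneA T x.rep} ∩ planeSet W).Finite ∧
      ({y : Pn n | y.rep ∈ coneA T x.rep} ∩ planeSet W).ncard = k}, m ≤ 6 := by
    rintro m ⟨W, hfin, rfl⟩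
    classical
    have inj : Function.Injective (fun y : Pn n => y.rep) := fun y z h =>
      rep_inj (Submodule.mem_span_singleton.mpr ⟨1, by rw [one_smul]; exact h.symm⟩)
    have hcard : (hfin.toFinset.image fun y : Pn n => y.rep).card
      = ({y : Pn n | y.rep ∈ coneA T x.rep} ∩ planeSet W).ncard := by
      rw [Finset.card_image_of_injective _ inj, Set.ncard_eq_toFinset_card _ hfin]
    rw [← hcard]
    have hm : ∀ p ∈ (hfin.toFinset.image fun y : Pn n => y.rep), ∃ y : Pn n, y.rep ∈ coneA T x.rep ∧ y.rep ∈ W ∧ y.rep = p := by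
      intro p hp
      obtain ⟨y, hy, e⟩ := Finset.mem_image.mp hp
      have hy' := hfin.mem_toFinset.mp hy
      exact ⟨y, hy'.1, hy'.2, e⟩
    apply deg_le (B := T x.rep) (T := T) (fun a b => Φ.sym.s23 _ _ _) Φ.sym (W ⊓ LinearMap.ker (T x.rep x.rep))
    · intro p hp
      obtain ⟨y, -, -, rfl⟩ := hm p hp
      exact y.rep_nonzero
    · intro p hp
      obtain ⟨y, h1, h2, rfl⟩ := hm p hp
      exact ⟨h2, h1.1⟩
    · intro p hp p' hp' h
      obtain ⟨y, h1, h2, rfl⟩ := hm p hp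
      obtain ⟨z, h1, h2, rfl⟩ := hm p' hp'
      rw [rep_inj h]
    · intro p hp
      obtain ⟨y, h1, h2, rfl⟩ := hm p hp
      exact h1.2.1
    · intro p hp
      obtain ⟨y, h1, h2, rfl⟩ := hm p hp
      exact h1.2.2
    · intro u hu hu0 h1 h2
      obtain ⟨c, hc, e⟩ := rep_mk u hu0
      refine ⟨_, Finset.mem_image_of_mem _ ((hfin.mem_toFinset (a := Projectivization.mk KK u hu0)).mpr ⟨?_, ?_⟩), ?_⟩
      · show _ ∈ coneA T x.rep
        rw [e]; exact coneA_smul ⟨hu.2, h1, h2⟩ c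
      · show _ ∈ W
        rw [e]; exact W.smul_mem _ hu.1
      · show u ∈ Submodule.span KK {(Projectivization.mk KK u hu0).rep}
        rw [e]
        exact Submodule.mem_span_singleton.mpr ⟨c⁻¹, by rw [smul_smul, inv_mul_cancel₀ hc, one_smul]⟩
  have lb : 6 ∈ {k : ℕ | ∃ W : Submodule KK VV,
      ({y : Pn n | y.rep ∈ coneA T x.rep} ∩ planeSet W).Finite ∧
      ({y : Pn n | y.rep ∈ coneA T x.rep} ∩ planeSet W).ncard = k} := by
    obtain ⟨W, P, hP, hPm, hpair, hall⟩ := Φ.deg_eq hD hκ hQ hf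
    let f : P → Pn n := fun p => Projectivization.mk KK p.1 (hPm p.1 p.2).2.1
    have hf : Function.Injective f := by
      intro p p' h
      obtain ⟨a, ha⟩ := (Projectivization.mk_eq_mk_iff' KK _ _ _ _).mp h
      exact Subtype.ext (hpair p.1 p.2 p'.1 p'.2 (Submodule.mem_span_singleton.mpr ⟨a, ha⟩))
    have e : ({y : Pn n | y.rep ∈ coneA T x.rep} ∩ planeSet W) = Set.range f := by
      ext y
      constructor
      · rintro ⟨hy, hyW⟩
        obtain ⟨p, hp, hs⟩ := hall y.rep hyW y.rep_nonzero hy.1 hy.2.1 hy.2.2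
        obtain ⟨a, ha⟩ := Submodule.mem_span_singleton.mp hs
        refine ⟨⟨p, hp⟩, ?_⟩
        rw [← y.mk_rep]
        exact ((Projectivization.mk_eq_mk_iff' KK _ _ _ _).mpr ⟨a, ha⟩).symm
      · rintro ⟨⟨p, hp⟩, rfl⟩
        obtain ⟨h1, h2, h3⟩ := hPm p hp
        obtain ⟨c, hc, e⟩ := rep_mk p h2
        constructor
        · show (Projectivization.mk KK p h2).rep ∈ coneA T x.rep
          rw [e]; exact coneA_smul h3 c
        · show (Projectivization.mk KK p h2).rep ∈ W
          rw [e]; exact W.smul_mem _ h1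
    refine ⟨W, ?_, ?_⟩
    · rw [e]; exact Set.finite_range f
    · rw [e, ← Set.image_univ, Set.ncard_image_of_injective _ hf, Set.ncard_univ]
      simp [hP]
  exact le_antisymm (csSup_le ⟨6, lb⟩ ub) (le_csSup ⟨6, ub⟩ lb)

theorem det_mv (T : Tri KK VV) (a b : Fin n → VV) : ∃ g : RR, g.IsHomogeneous n ∧
    ∀ x, eval x g = (Matrix.of fun i j => T x (a i) (b j)).det := by
  have h : ∀ i j, ∃ g : RR, g.IsHomogeneous 1 ∧ ∀ x, eval x g = T x (a i) (b j) := by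
    intro i j
    exact lin_mv ((LinearMap.applyₗ (b j)).comp ((LinearMap.applyₗ (a i)).comp T))
  choose g hg e using h
  refine ⟨(Matrix.of g).det, ?_, ?_⟩
  · rw [Matrix.det_apply]
    refine IsHomogeneous.sum _ _ _ fun σ _ => ?_
    have h1 := IsHomogeneous.prod Finset.univ (fun i => g (σ i) i) (fun _ => 1) fun i _ => hg _ _
    simp only [Finset.sum_const, Finset.card_univ, Fintype.card_fin, smul_eq_mul, mul_one] at h1
    rcases Int.units_eq_one_or (Equiv.Perm.sign σ) with h | h <;> rw [h]
    · simpa using h1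
    · simpa using h1.neg
  · intro x
    rw [RingHom.map_det]
    congr 1
    ext i j
    simp [e]

theorem main (hn : 7 ≤ n) (F : RR) (hF : F.IsHomogeneous 3) (hns : NonsingularK F) :
    ∃ Wbad : Set (Pn n), ProjClosed Wbad ∧ ¬(hyp F ⊆ Wbad) ∧
      ∀ x ∈ hyp F \ Wbad,
        ProjVariety (coneOfLines (hyp F) x) ∧
        projDeg (coneOfLines (hyp F) x) = 6 ∧
        projDim (coneOfLines (hyp F) x) = (((n - 3 : ℕ) : ENat) : WithBot ENat) := by
  obtain ⟨T, hT, hFT, hd⟩ := exists_tri hF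
  have hns' := tri_nonsing hd hns
  choose g hg e using det_mv T
  refine ⟨projZeros {f | ∃ a b, f = g a b}, ⟨_, ?_, rfl⟩, ?_, ?_⟩
  · rintro f ⟨a, b, rfl⟩
    exact ⟨n, hg a b⟩
  · intro hsub
    obtain ⟨x, hx0, hx, a, b, hab⟩ := exists_generic (by omega) hT hns' hF hFT
    obtain ⟨c, hc, ec⟩ := rep_mk x hx0
    have h1 : Projectivization.mk KK x hx0 ∈ hyp F := by
      show eval _ F = 0
      rw [ec, hFT]; simp [hx]
    have h2 := hsub h1 (g a b) ⟨a, b, rfl⟩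
    rw [ec, hom_eval (hg a b), e] at h2
    exact mul_ne_zero (pow_ne_zero _ hc) hab h2
  · rintro x ⟨hxF, hxW⟩
    have hx : T x.rep x.rep x.rep = 0 := by rw [← hFT]; exact hxF
    have hr : RankAt T n x.rep := by
      by_contra hcon
      apply hxW
      rintro f ⟨a, b, rfl⟩
      rw [e]
      by_contra h
      exact hcon ⟨a, b, h⟩
    obtain ⟨Φ, D, hD, hκ, hQ, hf⟩ := exists_good T hT (k := n - 3) (by omega) (by simp; omega) hns' x.rep
      x.rep_nonzero hx (rank_ker hr)
    rw [cone_eq hT hFT x hx hn Φ.ξ Φ.ξx]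
    exact ⟨cone_var Φ hD hκ hQ hf, cone_deg Φ hD hκ hQ hf, cone_dim hn Φ hD hκ hQ hf⟩

end fin
end CL

/-- **Lemma 10.** Let X ⊂ Pⁿ be a non-singular cubic hypersurface with n ≥ 7.  Then
for generic x ∈ X (all x in the complement in X of some proper closed subset) the
cone C¹ₓ of lines of X through x is geometrically integral, of degree 6 and of
dimension n - 3. -/
theorem statement14 (n : ℕ) (hn : 7 ≤ n)
    (F : MvPolynomial (Fin (n + 1)) KK) (hF : F.IsHomogeneous 3)
    (hns : NonsingularK F) :
    ∃ Wbad : Set (Pn n), ProjClosed Wbad ∧ ¬(hyp F ⊆ Wbad) ∧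
      ∀ x ∈ hyp F \ Wbad,
        ProjVariety (coneOfLines (hyp F) x) ∧
        projDeg (coneOfLines (hyp F) x) = 6 ∧
        projDim (coneOfLines (hyp F) x) = (((n - 3 : ℕ) : ENat) : WithBot ENat) := by
  exact CL.main hn F hF hns

end
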